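/- Let Γ̄ be a countable subgroup of Isom X × Isom X* with finite exponential growth relative to (X × X*, d̄), and π a probability measure on Γ̄ with finite first moment and non-elementary marginals μ and μ*. Then for ν_{μ*}-almost every η ∈ ∂X* and ν_π^η-almost every ξ̄ ∈ ∂X × ∂X*, liminf_{r→0} log ν_π^η(B̄(ξ̄,r))/log r ≥ (h(π) − h(∂X*,μ*))/l(X,μ). -/

import Mathlib

open MeasureTheory Filter Topology Metric Set
open scoped ENNReal Classical

noncomputable section

namespace HMDim

/-! ### Gromov products and hyperbolicity -/

/-- The Gromov product `(x|y)_o = (d(x,o)+d(o,y)-d(x,y))/2`. -/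
def gp {X : Type*} [MetricSpace X] (o x y : X) : ℝ :=
  (dist x o + dist o y - dist x y) / 2

/-- `X` is `δ`-hyperbolic. -/
def IsHyperbolicWith (X : Type*) [MetricSpace X] (δ : ℝ) : Prop :=
  ∀ x y z w : X, min (gp w x z) (gp w z y) - δ ≤ gp w x y

/-- `X` is hyperbolic: `δ`-hyperbolic for some `δ ≥ 0`. -/
def IsHyperbolic (X : Type*) [MetricSpace X] : Prop :=
  ∃ δ : ℝ, 0 ≤ δ ∧ IsHyperbolicWith X δ

/-- `X` is `C`-roughly geodesic for some `C ≥ 0`: any two points are joined by a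
`C`-rough geodesic. -/
def IsRoughGeodesicSpace (X : Type*) [MetricSpace X] : Prop :=
  ∃ C : ℝ, 0 ≤ C ∧ ∀ x y : X, ∃ (b : ℝ) (γ : ℝ → X), 0 ≤ b ∧ γ 0 = x ∧ γ b = y ∧
    ∀ s ∈ Set.Icc (0:ℝ) b, ∀ t ∈ Set.Icc (0:ℝ) b, abs (dist (γ s) (γ t) - |s - t|) ≤ C

/-- Bounded growth at some scale: there are `0 < r < R` and `N` such that every ball of
radius `R` is covered by at most `N` balls of radius `r`. -/
def HasBoundedGrowthAtSomeScale (X : Type*) [MetricSpace X] : Prop :=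
  ∃ (r R : ℝ) (N : ℕ), 0 < r ∧ r < R ∧
    ∀ x : X, ∃ s : Finset X, s.card ≤ N ∧ Metric.ball x R ⊆ ⋃ y ∈ s, Metric.ball y r

/-! ### The Gromov boundary -/

/-- A sequence is divergent if it is Cauchy for the Gromov-product quasi-metric, i.e.
`(u n | u m)_o → ∞`. -/
def IsDivergent {X : Type*} [MetricSpace X] (o : X) (u : ℕ → X) : Prop :=
  Tendsto (fun pr : ℕ × ℕ => gp o (u pr.1) (u pr.2)) atTop atTop

/-- The type of divergent sequences. -/
def DivSeq (X : Type*) [MetricSpace X] (o : X) : Type _ := {u : ℕ → X // IsDivergent o u}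

/-- Two divergent sequences are equivalent when `(u n | v m)_o → ∞`. -/
def bndRel {X : Type*} [MetricSpace X] (o : X) (u v : DivSeq X o) : Prop :=
  Tendsto (fun pr : ℕ × ℕ => gp o (u.1 pr.1) (v.1 pr.2)) atTop atTop

/-- The Gromov boundary: equivalence classes of divergent sequences. -/
def Boundary (X : Type*) [MetricSpace X] (o : X) : Type _ := Quot (bndRel o)

/-- The boundary point of a divergent sequence. -/
def mkB {X : Type*} [MetricSpace X] (o : X) (u : DivSeq X o) : Boundary X o :=
  Quot.mk _ u

/-- The extended Gromov product of two boundary points: the infimum over pairs of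
representatives of the liminf of Gromov products. -/
def gpB {X : Type*} [MetricSpace X] (o : X) (ξ η : Boundary X o) : ℝ :=
  sInf {t : ℝ | ∃ u v : DivSeq X o, mkB o u = ξ ∧ mkB o v = η ∧
    t = Filter.liminf (fun pr : ℕ × ℕ => gp o (u.1 pr.1) (v.1 pr.2)) atTop}

/-- The quasi-metric `q(ξ,η) = exp(-(ξ|η)_o)` on the boundary (`0` on the diagonal). -/
def qB {X : Type*} [MetricSpace X] (o : X) (ξ η : Boundary X o) : ℝ :=
  if ξ = η then 0 else Real.exp (-(gpB o ξ η))

/-- The extended Gromov product of an interior point with a boundary point. -/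
def gpXB {X : Type*} [MetricSpace X] (o : X) (x : X) (ξ : Boundary X o) : ℝ :=
  sInf {t : ℝ | ∃ u : DivSeq X o, mkB o u = ξ ∧
    t = Filter.liminf (fun m : ℕ => gp o x (u.1 m)) atTop}

/-- Quasi-metric between an interior point and a boundary point. -/
def qXB {X : Type*} [MetricSpace X] (o : X) (x : X) (ξ : Boundary X o) : ℝ :=
  Real.exp (-(gpXB o x ξ))

/-- The open ball of a quasi-metric. -/
def qball {A : Type*} (q : A → A → ℝ) (ξ : A) (r : ℝ) : Set A := {η | q ξ η < r}

/-- The max quasi-metric `q̄` on the product of two boundaries. -/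
def qbb {X Xs : Type*} [MetricSpace X] [MetricSpace Xs] (o : X) (os : Xs)
    (ξ η : Boundary X o × Boundary Xs os) : ℝ :=
  max (qB o ξ.1 η.1) (qB os ξ.2 η.2)

/-- Boundaries are measurable spaces, with the σ-algebra generated by quasi-metric balls. -/
instance (X : Type*) [MetricSpace X] (o : X) : MeasurableSpace (Boundary X o) :=
  MeasurableSpace.generateFrom {s | ∃ ξ r, s = qball (qB o) ξ r}

/-! ### The boundary action of isometries -/

lemma gp_isometry_le {X : Type*} [MetricSpace X] (o : X) (g : X ≃ᵢ X) (x y : X) :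
    gp o x y - dist o (g o) ≤ gp o (g x) (g y) := by
  have e1 : dist (g x) (g o) = dist x o := g.dist_eq x o
  have e2 : dist (g o) (g y) = dist o y := g.dist_eq o y
  have e3 : dist (g x) (g y) = dist x y := g.dist_eq x y
  have e4 : dist (g o) o = dist o (g o) := dist_comm _ _
  have t1 : dist (g x) (g o) ≤ dist (g x) o + dist o (g o) := dist_triangle _ _ _
  have t2 : dist (g o) (g y) ≤ dist (g o) o + dist o (g y) := dist_triangle _ _ _
  simp only [gp]
  linarith [t1, t2, e1, e2, e3, e4]

lemma isDivergent_comp {X : Type*} [MetricSpace X] (o : X) (g : X ≃ᵢ X) {u : ℕ → X}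
    (h : IsDivergent o u) : IsDivergent o fun n => g (u n) := by
  have h' := tendsto_atTop_add_const_right atTop (-(dist o (g o)))
    (h : Tendsto (fun pr : ℕ × ℕ => gp o (u pr.1) (u pr.2)) atTop atTop)
  refine tendsto_atTop_mono (fun pr => ?_) h'
  have := gp_isometry_le o g (u pr.1) (u pr.2)
  simpa [sub_eq_add_neg] using this

lemma bndRel_comp {X : Type*} [MetricSpace X] (o : X) (g : X ≃ᵢ X) {u v : DivSeq X o}
    (h : bndRel o u v) :
    bndRel o ⟨fun n => g (u.1 n), isDivergent_comp o g u.2⟩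
      ⟨fun n => g (v.1 n), isDivergent_comp o g v.2⟩ := by
  have h' := tendsto_atTop_add_const_right atTop (-(dist o (g o)))
    (h : Tendsto (fun pr : ℕ × ℕ => gp o (u.1 pr.1) (v.1 pr.2)) atTop atTop)
  refine tendsto_atTop_mono (fun pr => ?_) h'
  have := gp_isometry_le o g (u.1 pr.1) (v.1 pr.2)
  simpa [sub_eq_add_neg] using this

/-- The induced action of an isometry on the Gromov boundary. -/
def bAct {X : Type*} [MetricSpace X] (o : X) (g : X ≃ᵢ X) :
    Boundary X o → Boundary X o :=
  Quot.map (fun u : DivSeq X o =>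
      (⟨fun n => g (u.1 n), isDivergent_comp o g u.2⟩ : DivSeq X o))
    (fun _ _ h => bndRel_comp o g h)

/-! ### Random walks on countable groups -/

/-- Convolution of two measures (as `ℝ≥0∞`-valued functions) on a group. -/
def conv {G : Type*} [Group G] (p q : G → ℝ≥0∞) : G → ℝ≥0∞ :=
  fun x => ∑' y : G, p y * q (y⁻¹ * x)

/-- The `n`-fold convolution power `π_n` of `p`. -/
def piN {G : Type*} [Group G] (p : G → ℝ≥0∞) : ℕ → G → ℝ≥0∞
  | 0 => fun x => if x = 1 then 1 else 0
  | n + 1 => conv (piN p n) p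

/-- The Shannon entropy `H(π_n)` of the `n`-th convolution power. -/
def entropySeq {G : Type*} [Group G] (p : G → ℝ≥0∞) (n : ℕ) : ℝ :=
  ∑' x : G, Real.negMulLog ((piN p n x).toReal)

/-- The first moment of `π_n` with respect to a displacement function `f`. -/
def momentSeq {G : Type*} [Group G] (p : G → ℝ≥0∞) (f : G → ℝ) (n : ℕ) : ℝ :=
  ∑' x : G, (piN p n x).toReal * f x

/-- `h` is the asymptotic entropy of the `p`-random walk:
`h = lim (1/n) H(π_n)`. -/
def HasEntropy {G : Type*} [Group G] (p : G → ℝ≥0∞) (h : ℝ) : Prop :=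
  Tendsto (fun n : ℕ => entropySeq p n / n) atTop (nhds h)

/-- `l` is the drift (rate of escape) of the `p`-random walk with respect to the
displacement `f`: `l = lim (1/n) Σ_x f(x) π_n(x)`. -/
def HasDrift {G : Type*} [Group G] (p : G → ℝ≥0∞) (f : G → ℝ) (l : ℝ) : Prop :=
  Tendsto (fun n : ℕ => momentSeq p f n / n) atTop (nhds l)

/-- `p` is a probability distribution. -/
def IsProb {G : Type*} (p : G → ℝ≥0∞) : Prop := ∑' x : G, p x = 1

/-- Finite first moment with respect to a displacement function `f`. -/
def FiniteFirstMoment {G : Type*} (p : G → ℝ≥0∞) (f : G → ℝ) : Prop :=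
  ∑' x : G, p x * ENNReal.ofReal (f x) ≠ ∞

/-- The pushforward of a distribution `p` by a map `f` (e.g. a marginal). -/
def marginalStar {G A : Type*} (p : G → ℝ≥0∞) (f : G → A) : A → ℝ≥0∞ :=
  fun a => ∑' x : G, if f x = a then p x else 0

/-- A subgroup is non-elementary (in the relevant sense) if it contains a free
subgroup of rank 2. -/
def IsNonElementarySubgroup {G : Type*} [Group G] (H : Subgroup G) : Prop :=
  ∃ φ : FreeGroup (Fin 2) →* G, Function.Injective φ ∧ φ.range ≤ H

/-- A measure `p` on a group is non-elementary if the subgroup generated by its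
support contains a free subgroup of rank 2. -/
def IsNonElemMeasure {G : Type*} [Group G] (p : G → ℝ≥0∞) : Prop :=
  IsNonElementarySubgroup (Subgroup.closure {x : G | p x ≠ 0})

/-- A group containing a free subgroup of rank 2 (a non-elementary group). -/
def HasFreeSubgroup (G : Type*) [Group G] : Prop :=
  ∃ φ : FreeGroup (Fin 2) →* G, Function.Injective φ

/-! ### Path space -/

/-- The position `w_n = x_1 ⋯ x_n` of the random walk with increments `ω`. -/
def walk {G : Type*} [Group G] (ω : ℕ → G) (n : ℕ) : G := ((List.range n).map ω).prod

/-- The cylinder set `[w̄_0, …, w̄_n]` of trajectories whose positions agree with those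
of `ω` up to time `n`. -/
def cyl {G : Type*} [Group G] (ω : ℕ → G) (n : ℕ) : Set (ℕ → G) :=
  {ω' | ∀ i ≤ n, walk ω' i = walk ω i}

/-- `P` is the distribution of the increments of the `p`-random walk: the product
measure `p^{⊗ℕ}` on the path space. -/
def IsRWMeasure {G : Type*} [Group G] [MeasurableSpace G] (p : G → ℝ≥0∞)
    (P : Measure (ℕ → G)) : Prop :=
  IsProbabilityMeasure P ∧
    ∀ (n : ℕ) (g : ℕ → G), P {ω | ∀ i < n, ω i = g i} = ∏ i ∈ Finset.range n, p (g i)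

/-- `ν` is the harmonic measure on the boundary of `X` for the random walk with path
measure `P` and orbit map `z`: the image of `P` under the a.s.-defined boundary map. -/
def IsHarmonic {Ω X : Type*} [MeasurableSpace Ω] [MetricSpace X] (o : X)
    (P : Measure Ω) (z : Ω → ℕ → X) (ν : Measure (Boundary X o)) : Prop :=
  ∃ bnd : Ω → Boundary X o, Measurable bnd ∧ ν = P.map bnd ∧
    ∀ᵐ ω ∂P, ∃ h : IsDivergent o (z ω), bnd ω = mkB o ⟨z ω, h⟩

/-- `ν` is the harmonic measure on the product of the boundaries of `X` and `Xs` for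
the random walk with path measure `P` and orbit maps `z`, `zs`. -/
def IsJointHarmonic {Ω X Xs : Type*} [MeasurableSpace Ω] [MetricSpace X] [MetricSpace Xs]
    (o : X) (os : Xs) (P : Measure Ω) (z : Ω → ℕ → X) (zs : Ω → ℕ → Xs)
    (ν : Measure (Boundary X o × Boundary Xs os)) : Prop :=
  ∃ bnd : Ω → Boundary X o × Boundary Xs os, Measurable bnd ∧ ν = P.map bnd ∧
    ∀ᵐ ω ∂P, ∃ (h1 : IsDivergent o (z ω)) (h2 : IsDivergent os (zs ω)),
      bnd ω = (mkB o ⟨z ω, h1⟩, mkB os ⟨zs ω, h2⟩)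

/-- `cond` is a disintegration (system of conditional measures) of `P` with respect to
the map `f`, over the pushforward `νB = f_* P`. -/
def IsDisintegration {A B : Type*} [MeasurableSpace A] [MeasurableSpace B]
    (P : Measure A) (f : A → B) (νB : Measure B) (cond : B → Measure A) : Prop :=
  νB = P.map f ∧ (∀ᵐ b ∂νB, IsProbabilityMeasure (cond b)) ∧
    (∀ᵐ b ∂νB, cond b (f ⁻¹' {b}) = 1) ∧
    ∀ s : Set A, MeasurableSet s → P s = ∫⁻ b, cond b s ∂νB

/-! ### Hausdorff dimension for quasi-metrics -/

/-- Diameter of a set for a quasi-metric. -/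
def qdiam {A : Type*} (q : A → A → ℝ) (E : Set A) : ℝ≥0∞ :=
  ⨆ x ∈ E, ⨆ y ∈ E, ENNReal.ofReal (q x y)

/-- Hausdorff pre-measure (content) at scale `Δ`. -/
def qHContent {A : Type*} (q : A → A → ℝ) (α Δ : ℝ) (E : Set A) : ℝ≥0∞ :=
  ⨅ (c : ℕ → Set A) (_ : E ⊆ ⋃ i, c i) (_ : ∀ i, qdiam q (c i) ≤ ENNReal.ofReal Δ),
    ∑' i, qdiam q (c i) ^ α

/-- The `α`-dimensional Hausdorff measure of a set for a quasi-metric. -/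
def qHMeasure {A : Type*} (q : A → A → ℝ) (α : ℝ) (E : Set A) : ℝ≥0∞ :=
  ⨆ (Δ : ℝ) (_ : 0 < Δ), qHContent q α Δ E

/-- The Hausdorff dimension of a set for a quasi-metric. -/
def qdimSet {A : Type*} (q : A → A → ℝ) (E : Set A) : ℝ :=
  sSup {α : ℝ | 0 ≤ α ∧ 0 < qHMeasure q α E}

/-- The upper Hausdorff dimension of a measure. -/
def qdimUpper {A : Type*} [MeasurableSpace A] (q : A → A → ℝ) (ν : Measure A) : ℝ :=
  sInf {d : ℝ | ∃ E : Set A, MeasurableSet E ∧ ν Eᶜ = 0 ∧ d = qdimSet q E}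

/-- The lower Hausdorff dimension of a measure. -/
def qdimLower {A : Type*} [MeasurableSpace A] (q : A → A → ℝ) (ν : Measure A) : ℝ :=
  sInf {d : ℝ | ∃ E : Set A, MeasurableSet E ∧ 0 < ν E ∧ d = qdimSet q E}

/-- The Hausdorff dimension of `ν` exists and equals `D`. -/
def HasDim {A : Type*} [MeasurableSpace A] (q : A → A → ℝ) (ν : Measure A) (D : ℝ) : Prop :=
  qdimUpper q ν = D ∧ qdimLower q ν = D

/-- `ν` is exact dimensional with dimension `D` for the quasi-metric `q`:
`lim_{r→0} log ν(B(ξ,r))/log r = D` for `ν`-a.e. `ξ`. -/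
def ExactDim {A : Type*} [MeasurableSpace A] (q : A → A → ℝ) (ν : Measure A) (D : ℝ) : Prop :=
  ∀ᵐ ξ ∂ν, Tendsto (fun r : ℝ => Real.log (ν (qball q ξ r)).toReal / Real.log r)
    (nhdsWithin 0 (Set.Ioi 0)) (nhds D)

/-! ### Differential entropy -/

/-- The differential entropy
`h(∂X*, μ*) = Σ_g μ*(g) ∫ log (d gν/dν) d(gν)` of a measure on the isometry group with
respect to a boundary measure. -/
def diffEntropy {Xs : Type*} [MetricSpace Xs] (os : Xs) (pstar : (Xs ≃ᵢ Xs) → ℝ≥0∞)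
    (νs : Measure (Boundary Xs os)) : ℝ :=
  ∑' g : (Xs ≃ᵢ Xs), (pstar g).toReal *
    ∫ η, Real.log ((Measure.rnDeriv (νs.map (bAct os g)) νs η).toReal)
      ∂(νs.map (bAct os g))

/-! ### Word metrics and hyperbolic groups -/

/-- The word length of `g` with respect to a (symmetrized) generating set `S`. -/
def wordLength {G : Type*} [Group G] (S : Set G) (g : G) : ℕ :=
  sInf {n : ℕ | ∃ f : Fin n → G, (∀ i, f i ∈ S ∨ (f i)⁻¹ ∈ S) ∧ g = (List.ofFn f).prod}

/-- The metric of `G` is quasi-isometric to a word metric of a finite generating set. -/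
def IsQIToWordMetric (G : Type*) [Group G] [MetricSpace G] : Prop :=
  ∃ S : Finset G, Subgroup.closure (S : Set G) = ⊤ ∧
    ∃ Λ c : ℝ, 1 ≤ Λ ∧ 0 ≤ c ∧ ∀ g : G,
      (wordLength (S : Set G) g : ℝ) / Λ - c ≤ dist (1 : G) g ∧
      dist (1 : G) g ≤ Λ * (wordLength (S : Set G) g) + c

/-- The metric of `G` is left invariant. -/
def LeftInvariantMetric (G : Type*) [Group G] [MetricSpace G] : Prop :=
  ∀ g x y : G, dist (g * x) (g * y) = dist x y

/-- `G`, with its metric, is a hyperbolic group: the metric is left invariant,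
hyperbolic and quasi-isometric to a word metric. -/
def IsHypGroupMetric (G : Type*) [Group G] [MetricSpace G] : Prop :=
  LeftInvariantMetric G ∧ IsHyperbolic G ∧ IsQIToWordMetric G

/-! ### Groups of isometries of a product -/

/-- First component of an element of a subgroup of `Isom X × Isom X*`. -/
def proj1 {X Xs : Type*} [MetricSpace X] [MetricSpace Xs]
    {Γb : Subgroup ((X ≃ᵢ X) × (Xs ≃ᵢ Xs))} (γ : Γb) : X ≃ᵢ X :=
  (γ : (X ≃ᵢ X) × (Xs ≃ᵢ Xs)).1

/-- Second component of an element of a subgroup of `Isom X × Isom X*`. -/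
def proj2 {X Xs : Type*} [MetricSpace X] [MetricSpace Xs]
    {Γb : Subgroup ((X ≃ᵢ X) × (Xs ≃ᵢ Xs))} (γ : Γb) : Xs ≃ᵢ Xs :=
  (γ : (X ≃ᵢ X) × (Xs ≃ᵢ Xs)).2

/-- Displacement `d̄(ō, γ·ō)` of the base point `ō = (o,o*)` (the metric of the product
is the max metric). -/
def disp {X Xs : Type*} [MetricSpace X] [MetricSpace Xs]
    {Γb : Subgroup ((X ≃ᵢ X) × (Xs ≃ᵢ Xs))} (o : X) (os : Xs) (γ : Γb) : ℝ :=
  dist (o, os) (proj1 γ o, proj2 γ os)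

/-- Finite exponential growth relative to a displacement function `f`:
`#{x : f(x) < r} ≤ c e^{c r}`. -/
def FinExpGrowth {G : Type*} (f : G → ℝ) : Prop :=
  ∃ c : ℝ, 0 < c ∧ ∀ r : ℝ, 0 < r →
    {x : G | f x < r}.Finite ∧ ({x : G | f x < r}.ncard : ℝ) ≤ c * Real.exp (c * r)

/-! ### The events of Lemmas `A` and `E_n(η)` -/

/-- The event `A_{ε,n} = ∩_{t ≥ n} {z̄_∞ exists and q̄(z̄_t, z̄_∞) ≤ e^{-(l*-ε)n}}`. -/
def Aev {X Xs : Type*} [MetricSpace X] [MetricSpace Xs]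
    (Γb : Subgroup ((X ≃ᵢ X) × (Xs ≃ᵢ Xs))) (o : X) (os : Xs) (ε lst : ℝ) (n : ℕ) :
    Set (ℕ → Γb) :=
  {ω | ∃ (h1 : IsDivergent o (fun t => proj1 (walk ω t) o))
        (h2 : IsDivergent os (fun t => proj2 (walk ω t) os)),
      ∀ t, n ≤ t →
        max (qXB o (proj1 (walk ω t) o) (mkB o ⟨_, h1⟩))
            (qXB os (proj2 (walk ω t) os) (mkB os ⟨_, h2⟩))
          ≤ Real.exp (-((lst - ε) * n))}

/-- The event
`E_{ε,n}(η) = {P^η([w̄_0,…,w̄_n] ∩ A_{ε,n}) ≤ e^{n(h*+ε)} P([w̄_0,…,w̄_n] ∩ A_{ε,n})}`. -/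
def Eev {X Xs : Type*} [MetricSpace X] [MetricSpace Xs]
    (Γb : Subgroup ((X ≃ᵢ X) × (Xs ≃ᵢ Xs))) [MeasurableSpace Γb] (o : X) (os : Xs)
    (P : Measure (ℕ → Γb)) (condP : Boundary Xs os → Measure (ℕ → Γb))
    (hst ε lst : ℝ) (η : Boundary Xs os) (n : ℕ) : Set (ℕ → Γb) :=
  {ω | condP η (cyl ω n ∩ Aev Γb o os ε lst n) ≤
        ENNReal.ofReal (Real.exp (n * (hst + ε))) * P (cyl ω n ∩ Aev Γb o os ε lst n)}

/-! ### Special measures -/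

/-- The measure `π^ρ = ρ μ×μ + (1-ρ) μ_diag` on `Γ × Γ`. -/
def pRho {Γ : Type*} (p : Γ → ℝ≥0∞) (ρ : ℝ) : Γ × Γ → ℝ≥0∞ :=
  fun g => ENNReal.ofReal ρ * (p g.1 * p g.2) +
    ENNReal.ofReal (1 - ρ) * (if g.1 = g.2 then p g.1 else 0)

/-- The uniform distribution on the symmetrized free basis of `F_{m+1}`. -/
def symFreeBasisUniform (m : ℕ) : FreeGroup (Fin (m + 1)) → ℝ≥0∞ :=
  fun g => if ∃ i : Fin (m + 1), g = FreeGroup.of i ∨ g = (FreeGroup.of i)⁻¹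
    then ENNReal.ofReal (1 / (2 * (m + 1))) else 0

/-- The homomorphism `F_{m+1} → F_m` sending `x_i ↦ y_i` for `i ≤ m` and `x_{m+1} ↦ 1`. -/
def projHom (m : ℕ) : FreeGroup (Fin (m + 1)) →* FreeGroup (Fin m) :=
  FreeGroup.lift (fun i => if h : (i : ℕ) < m then FreeGroup.of (⟨i, h⟩ : Fin m) else 1)

/-! ### Geometry -/

section Geometry
variable {X : Type*} [MetricSpace X]

lemma gp_nonneg (o x y : X) : 0 ≤ gp o x y := by
  have := dist_triangle x o y
  simp only [gp]; linarith

lemma gp_comm (o x y : X) : gp o x y = gp o y x := by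
  simp only [gp, dist_comm x y, dist_comm x o, dist_comm o y]; ring

lemma gp_self (o x : X) : gp o x x = dist o x := by
  simp only [gp, dist_self, dist_comm x o]; ring

lemma gp_ge (o x y : X) : dist o x - dist x y ≤ gp o x y := by
  have := dist_triangle o y x
  have h2 := dist_triangle o x y
  have h3 := dist_comm y x
  simp only [gp, dist_comm x o]; linarith

lemma dist_eq_gp (o x y : X) : dist x y = dist o x + dist o y - 2 * gp o x y := by
  simp only [gp, dist_comm x o]; ring

lemma gp_chain {δ : ℝ} (hδ0 : 0 ≤ δ) (hδ : IsHyperbolicWith X δ) :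
    ∃ κ : ℝ, 0 < κ ∧ ∀ (o : X) (z : ℕ → X) (n m : ℕ), n ≤ m → z n ≠ z m →
      Real.exp (-κ * gp o (z n) (z m)) ≤
        2 * ∑ t ∈ Finset.Ico n m, Real.exp (-κ * gp o (z t) (z (t+1))) := by
  have hlog2 : 0 < Real.log 2 := Real.log_pos (by norm_num)
  set κ : ℝ := Real.log 2 / (2 * δ + 1) with hκ
  have hκ0 : 0 < κ := by positivity
  refine ⟨κ, hκ0, fun o z n m hnm hne => ?_⟩
  have hs : Real.exp (κ * δ) * Real.exp (κ * δ) ≤ 2 := by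
    rw [← Real.exp_add]
    have : κ * δ + κ * δ ≤ Real.log 2 := by
      rw [hκ, ← mul_add, div_mul_eq_mul_div, div_le_iff₀ (by positivity)]
      nlinarith
    calc _ ≤ Real.exp (Real.log 2) := Real.exp_le_exp.2 this
      _ = 2 := Real.exp_log (by norm_num)
  have hs1 : 1 ≤ Real.exp (κ * δ) := Real.one_le_exp (by positivity)
  let d : X → X → NNReal := fun x y => if x = y then 0 else Real.toNNReal (Real.exp (-κ * gp o x y))
  have dval : ∀ x y, (d x y : ℝ) = if x = y then 0 else Real.exp (-κ * gp o x y) := by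
    intro x y
    simp only [d]
    split_ifs
    · simp
    · rw [Real.coe_toNNReal _ (Real.exp_pos _).le]
  have dself : ∀ x, d x x = 0 := by intro x; simp [d]
  have dcomm : ∀ x y, d x y = d y x := by
    intro x y; simp only [d, gp_comm o x y, eq_comm (a := x)]
  have two : ∀ x y w, (d x w : ℝ) ≤ Real.exp (κ * δ) * max (d x y : ℝ) (d y w) := by
    intro x y w
    by_cases hxw : x = w
    · subst hxw; rw [dself]; push_cast
      have := (d x y).2
      have : (0:ℝ) ≤ max (d x y : ℝ) (d y x) := le_max_of_le_left (d x y).2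
      positivity
    by_cases hxy : x = y
    · subst hxy
      have h1 : (d x w : ℝ) ≤ max (d x x : ℝ) (d x w) := le_max_right _ _
      have h0 : (0:ℝ) ≤ d x w := (d x w).2
      nlinarith
    by_cases hyw : y = w
    · subst hyw
      have h1 : (d x y : ℝ) ≤ max (d x y : ℝ) (d y y) := le_max_left _ _
      have h0 : (0:ℝ) ≤ d x y := (d x y).2
      nlinarith
    rw [dval, dval, dval, if_neg hxw, if_neg hxy, if_neg hyw]
    have h := hδ x w y o
    rcases min_choice (gp o x y) (gp o y w) with hm | hm
    · rw [hm] at h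
      calc Real.exp (-κ * gp o x w) ≤ Real.exp (κ * δ + -κ * gp o x y) := by
            apply Real.exp_le_exp.2; nlinarith
        _ = Real.exp (κ * δ) * Real.exp (-κ * gp o x y) := Real.exp_add _ _
        _ ≤ _ := by gcongr; exact le_max_left _ _
    · rw [hm] at h
      calc Real.exp (-κ * gp o x w) ≤ Real.exp (κ * δ + -κ * gp o y w) := by
            apply Real.exp_le_exp.2; nlinarith
        _ = Real.exp (κ * δ) * Real.exp (-κ * gp o y w) := Real.exp_add _ _
        _ ≤ _ := by gcongr; exact le_max_right _ _
  have hd : ∀ x₁ x₂ x₃ x₄, d x₁ x₄ ≤ 2 * max (d x₁ x₂) (max (d x₂ x₃) (d x₃ x₄)) := by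
    intro a b c e
    rw [← NNReal.coe_le_coe]
    push_cast
    have h1 := two a b e
    have h2 := two b c e
    set M : ℝ := max (d a b : ℝ) (max (d b c : ℝ) (d c e)) with hM
    have hM0 : 0 ≤ M := le_max_of_le_left (d a b).2
    have h3 : (d b e : ℝ) ≤ Real.exp (κ * δ) * M :=
      h2.trans (by gcongr; exact le_max_right _ _)
    have h4 : max (d a b : ℝ) (d b e) ≤ Real.exp (κ * δ) * M := by
      refine max_le ?_ h3
      have : (d a b : ℝ) ≤ M := le_max_left _ _
      nlinarith
    calc (d a e : ℝ) ≤ Real.exp (κ * δ) * (Real.exp (κ * δ) * M) := h1.trans (by gcongr)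
      _ = (Real.exp (κ * δ) * Real.exp (κ * δ)) * M := by ring
      _ ≤ 2 * M := by gcongr
  have key := PseudoMetricSpace.le_two_mul_dist_ofPreNNDist d dself dcomm hd (z n) (z m)
  have h5 := @dist_le_Ico_sum_dist X (PseudoMetricSpace.ofPreNNDist d dself dcomm) z n m hnm
  have h6 : Real.exp (-κ * gp o (z n) (z m)) = (d (z n) (z m) : ℝ) := by
    rw [dval, if_neg hne]
  rw [h6]
  refine key.trans (mul_le_mul_of_nonneg_left (h5.trans (Finset.sum_le_sum fun t _ => ?_)) (by norm_num))
  refine (PseudoMetricSpace.dist_ofPreNNDist_le d dself dcomm _ _).trans ?_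
  rw [dval]; split_ifs
  · positivity
  · exact le_rfl

lemma gp_tail {δ : ℝ} (hδ0 : 0 ≤ δ) (hδ : IsHyperbolicWith X δ) (o : X) (z : ℕ → X)
    (l ε : ℝ) (hε : 0 < ε)
    (h1 : ∀ᶠ n : ℕ in atTop, (l - ε) * n ≤ dist o (z n))
    (h2 : ∀ᶠ n : ℕ in atTop, dist (z n) (z (n+1)) ≤ ε * n) :
    ∀ᶠ n : ℕ in atTop, ∀ m, n ≤ m → (l - 3 * ε) * n ≤ gp o (z n) (z m) := by
  by_cases hl : l - 2 * ε ≤ 0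
  · refine Eventually.of_forall fun n m _ => le_trans ?_ (gp_nonneg _ _ _)
    have : (0:ℝ) ≤ n := Nat.cast_nonneg n
    nlinarith
  push Not at hl
  obtain ⟨κ, hκ, hch⟩ := gp_chain hδ0 hδ
  obtain ⟨N1, hN1⟩ := eventually_atTop.1 h1
  obtain ⟨N2, hN2⟩ := eventually_atTop.1 h2
  set a := l - 2 * ε with ha
  set ρ := Real.exp (-κ * a) with hρ
  have hρ1 : ρ < 1 := by rw [hρ, Real.exp_lt_one_iff]; nlinarith
  have hρ0 : 0 < ρ := Real.exp_pos _
  have hstep : ∀ t, N1 ≤ t → N2 ≤ t → a * t ≤ gp o (z t) (z (t+1)) := by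
    intro t h1 h2
    have := gp_ge o (z t) (z (t+1))
    have := hN1 t h1
    have := hN2 t h2
    rw [ha]; linarith
  set C := 2 / (1 - ρ) with hC
  have hC0 : 0 < C := by rw [hC]; apply div_pos; norm_num; linarith
  have hlim : ∀ᶠ n : ℕ in atTop, Real.log C / κ ≤ ε * n :=
    (tendsto_natCast_atTop_atTop.const_mul_atTop hε).eventually_ge_atTop _
  filter_upwards [eventually_ge_atTop N1, eventually_ge_atTop N2, hlim] with n hn1 hn2 hn3 m hnm
  by_cases hz : z n = z m
  · rw [← hz, gp_self]
    refine le_trans ?_ (hN1 n hn1)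
    have : (0:ℝ) ≤ n := Nat.cast_nonneg n
    nlinarith
  have h := hch o z n m hnm hz
  have hsum : ∑ t ∈ Finset.Ico n m, Real.exp (-κ * gp o (z t) (z (t+1))) ≤ ρ ^ n / (1 - ρ) := by
    calc _ ≤ ∑ t ∈ Finset.Ico n m, ρ ^ t := by
          refine Finset.sum_le_sum fun t ht => ?_
          rw [Finset.mem_Ico] at ht
          rw [hρ, ← Real.exp_nat_mul]
          apply Real.exp_le_exp.2
          have := hstep t (by omega) (by omega)
          nlinarith
      _ ≤ _ := geom_sum_Ico_le_of_lt_one hρ0.le hρ1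
  have h' : Real.exp (-κ * gp o (z n) (z m)) ≤ Real.exp (Real.log C + n * (-κ * a)) := by
    rw [Real.exp_add, Real.exp_log hC0, Real.exp_nat_mul, ← hρ]
    calc _ ≤ 2 * (ρ ^ n / (1 - ρ)) := h.trans (by gcongr)
      _ = _ := by rw [hC]; ring
  have h'' := Real.exp_le_exp.1 h'
  have h3 : Real.log C ≤ κ * (ε * n) := by
    rw [div_le_iff₀ hκ] at hn3; linarith
  have h4 : κ * ((l - 3 * ε) * n) ≤ κ * gp o (z n) (z m) := by
    have : κ * ((l - 3 * ε) * n) = κ * a * n - κ * (ε * n) := by rw [ha]; ring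
    rw [this]; nlinarith
  exact le_of_mul_le_mul_left h4 hκ

lemma mkB_eq_iff {δ : ℝ} (hδ : IsHyperbolicWith X δ) (o : X) (u v : DivSeq X o) :
    mkB o u = mkB o v ↔ bndRel o u v := by
  constructor
  · intro h
    have h' := Quot.eqvGen_exact h
    clear h
    induction h' with
    | rel x y h => exact h
    | refl x => exact x.2
    | symm x y _ ih =>
      rw [bndRel, Filter.tendsto_atTop] at ih ⊢
      intro b
      obtain ⟨N, hN⟩ := eventually_atTop_prod_self.1 (ih b)
      refine eventually_atTop_prod_self.2 ⟨N, fun k l hk hl => ?_⟩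
      rw [gp_comm]; exact hN l k hl hk
    | trans x y w _ _ ih1 ih2 =>
      rw [bndRel, Filter.tendsto_atTop] at ih1 ih2 ⊢
      intro b
      obtain ⟨N, hN⟩ := eventually_atTop_prod_self.1 (ih1 (b + δ))
      obtain ⟨M, hM⟩ := eventually_atTop_prod_self.1 (ih2 (b + δ))
      refine eventually_atTop_prod_self.2 ⟨max N M, fun k l hk hl => ?_⟩
      have h1 := hN k (max N M) (le_trans (le_max_left _ _) hk) (le_max_left _ _)
      have h2 := hM (max N M) l (le_max_right _ _) (le_trans (le_max_right _ _) hl)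
      have h3 := hδ (x.1 k) (w.1 l) (y.1 (max N M)) o
      have h4 := le_min h1 h2
      simp only at h3 h4 ⊢
      linarith
  · intro h; exact Quot.sound h

lemma liminf_gp_nonneg (o : X) (u v : ℕ → X) :
    0 ≤ Filter.liminf (fun pr : ℕ × ℕ => gp o (u pr.1) (v pr.2)) atTop := by
  rw [Filter.liminf_eq]
  exact Real.sSup_nonneg' ⟨0, Eventually.of_forall fun pr => gp_nonneg _ _ _, le_rfl⟩

lemma gp_of_qB_lt {δ : ℝ} (hδ : IsHyperbolicWith X δ) (o : X) (u v : DivSeq X o) (t : ℝ)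
    (h : qB o (mkB o u) (mkB o v) < Real.exp (-t)) :
    ∃ N, ∀ i j, N ≤ i → N ≤ j → t ≤ gp o (u.1 i) (v.1 j) := by
  rw [qB] at h
  split_ifs at h with heq
  · rw [mkB_eq_iff hδ, bndRel, Filter.tendsto_atTop] at heq
    obtain ⟨N, hN⟩ := eventually_atTop_prod_self.1 (heq t)
    exact ⟨N, fun i j hi hj => hN i j hi hj⟩
  · have h1 : t < gpB o (mkB o u) (mkB o v) := by
      have := Real.exp_lt_exp.1 h; linarith
    have h2 : gpB o (mkB o u) (mkB o v) ≤
        Filter.liminf (fun pr : ℕ × ℕ => gp o (u.1 pr.1) (v.1 pr.2)) atTop := by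
      refine csInf_le ⟨0, ?_⟩ ⟨u, v, rfl, rfl, rfl⟩
      rintro s ⟨u', v', -, -, rfl⟩
      exact liminf_gp_nonneg _ _ _
    have h3 := Filter.eventually_lt_of_lt_liminf (lt_of_lt_of_le h1 h2)
      ⟨0, eventually_map.2 (Eventually.of_forall fun pr => gp_nonneg _ _ _)⟩
    obtain ⟨N, hN⟩ := eventually_atTop_prod_self.1 h3
    exact ⟨N, fun i j hi hj => (hN i j hi hj).le⟩

lemma qB_lt_of_gp {δ : ℝ} (hδ : IsHyperbolicWith X δ) (o : X) (u v : DivSeq X o)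
    (s t : ℝ) (hst : t < s - 2 * δ) (h : ∃ N, ∀ i j, N ≤ i → N ≤ j → s ≤ gp o (u.1 i) (v.1 j)) :
    qB o (mkB o u) (mkB o v) < Real.exp (-t) := by
  obtain ⟨N, hN⟩ := h
  rw [qB]
  split_ifs with heq
  · exact Real.exp_pos _
  apply Real.exp_lt_exp.2
  have : s - 2 * δ ≤ gpB o (mkB o u) (mkB o v) := by
    refine le_csInf ⟨_, u, v, rfl, rfl, rfl⟩ ?_
    rintro r ⟨u', v', hu, hv, rfl⟩
    have hne : ¬ bndRel o u' v' := by
      rw [← mkB_eq_iff hδ, hu, hv]; exact heq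
    have hu' := (mkB_eq_iff hδ o u' u).1 hu
    have hv' := (mkB_eq_iff hδ o v v').1 hv.symm
    rw [bndRel, Filter.tendsto_atTop] at hu' hv'
    obtain ⟨N1, hN1⟩ := eventually_atTop_prod_self.1 (hu' (s + |δ|))
    obtain ⟨N2, hN2⟩ := eventually_atTop_prod_self.1 (hv' (s + |δ|))
    refine le_liminf_of_le ?_ ?_
    · rw [bndRel, Filter.tendsto_atTop] at hne
      push Not at hne
      obtain ⟨b, hb⟩ := hne
      exact IsCoboundedUnder.of_frequently_le (a := b) (hb.mono fun _ h => h.le)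
    · refine eventually_atTop_prod_self.2 ⟨max N (max N1 N2), fun i j hi hj => ?_⟩
      have e0 := hN i j (le_trans (le_max_left _ _) hi) (le_trans (le_max_left _ _) hj)
      have hi1 : N1 ≤ i := le_trans (le_trans (le_max_left _ _) (le_max_right _ _)) hi
      have hj2 : N2 ≤ j := le_trans (le_trans (le_max_right _ _) (le_max_right _ _)) hj
      have e1 := hN1 i i hi1 hi1
      have e2 := hN2 j j hj2 hj2
      have e3 := hδ (u'.1 i) (v'.1 j) (u.1 i) o
      have e4 := hδ (u.1 i) (v'.1 j) (v.1 j) o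
      simp only at e1 e2 ⊢
      have a1 : δ ≤ |δ| := le_abs_self δ
      have a2 : -δ ≤ |δ| := neg_le_abs δ
      have a3 : 0 ≤ |δ| := abs_nonneg δ
      have e5 : s - δ ≤ gp o (u.1 i) (v'.1 j) := by
        have : s ≤ min (gp o (u.1 i) (v.1 j)) (gp o (v.1 j) (v'.1 j)) :=
          le_min e0 (by linarith)
        linarith
      have e6 : s - δ ≤ min (gp o (u'.1 i) (u.1 i)) (gp o (u.1 i) (v'.1 j)) :=
        le_min (by linarith) e5
      linarith
  linarith

lemma exists_mkB (o : X) (ξ : Boundary X o) : ∃ u, mkB o u = ξ := Quot.exists_rep ξ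

lemma qB_self (o : X) (ξ : Boundary X o) : qB o ξ ξ = 0 := by simp [qB]

lemma qB_pos {o : X} {ξ η : Boundary X o} (h : ξ ≠ η) : 0 < qB o ξ η := by
  rw [qB, if_neg h]; exact Real.exp_pos _

lemma qB_tri {δ : ℝ} (hδ : IsHyperbolicWith X δ) (o : X) (ξ η ζ : Boundary X o) (t : ℝ)
    (h1 : qB o ξ η < Real.exp (-t)) (h2 : qB o η ζ < Real.exp (-t)) :
    qB o ξ ζ < Real.exp (-(t - (3 * δ + 1))) := by
  obtain ⟨u, rfl⟩ := exists_mkB o ξ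
  obtain ⟨v, rfl⟩ := exists_mkB o η
  obtain ⟨w, rfl⟩ := exists_mkB o ζ
  obtain ⟨N, hN⟩ := gp_of_qB_lt hδ o u v t h1
  obtain ⟨M, hM⟩ := gp_of_qB_lt hδ o v w t h2
  refine qB_lt_of_gp hδ o u w (t - δ) _ (by linarith) ⟨max N M, fun i j hi hj => ?_⟩
  have e1 := hN i (max N M) (le_trans (le_max_left _ _) hi) (le_max_left _ _)
  have e2 := hM (max N M) j (le_max_right _ _) (le_trans (le_max_right _ _) hj)
  have e3 := hδ (u.1 i) (w.1 j) (v.1 (max N M)) o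
  have e4 := le_min e1 e2
  linarith

lemma qB_symm {δ : ℝ} (hδ : IsHyperbolicWith X δ) (o : X) (ξ η : Boundary X o) (t : ℝ)
    (h1 : qB o ξ η < Real.exp (-t)) : qB o η ξ < Real.exp (-(t - (2 * δ + 1))) := by
  obtain ⟨u, rfl⟩ := exists_mkB o ξ
  obtain ⟨v, rfl⟩ := exists_mkB o η
  obtain ⟨N, hN⟩ := gp_of_qB_lt hδ o u v t h1
  refine qB_lt_of_gp hδ o v u t _ (by linarith) ⟨N, fun i j hi hj => ?_⟩
  rw [gp_comm]; exact hN j i hj hi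

/-- Boundary points of sequences staying in a common shadow are close. -/
lemma qB_lt_of_shadow {δ : ℝ} (hδ : IsHyperbolicWith X δ) (o : X) (u v : DivSeq X o) (x : X)
    (a : ℝ) (n : ℕ) (h1 : ∀ m, n ≤ m → a ≤ gp o x (u.1 m)) (h2 : ∀ m, n ≤ m → a ≤ gp o x (v.1 m)) :
    qB o (mkB o u) (mkB o v) < Real.exp (-(a - (3 * δ + 1))) := by
  refine qB_lt_of_gp hδ o u v (a - δ) _ (by linarith) ⟨n, fun i j hi hj => ?_⟩
  have e1 := h1 i hi
  rw [gp_comm] at e1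
  have e4 := le_min e1 (h2 j hj)
  have e3 := hδ (u.1 i) (v.1 j) x o
  linarith

/-- If two boundary points are close, shadows containing them have close centers. -/
lemma gp_of_shadow {δ : ℝ} (hδ0 : 0 ≤ δ) (hδ : IsHyperbolicWith X δ) (o : X) (u v : DivSeq X o)
    (x y : X) (a : ℝ) (n : ℕ) (h1 : ∀ m, n ≤ m → a ≤ gp o x (u.1 m))
    (h2 : ∀ m, n ≤ m → a ≤ gp o y (v.1 m)) (h : qB o (mkB o u) (mkB o v) < Real.exp (-a)) :
    a - 2 * δ ≤ gp o x y := by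
  obtain ⟨N, hN⟩ := gp_of_qB_lt hδ o u v a h
  have e0 := hN (max N n) (max N n) (le_max_left _ _) (le_max_left _ _)
  have e1 := h1 (max N n) (le_max_right _ _)
  have e2 := h2 (max N n) (le_max_right _ _)
  rw [gp_comm] at e2
  have e3 := hδ x y (u.1 (max N n)) o
  have e4 := hδ (u.1 (max N n)) y (v.1 (max N n)) o
  have e5 := le_min e0 e2
  have e6 : a - δ ≤ min (gp o x (u.1 (max N n))) (gp o (u.1 (max N n)) y) :=
    le_min (by linarith) (by linarith)
  linarith

lemma measurableSet_qball (o : X) (ξ : Boundary X o) (r : ℝ) : MeasurableSet (qball (qB o) ξ r) :=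
  MeasurableSpace.measurableSet_generateFrom ⟨ξ, r, rfl⟩

lemma measurableSet_singletonB (o : X) (ξ : Boundary X o) : MeasurableSet ({ξ} : Set (Boundary X o)) := by
  have : ({ξ} : Set (Boundary X o)) = ⋂ n : ℕ, qball (qB o) ξ (1 / ((n:ℝ) + 1)) := by
    ext η
    simp only [mem_singleton_iff, mem_iInter, qball, mem_ofPred_eq]
    constructor
    · rintro rfl n; rw [qB_self]; positivity
    · intro h
      by_contra hne
      obtain ⟨n, hn⟩ := exists_nat_one_div_lt (qB_pos (Ne.symm hne) : 0 < qB o ξ η)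
      exact lt_irrefl _ ((h n).trans hn)
  rw [this]
  exact MeasurableSet.iInter fun n => measurableSet_qball _ _ _

lemma bAct_mul (o : X) (g h : X ≃ᵢ X) (ξ : Boundary X o) :
    bAct o (g * h) ξ = bAct o g (bAct o h ξ) := by
  obtain ⟨u, rfl⟩ := exists_mkB o ξ
  rfl

lemma bAct_one (o : X) (ξ : Boundary X o) : bAct o (1 : X ≃ᵢ X) ξ = ξ := by
  obtain ⟨u, rfl⟩ := exists_mkB o ξ
  rfl

lemma qbb_qball {Xs : Type*} [MetricSpace Xs] (o : X) (os : Xs)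
    (ξ : Boundary X o × Boundary Xs os) (r : ℝ) :
    qball (qbb o os) ξ r = qball (qB o) ξ.1 r ×ˢ qball (qB os) ξ.2 r := by
  ext η; simp [qball, qbb]

end Geometry

set_option linter.unusedSectionVars false

/-! ### Path space -/

lemma ms_and {Ω : Type*} [MeasurableSpace Ω] {a b : Ω → Prop} (ha : MeasurableSet {ω | a ω})
    (hb : MeasurableSet {ω | b ω}) : MeasurableSet {ω | a ω ∧ b ω} := by
  have e : {ω | a ω ∧ b ω} = {ω | a ω} ∩ {ω | b ω} := by ext; simp
  rw [e]; exact ha.inter hb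

lemma ms_mem {Ω Ω' : Type*} [MeasurableSpace Ω] [MeasurableSpace Ω'] {f : Ω → Ω'} (hf : Measurable f)
    {B : Set Ω'} (hB : MeasurableSet B) : MeasurableSet {ω | f ω ∈ B} := by
  have e : {ω | f ω ∈ B} = f ⁻¹' B := by ext; simp
  rw [e]; exact hf hB

lemma ms_eq {Ω Ω' : Type*} [MeasurableSpace Ω] [MeasurableSpace Ω'] [MeasurableSingletonClass Ω']
    {f : Ω → Ω'} (hf : Measurable f) (x : Ω') : MeasurableSet {ω | f ω = x} := by
  have e : {ω | f ω = x} = f ⁻¹' {x} := by ext; simp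
  rw [e]; exact hf (measurableSet_singleton x)

lemma ms_all {Ω : Type*} [MeasurableSpace Ω] (n : ℕ) {a : ℕ → Ω → Prop}
    (ha : ∀ i, MeasurableSet {ω | a i ω}) : MeasurableSet {ω | ∀ i < n, a i ω} := by
  have e : {ω | ∀ i < n, a i ω} = ⋂ i, ⋂ (_ : i < n), {ω | a i ω} := by ext; simp
  rw [e]; exact MeasurableSet.iInter fun i => MeasurableSet.iInter fun _ => ha i

section Paths
variable {G : Type*} [Group G] [Countable G] [MeasurableSpace G] [DiscreteMeasurableSpace G]

lemma measurable_coord (i : ℕ) : Measurable (fun ω : ℕ → G => ω i) := measurable_pi_apply i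

/-- The step distribution as a measure. -/
def stepM (p : G → ℝ≥0∞) : Measure G := Measure.sum fun x => p x • Measure.dirac x

lemma stepM_singleton (p : G → ℝ≥0∞) (x : G) : stepM p {x} = p x := by
  rw [stepM, Measure.sum_apply _ (measurableSet_singleton x)]
  rw [tsum_eq_single x]
  · simp
  · intro y hy; simp [hy]

lemma isProb_stepM {p : G → ℝ≥0∞} (hp : IsProb p) : IsProbabilityMeasure (stepM p) := by
  constructor
  rw [stepM, Measure.sum_apply _ MeasurableSet.univ]
  have : ∑' x, p x = 1 := hp
  simpa using this

/-- Path space measures with the same cylinder probabilities agree. -/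
lemma rw_eq_infinitePi {p : G → ℝ≥0∞} (hp : IsProb p) {P : Measure (ℕ → G)}
    (hP : IsRWMeasure p P) : P = Measure.infinitePi (fun _ : ℕ => stepM p) := by
  have := isProb_stepM hp
  have := hP.1
  apply Measure.eq_infinitePi
  intro s t ht
  obtain ⟨n, hn⟩ : ∃ n, s ⊆ Finset.range n := s.exists_nat_subset_range
  have h1 : P.map (fun (ω : ℕ → G) (i : Fin n) => ω i) = Measure.pi (fun _ : Fin n => stepM p) := by
    apply Measure.ext_of_singleton
    intro g
    rw [Measure.map_apply (by fun_prop) (measurableSet_singleton g), Measure.pi_singleton]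
    simp_rw [stepM_singleton]
    have h := hP.2 n (fun i => if hi : i < n then g ⟨i, hi⟩ else 1)
    rw [Finset.prod_range] at h
    have e : (fun (ω : ℕ → G) (i : Fin n) => ω i) ⁻¹' {g} =
        {ω | ∀ i < n, ω i = (fun i => if hi : i < n then g ⟨i, hi⟩ else 1) i} := by
      ext ω
      simp only [mem_preimage, mem_singleton_iff, mem_ofPred_eq, funext_iff]
      constructor
      · intro h i hi; rw [dif_pos hi]; exact h ⟨i, hi⟩
      · intro h i; have := h i i.2; rw [dif_pos i.2] at this; exact this
    rw [e, h]
    refine Finset.prod_congr rfl fun i _ => by simp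
  have e : Set.pi (s : Set ℕ) t = (fun (ω : ℕ → G) (i : Fin n) => ω i) ⁻¹'
      (Set.pi univ fun i : Fin n => if (i : ℕ) ∈ s then t i else univ) := by
    ext ω
    simp only [Set.mem_pi, mem_preimage, mem_univ, forall_true_left, Finset.mem_coe]
    constructor
    · intro h i
      split_ifs with hi
      · exact h i hi
      · trivial
    · intro h i hi
      have := h ⟨i, Finset.mem_range.1 (hn hi)⟩
      simpa [hi] using this
  rw [e, ← Measure.map_apply (by fun_prop) (MeasurableSet.of_discrete), h1, Measure.pi_pi]
  rw [← Finset.prod_range (fun i => stepM p (if i ∈ s then t i else univ)),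
    ← Finset.prod_subset hn]
  · exact Finset.prod_congr rfl fun i hi => by simp [hi]
  · intro i _ hi; simp [hi]

lemma rw_unique {p : G → ℝ≥0∞} (hp : IsProb p) {P Q : Measure (ℕ → G)}
    (hP : IsRWMeasure p P) (hQ : IsRWMeasure p Q) : P = Q := by
  rw [rw_eq_infinitePi hp hP, rw_eq_infinitePi hp hQ]

/-- The shift. -/
def shiftΩ (ω : ℕ → G) : ℕ → G := fun n => ω (n + 1)

lemma measurable_shiftΩ : Measurable (shiftΩ : (ℕ → G) → (ℕ → G)) := by
  unfold shiftΩ; fun_prop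

lemma shiftΩ_iterate (n : ℕ) (ω : ℕ → G) : shiftΩ^[n] ω = fun k => ω (k + n) := by
  induction n generalizing ω with
  | zero => rfl
  | succ n ih => rw [Function.iterate_succ_apply, ih]; funext k; simp only [shiftΩ]; congr 1

lemma walk_zero (ω : ℕ → G) : walk ω 0 = 1 := rfl

lemma walk_succ (ω : ℕ → G) (n : ℕ) : walk ω (n+1) = walk ω n * ω n := by
  simp [walk, List.range_succ]

lemma walk_add (ω : ℕ → G) (n m : ℕ) : walk ω (n+m) = walk ω n * walk (shiftΩ^[n] ω) m := by
  induction m with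
  | zero => simp [walk_zero]
  | succ m ih =>
    rw [← add_assoc, walk_succ, ih, walk_succ, mul_assoc, shiftΩ_iterate]
    simp only; rw [add_comm m n]

lemma walk_one (ω : ℕ → G) : walk ω 1 = ω 0 := by
  rw [walk_succ, walk_zero, one_mul]

lemma measurable_walk (n : ℕ) : Measurable fun ω : ℕ → G => walk ω n := by
  induction n with
  | zero => simp only [walk_zero]; exact measurable_const
  | succ n ih =>
    simp only [walk_succ]
    exact (measurable_of_countable (fun q : G × G => q.1 * q.2)).comp
      (ih.prodMk (measurable_pi_apply n))

lemma rw_step {p : G → ℝ≥0∞} (hp : IsProb p) {P : Measure (ℕ → G)} (hP : IsRWMeasure p P)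
    (x : G) {B : Set (ℕ → G)} (hB : MeasurableSet B) :
    P {ω | ω 0 = x ∧ shiftΩ ω ∈ B} = p x * P B := by
  have := hP.1
  have hm : MeasurableSet {ω : ℕ → G | ω 0 = x} :=
    ms_eq (measurable_coord 0) x
  have hx : P {ω : ℕ → G | ω 0 = x} = p x := by
    have := hP.2 1 (fun _ => x)
    simpa using this
  by_cases hpx : p x = 0
  · rw [hpx, zero_mul]
    refine measure_mono_null (fun ω h => ?_) (hx.trans hpx)
    exact h.1
  have hpt : p x ≠ ∞ := by rw [← hx]; exact measure_ne_top _ _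
  set Q : Measure (ℕ → G) := (p x)⁻¹ • (P.restrict {ω | ω 0 = x}).map shiftΩ with hQ
  have hQapp : ∀ C, MeasurableSet C → Q C = (p x)⁻¹ * P {ω | ω 0 = x ∧ shiftΩ ω ∈ C} := by
    intro C hC
    rw [hQ, Measure.smul_apply, Measure.map_apply measurable_shiftΩ hC,
      Measure.restrict_apply (measurable_shiftΩ hC), smul_eq_mul]
    congr 2; ext ω; simp [and_comm]
  have hQrw : IsRWMeasure p Q := by
    constructor
    · constructor
      rw [hQapp _ MeasurableSet.univ]
      simp only [mem_univ, and_true]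
      rw [hx, ENNReal.inv_mul_cancel hpx hpt]
    · intro n g
      rw [hQapp]
      · have h := hP.2 (n+1) (fun i => Nat.casesOn i x g)
        have e : {ω : ℕ → G | ω 0 = x ∧ shiftΩ ω ∈ {ω | ∀ i < n, ω i = g i}} =
            {ω | ∀ i < n + 1, ω i = (fun i => Nat.casesOn i x g : ℕ → G) i} := by
          ext ω
          simp only [mem_ofPred_eq, shiftΩ]
          constructor
          · rintro ⟨h0, h1⟩ i hi
            cases i with
            | zero => exact h0
            | succ i => exact h1 i (by omega)
          · intro h
            exact ⟨h 0 (by omega), fun i hi => h (i+1) (by omega)⟩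
        rw [e, h, Finset.prod_range_succ']
        change (p x)⁻¹ * ((∏ i ∈ Finset.range n, p (g i)) * p x) = _
        rw [mul_comm, mul_assoc, ENNReal.mul_inv_cancel hpx hpt, mul_one]
      · exact ms_all n fun i => ms_eq (measurable_coord i) _
  have := hQapp B hB
  rw [rw_unique hp hQrw hP] at this
  rw [this, ← mul_assoc, ENNReal.mul_inv_cancel hpx hpt, one_mul]

lemma mp_shift {p : G → ℝ≥0∞} (hp : IsProb p) {P : Measure (ℕ → G)} (hP : IsRWMeasure p P) :
    MeasurePreserving (shiftΩ : (ℕ → G) → (ℕ → G)) P P := by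
  refine ⟨measurable_shiftΩ, ?_⟩
  ext B hB
  rw [Measure.map_apply measurable_shiftΩ hB]
  have e : shiftΩ ⁻¹' B = ⋃ x : G, {ω | ω 0 = x ∧ shiftΩ ω ∈ B} := by
    ext ω; simp
  rw [e, measure_iUnion]
  · simp_rw [rw_step hp hP _ hB]
    rw [ENNReal.tsum_mul_right, show ∑' x, p x = 1 from hp, one_mul]
  · intro x y hxy
    refine Set.disjoint_left.2 fun ω h1 h2 => hxy (h1.1.symm.trans h2.1)
  · intro x
    exact ms_and (ms_eq (measurable_coord 0) x) (ms_mem measurable_shiftΩ hB)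

lemma rw_cyl_shift {p : G → ℝ≥0∞} (hp : IsProb p) {P : Measure (ℕ → G)} (hP : IsRWMeasure p P)
    (n : ℕ) (g : ℕ → G) {B : Set (ℕ → G)} (hB : MeasurableSet B) :
    P {ω | (∀ i < n, ω i = g i) ∧ shiftΩ^[n] ω ∈ B} = (∏ i ∈ Finset.range n, p (g i)) * P B := by
  induction n generalizing g with
  | zero => simp
  | succ n ih =>
    have e : {ω : ℕ → G | (∀ i < n + 1, ω i = g i) ∧ shiftΩ^[n+1] ω ∈ B} =
        {ω | ω 0 = g 0 ∧ shiftΩ ω ∈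
          {ω | (∀ i < n, ω i = (fun i => g (i+1)) i) ∧ shiftΩ^[n] ω ∈ B}} := by
      ext ω
      simp only [mem_ofPred_eq, Function.iterate_succ_apply]
      constructor
      · rintro ⟨h, h'⟩
        exact ⟨h 0 (by omega), fun i hi => h (i+1) (by omega), h'⟩
      · rintro ⟨h0, h1, h2⟩
        refine ⟨fun i hi => ?_, h2⟩
        cases i with
        | zero => exact h0
        | succ i => exact h1 i (by omega)
    rw [e, rw_step hp hP, ih, Finset.prod_range_succ']
    · ring
    · exact ms_and (ms_all n fun i => ms_eq (measurable_coord i) _)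
        (ms_mem (measurable_shiftΩ.iterate n) hB)

lemma rw_walk_shift {p : G → ℝ≥0∞} (hp : IsProb p) {P : Measure (ℕ → G)} (hP : IsRWMeasure p P)
    (n : ℕ) (x : G) {B : Set (ℕ → G)} (hB : MeasurableSet B) :
    P {ω | walk ω n = x ∧ shiftΩ^[n] ω ∈ B} = piN p n x * P B := by
  induction n generalizing x B with
  | zero =>
    simp only [walk_zero, piN, Function.iterate_zero, id_eq]
    by_cases hx : x = 1
    · simp [hx]
    · simp [hx, Ne.symm hx]
  | succ n ih =>
    have e : {ω : ℕ → G | walk ω (n+1) = x ∧ shiftΩ^[n+1] ω ∈ B} =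
        ⋃ y : G, {ω | walk ω n = y ∧ shiftΩ^[n] ω ∈ {ω | ω 0 = y⁻¹ * x ∧ shiftΩ ω ∈ B}} := by
      ext ω
      simp only [mem_ofPred_eq, mem_iUnion, exists_eq_left', walk_succ,
        Function.iterate_succ_apply']
      rw [shiftΩ_iterate]
      simp only [zero_add]
      rw [eq_inv_mul_iff_mul_eq]
    have hm : ∀ y : G, MeasurableSet {ω : ℕ → G | ω 0 = y⁻¹ * x ∧ shiftΩ ω ∈ B} := fun y =>
      ms_and (ms_eq (measurable_coord 0) _) (ms_mem measurable_shiftΩ hB)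
    rw [e, measure_iUnion]
    · simp_rw [ih _ (hm _), rw_step hp hP _ hB]
      rw [piN, conv, ← ENNReal.tsum_mul_right]
      exact tsum_congr fun y => by ring
    · intro y z hyz
      refine Set.disjoint_left.2 fun ω h1 h2 => hyz (h1.1.symm.trans h2.1)
    · intro y
      exact ms_and (ms_eq (measurable_walk n) y) (ms_mem (measurable_shiftΩ.iterate n) (hm y))

lemma rw_walk {p : G → ℝ≥0∞} (hp : IsProb p) {P : Measure (ℕ → G)} (hP : IsRWMeasure p P)
    (n : ℕ) (x : G) : P {ω | walk ω n = x} = piN p n x := by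
  have := hP.1
  have := rw_walk_shift hp hP n x MeasurableSet.univ
  simpa using this

lemma piN_isProb {p : G → ℝ≥0∞} (hp : IsProb p) {P : Measure (ℕ → G)} (hP : IsRWMeasure p P)
    (n : ℕ) : IsProb (piN p n) := by
  have := hP.1
  rw [IsProb]
  simp_rw [← rw_walk hp hP n]
  rw [← measure_iUnion]
  · have : (⋃ x : G, {ω : ℕ → G | walk ω n = x}) = univ := by ext ω; simp
    rw [this, measure_univ]
  · intro y z hyz
    exact Set.disjoint_left.2 fun ω h1 h2 => hyz (h1.symm.trans h2)
  · intro y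
    exact ms_eq (measurable_walk n) y

/-- Ergodicity of the shift. -/
lemma rw_zero_one {p : G → ℝ≥0∞} (hp : IsProb p) {P : Measure (ℕ → G)} (hP : IsRWMeasure p P)
    {A : Set (ℕ → G)} (hA : MeasurableSet A) (hinv : shiftΩ ⁻¹' A =ᵐ[P] A) :
    P A = 0 ∨ P Aᶜ = 0 := by
  have := hP.1
  by_cases h0 : P A = 0
  · exact Or.inl h0
  right
  have hinvn : ∀ n : ℕ, (shiftΩ^[n]) ⁻¹' A =ᵐ[P] A := by
    intro n
    induction n with
    | zero => rfl
    | succ n ih =>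
      have h1 := ((mp_shift hp hP).quasiMeasurePreserving).preimage_ae_eq ih
      rw [← Set.preimage_comp, ← Function.iterate_succ] at h1
      exact h1.trans hinv
  set Q : Measure (ℕ → G) := (P A)⁻¹ • P.restrict A with hQ
  have hQrw : IsRWMeasure p Q := by
    constructor
    · constructor
      rw [hQ, Measure.smul_apply, Measure.restrict_apply_univ, smul_eq_mul,
        ENNReal.inv_mul_cancel h0 (measure_ne_top _ _)]
    · intro n g
      rw [hQ, Measure.smul_apply, Measure.restrict_apply' hA, smul_eq_mul]
      have e1 : ({ω : ℕ → G | ∀ i < n, ω i = g i} ∩ A : Set _) =ᵐ[P]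
          ({ω | (∀ i < n, ω i = g i) ∧ shiftΩ^[n] ω ∈ A} : Set _) :=
        (ae_eq_refl _).inter (hinvn n).symm
      rw [measure_congr e1, rw_cyl_shift hp hP n g hA, mul_comm, mul_assoc,
        ENNReal.mul_inv_cancel h0 (measure_ne_top _ _), mul_one]
  have h := rw_unique hp hQrw hP
  rw [← h, hQ, Measure.smul_apply, Measure.restrict_apply hA.compl]
  simp


lemma rw_map_coord {p : G → ℝ≥0∞} (hp : IsProb p) {P : Measure (ℕ → G)} (hP : IsRWMeasure p P)
    (i : ℕ) : P.map (fun ω => ω i) = stepM p := by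
  have := isProb_stepM hp
  rw [rw_eq_infinitePi hp hP]
  exact (measurePreserving_eval_infinitePi (fun _ : ℕ => stepM p) i).map_eq

lemma rw_indep {p : G → ℝ≥0∞} (hp : IsProb p) {P : Measure (ℕ → G)} (hP : IsRWMeasure p P)
    (h : G → ℝ) : ProbabilityTheory.iIndepFun (fun (i : ℕ) (ω : ℕ → G) => h (ω i)) P := by
  have := isProb_stepM hp
  rw [rw_eq_infinitePi hp hP]
  have hh : Measurable h := measurable_of_countable h
  exact ProbabilityTheory.iIndepFun_infinitePi (P := fun _ : ℕ => stepM p)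
        (X := fun _ => h) (fun _ => hh)

lemma rw_map_comp {p : G → ℝ≥0∞} (hp : IsProb p) {P : Measure (ℕ → G)} (hP : IsRWMeasure p P)
    (h : G → ℝ) (i : ℕ) : P.map (fun ω : ℕ → G => h (ω i)) = (stepM p).map h := by
  have hh : Measurable h := measurable_of_countable h
  rw [← rw_map_coord hp hP i, Measure.map_map hh (measurable_coord i)]; rfl

lemma rw_integral_coord {p : G → ℝ≥0∞} (hp : IsProb p) {P : Measure (ℕ → G)}
    (hP : IsRWMeasure p P) (h : G → ℝ) (i : ℕ) :
    ∫ ω, h (ω i) ∂P = ∫ x, h x ∂(stepM p) := by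
  have hh : Measurable h := measurable_of_countable h
  rw [← rw_map_coord hp hP i, integral_map (measurable_coord i).aemeasurable
    hh.aestronglyMeasurable]

lemma rw_integrable_coord {p : G → ℝ≥0∞} (hp : IsProb p) {P : Measure (ℕ → G)}
    (hP : IsRWMeasure p P) {h : G → ℝ} (hint : Integrable h (stepM p)) (i : ℕ) :
    Integrable (fun ω => h (ω i)) P := by
  rw [← rw_map_coord hp hP i] at hint
  exact hint.comp_measurable (measurable_coord i)

/-- Strong law of large numbers for functions of the increments. -/
lemma rw_slln {p : G → ℝ≥0∞} (hp : IsProb p) {P : Measure (ℕ → G)} (hP : IsRWMeasure p P)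
    (h : G → ℝ) (hint : Integrable h (stepM p)) :
    ∀ᵐ ω ∂P, Tendsto (fun n : ℕ => (∑ i ∈ Finset.range n, h (ω i)) / n) atTop
      (𝓝 (∫ x, h x ∂(stepM p))) := by
  have hh : Measurable h := measurable_of_countable h
  rw [← rw_integral_coord hp hP h 0]
  have hpair : Pairwise (Function.onFun (fun f g => ProbabilityTheory.IndepFun f g P)
      (fun (i : ℕ) (ω : ℕ → G) => h (ω i))) := by
    intro i j hij
    exact (rw_indep hp hP h).indepFun hij
  have hid : ∀ i : ℕ, ProbabilityTheory.IdentDistrib (fun ω : ℕ → G => h (ω i))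
      (fun ω : ℕ → G => h (ω 0)) P P := by
    intro i
    exact ⟨(hh.comp (measurable_coord i)).aemeasurable, (hh.comp (measurable_coord 0)).aemeasurable,
      by rw [rw_map_comp hp hP, rw_map_comp hp hP]⟩
  exact ProbabilityTheory.strong_law_ae_real (μ := P) (fun (i : ℕ) (ω : ℕ → G) => h (ω i))
    (rw_integrable_coord hp hP hint 0) hpair hid

/-- The block increments form a random walk with step distribution `piN p N`. -/
lemma rw_block {p : G → ℝ≥0∞} (hp : IsProb p) {P : Measure (ℕ → G)} (hP : IsRWMeasure p P)
    (N : ℕ) : IsRWMeasure (piN p N)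
      (P.map (fun ω j => walk (shiftΩ^[j * N] ω) N)) := by
  have := hP.1
  have hm : Measurable (fun (ω : ℕ → G) (j : ℕ) => walk (shiftΩ^[j * N] ω) N) :=
    measurable_pi_lambda _ fun j => (measurable_walk N).comp (measurable_shiftΩ.iterate _)
  refine ⟨Measure.isProbabilityMeasure_map hm.aemeasurable, fun n g => ?_⟩
  have hc : ∀ (n : ℕ) (g : ℕ → G), MeasurableSet {ω : ℕ → G | ∀ i < n, ω i = g i} := by
    intro n g
    exact ms_all n fun i => ms_eq (measurable_coord i) _
  rw [Measure.map_apply hm (hc n g)]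
  induction n generalizing g with
  | zero => simp
  | succ n ih =>
    have e : (fun (ω : ℕ → G) (j : ℕ) => walk (shiftΩ^[j * N] ω) N) ⁻¹'
          {ω | ∀ i < n + 1, ω i = g i} =
        {ω | walk ω N = g 0 ∧ shiftΩ^[N] ω ∈
          (fun (ω : ℕ → G) (j : ℕ) => walk (shiftΩ^[j * N] ω) N) ⁻¹'
          {ω | ∀ i < n, ω i = (fun i => g (i+1)) i}} := by
      ext ω
      simp only [mem_preimage, mem_ofPred_eq, ← Function.iterate_add_apply]
      constructor
      · intro h
        refine ⟨by simpa using h 0 (by omega), fun i hi => ?_⟩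
        have := h (i+1) (by omega)
        rwa [add_mul, one_mul] at this
      · rintro ⟨h0, h1⟩ i hi
        cases i with
        | zero => simpa using h0
        | succ i =>
          have := h1 i (by omega)
          rwa [add_mul, one_mul]
    rw [e, rw_walk_shift hp hP N (g 0) (hm (hc _ _)), ih, Finset.prod_range_succ', mul_comm]

end Paths

set_option linter.unusedSectionVars false

section Kingman
variable {G : Type*} [Group G] [Countable G] [MeasurableSpace G] [DiscreteMeasurableSpace G]

/-- The comparison function in the Katznelson–Weiss argument. -/
def kwF (c' : ℝ≥0∞) (f1 g1 : (ℕ → G) → ℝ≥0∞) (N M : ℕ) (ω : ℕ → G) : ℝ≥0∞ :=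
  ∑ i ∈ Finset.range M, (c' + g1 (shiftΩ^[i] ω) + if M ≤ i + N then f1 (shiftΩ^[i] ω) else 0)

lemma kwF_add (c' : ℝ≥0∞) (f1 g1 : (ℕ → G) → ℝ≥0∞) (N n m : ℕ) (ω : ℕ → G) :
    (∑ i ∈ Finset.range n, (c' + g1 (shiftΩ^[i] ω))) + kwF c' f1 g1 N m (shiftΩ^[n] ω) ≤
      kwF c' f1 g1 N (n + m) ω := by
  unfold kwF
  rw [Finset.sum_range_add]
  refine add_le_add (Finset.sum_le_sum fun i _ => le_self_add) (le_of_eq ?_)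
  refine Finset.sum_congr rfl fun i _ => ?_
  rw [← Function.iterate_add_apply, add_comm i n]
  simp only [add_assoc, add_le_add_iff_left]

lemma kw_sub_one {f : ℕ → (ℕ → G) → ℝ≥0∞} (hf0 : ∀ ω, f 0 ω = 0)
    (hsub : ∀ ω n m, f (n + m) ω ≤ f n ω + f m (shiftΩ^[n] ω)) (M : ℕ) (ω : ℕ → G) :
    f M ω ≤ ∑ i ∈ Finset.range M, f 1 (shiftΩ^[i] ω) := by
  induction M with
  | zero => simp [hf0]
  | succ M ih =>
    rw [Finset.sum_range_succ]
    exact (hsub ω M 1).trans (add_le_add_left ih _)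

lemma kw_ineq {f : ℕ → (ℕ → G) → ℝ≥0∞} (hf0 : ∀ ω, f 0 ω = 0)
    (hsub : ∀ ω n m, f (n + m) ω ≤ f n ω + f m (shiftΩ^[n] ω)) (c' : ℝ≥0∞) (N : ℕ)
    {g1 : (ℕ → G) → ℝ≥0∞}
    (hB : ∀ ω, g1 ω = f 1 ω ∨ ∃ n, 1 ≤ n ∧ n ≤ N ∧ f n ω ≤ n * c') (M : ℕ) (ω : ℕ → G) :
    f M ω ≤ kwF c' (f 1) g1 N M ω := by
  induction M using Nat.strong_induction_on generalizing ω with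
  | _ M ih =>
    rcases Nat.eq_zero_or_pos M with rfl | hM
    · simp [hf0]
    rcases hB ω with h | ⟨n, hn1, hnN, hn⟩
    · obtain ⟨m, rfl⟩ : ∃ m, M = 1 + m := ⟨M - 1, by omega⟩
      refine (hsub ω 1 m).trans (le_trans ?_ (kwF_add c' (f 1) g1 N 1 m ω))
      refine add_le_add ?_ (ih m (by omega) _)
      simp [h]
    · rcases le_or_gt n M with hnM | hnM
      · obtain ⟨m, rfl⟩ : ∃ m, M = n + m := ⟨M - n, by omega⟩
        refine (hsub ω n m).trans (le_trans ?_ (kwF_add c' (f 1) g1 N n m ω))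
        refine add_le_add (hn.trans ?_) (ih m (by omega) _)
        calc (n : ℝ≥0∞) * c' = ∑ i ∈ Finset.range n, c' := by simp
          _ ≤ _ := Finset.sum_le_sum fun i _ => le_self_add
      · refine (kw_sub_one hf0 hsub M ω).trans ?_
        unfold kwF
        refine Finset.sum_le_sum fun i _ => ?_
        rw [if_pos (by omega)]
        exact le_add_self

lemma kw_integral {p : G → ℝ≥0∞} (hp : IsProb p) {P : Measure (ℕ → G)} (hP : IsRWMeasure p P)
    (c' : ℝ≥0∞) {f1 g1 : (ℕ → G) → ℝ≥0∞} (hf1 : Measurable f1) (hg1 : Measurable g1) (N M : ℕ) :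
    ∫⁻ ω, kwF c' f1 g1 N M ω ∂P ≤ M * (c' + ∫⁻ ω, g1 ω ∂P) + N * ∫⁻ ω, f1 ω ∂P := by
  have := hP.1
  unfold kwF
  have hcomp : ∀ (i : ℕ) (h : (ℕ → G) → ℝ≥0∞), Measurable h →
      ∫⁻ ω, h (shiftΩ^[i] ω) ∂P = ∫⁻ ω, h ω ∂P := fun i h hh =>
    ((mp_shift hp hP).iterate i).lintegral_comp hh
  have hmi : ∀ i : ℕ, Measurable (shiftΩ^[i] : (ℕ → G) → (ℕ → G)) := fun i =>
    measurable_shiftΩ.iterate i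
  have hm2 : ∀ i : ℕ, Measurable fun ω : ℕ → G => if M ≤ i + N then f1 (shiftΩ^[i] ω) else 0 := by
    intro i
    split_ifs
    · exact hf1.comp (hmi i)
    · exact measurable_const
  have hm3 : ∀ i : ℕ, Measurable fun ω : ℕ → G => c' + g1 (shiftΩ^[i] ω) +
      if M ≤ i + N then f1 (shiftΩ^[i] ω) else 0 := fun i =>
    (measurable_const.add (hg1.comp (hmi i))).add (hm2 i)
  rw [lintegral_finsetSum _ fun i _ => hm3 i]
  have : ∀ i : ℕ, ∫⁻ ω, (c' + g1 (shiftΩ^[i] ω) +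
      if M ≤ i + N then f1 (shiftΩ^[i] ω) else 0) ∂P =
      (c' + ∫⁻ ω, g1 ω ∂P) + if M ≤ i + N then ∫⁻ ω, f1 ω ∂P else 0 := by
    intro i
    rw [lintegral_add_right _ (hm2 i), lintegral_add_left measurable_const, hcomp i g1 hg1]
    simp only [lintegral_const, measure_univ, mul_one]
    congr 1
    split_ifs
    · exact hcomp i f1 hf1
    · simp
  simp_rw [this]
  rw [Finset.sum_add_distrib, ← Finset.sum_filter]
  simp only [Finset.sum_const, Finset.card_range, nsmul_eq_mul]
  gcongr
  have : Finset.filter (fun i => M ≤ i + N) (Finset.range M) ⊆ Finset.Ico (M - N) M := by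
    intro i; simp only [Finset.mem_filter, Finset.mem_range, Finset.mem_Ico]; omega
  have := Finset.card_le_card this
  rw [Nat.card_Ico] at this
  omega

/-- The contradiction step of the Katznelson–Weiss argument. -/
lemma kw_contra {p : G → ℝ≥0∞} (hp : IsProb p) {P : Measure (ℕ → G)} (hP : IsRWMeasure p P)
    {f : ℕ → (ℕ → G) → ℝ≥0∞} (hf : ∀ n, Measurable (f n)) (hf0 : ∀ ω, f 0 ω = 0)
    (hsub : ∀ ω n m, f (n + m) ω ≤ f n ω + f m (shiftΩ^[n] ω))
    (hf1 : ∫⁻ ω, f 1 ω ∂P ≠ ∞) {L c' : ℝ} (hc0 : 0 ≤ c') (hc : c' < L)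
    (hL : ∀ n : ℕ, ENNReal.ofReal (L * n) ≤ ∫⁻ ω, f n ω ∂P)
    (hD : ∀ᵐ ω ∂P, ∃ n : ℕ, 1 ≤ n ∧ f n ω ≤ n * ENNReal.ofReal c') : False := by
  have := hP.1
  set B : ℕ → Set (ℕ → G) := fun N => ⋂ n, ⋂ (_ : 1 ≤ n ∧ n ≤ N),
    {ω | n * ENNReal.ofReal c' < f n ω} with hBdef
  have hBm : ∀ N, MeasurableSet (B N) := fun N => MeasurableSet.iInter fun n =>
    MeasurableSet.iInter fun _ => measurableSet_lt measurable_const (hf n)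
  have hBanti : Antitone B := by
    intro N M hNM ω h
    simp only [hBdef, mem_iInter] at h ⊢
    exact fun n hn => h n ⟨hn.1, hn.2.trans hNM⟩
  have hB0 : P (⋂ N, B N) = 0 := by
    refine measure_mono_null (t := {ω | ¬ ∃ n : ℕ, 1 ≤ n ∧ f n ω ≤ n * ENNReal.ofReal c'}) ?_ hD
    intro ω h
    simp only [hBdef, mem_iInter] at h
    rintro ⟨n, hn, hn'⟩
    exact absurd (h n n ⟨hn, le_rfl⟩) (not_lt.2 hn')
  have hBt : Tendsto (fun N => P (B N)) atTop (𝓝 0) := by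
    rw [← hB0]
    exact tendsto_measure_iInter_atTop (fun N => (hBm N).nullMeasurableSet) hBanti
      ⟨0, measure_ne_top _ _⟩
  have hint := tendsto_setLIntegral_zero hf1 (s := B) (l := atTop) hBt
  set e := (L - c') / 4 with he
  have he0 : 0 < e := by rw [he]; linarith
  obtain ⟨N, hN⟩ := (hint.eventually (gt_mem_nhds (ENNReal.ofReal_pos.2 he0))).exists
  set K := (∫⁻ ω, f 1 ω ∂P).toReal with hK
  have hK' : ∫⁻ ω, f 1 ω ∂P = ENNReal.ofReal K := (ENNReal.ofReal_toReal hf1).symm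
  have hg : ∀ ω, (B N).indicator (f 1) ω = f 1 ω ∨
      ∃ n, 1 ≤ n ∧ n ≤ N ∧ f n ω ≤ n * ENNReal.ofReal c' := by
    intro ω
    by_cases h : ω ∈ B N
    · left; exact indicator_of_mem h _
    · right
      simp only [hBdef, mem_iInter, not_forall] at h
      obtain ⟨n, hn, hn'⟩ := h
      exact ⟨n, hn.1, hn.2, not_lt.1 hn'⟩
  have main : ∀ M : ℕ, L * M ≤ M * (c' + e) + N * K := by
    intro M
    have h1 := (hL M).trans ((lintegral_mono (kw_ineq hf0 hsub _ N hg M)).trans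
      (kw_integral hp hP (ENNReal.ofReal c') (hf 1) ((hf 1).indicator (hBm N)) N M))
    have h2 : ENNReal.ofReal (L * M) ≤ ENNReal.ofReal (M * (c' + e) + N * K) := by
      refine h1.trans ?_
      rw [lintegral_indicator (hBm N), hK', ENNReal.ofReal_add (by positivity) (by positivity),
        ENNReal.ofReal_mul (by positivity), ENNReal.ofReal_mul (by positivity),
        ENNReal.ofReal_add hc0 he0.le, ENNReal.ofReal_natCast, ENNReal.ofReal_natCast]
      gcongr
    exact (ENNReal.ofReal_le_ofReal_iff (by positivity)).1 h2
  obtain ⟨M, hM⟩ := exists_nat_gt (N * K / e)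
  have h3 := main M
  rw [div_lt_iff₀ he0] at hM
  have : L = c' + 4 * e := by rw [he]; ring
  rw [this] at h3
  have : 0 ≤ (M : ℝ) * e := by positivity
  nlinarith

/-- Lower bound half of Kingman's theorem. -/
lemma kingman_lower {p : G → ℝ≥0∞} (hp : IsProb p) {P : Measure (ℕ → G)} (hP : IsRWMeasure p P)
    {f : ℕ → (ℕ → G) → ℝ≥0∞} (hf : ∀ n, Measurable (f n)) (hf0 : ∀ ω, f 0 ω = 0)
    (hsub : ∀ ω n m, f (n + m) ω ≤ f n ω + f m (shiftΩ^[n] ω))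
    (hf1 : ∫⁻ ω, f 1 ω ∂P ≠ ∞) {L c : ℝ} (hc : c < L)
    (hL : ∀ n : ℕ, ENNReal.ofReal (L * n) ≤ ∫⁻ ω, f n ω ∂P) :
    ∀ᵐ ω ∂P, ∀ᶠ n : ℕ in atTop, ENNReal.ofReal (c * n) ≤ f n ω := by
  have := hP.1
  rcases le_or_gt c 0 with hc0 | hc0
  · refine Eventually.of_forall fun ω => Eventually.of_forall fun n => ?_
    rw [ENNReal.ofReal_of_nonpos (mul_nonpos_of_nonpos_of_nonneg hc0 (by positivity))]
    exact zero_le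
  set A : ℝ → Set (ℕ → G) := fun q => {ω | ∃ᶠ n : ℕ in atTop, f n ω < ENNReal.ofReal (q * n)} with hA
  have hAm : ∀ q, MeasurableSet (A q) := by
    intro q
    have e : A q = ⋂ N : ℕ, ⋃ n : ℕ, ⋃ (_ : N ≤ n), {ω | f n ω < ENNReal.ofReal (q * n)} := by
      ext ω
      simp only [hA, mem_ofPred_eq, frequently_atTop, mem_iInter, mem_iUnion, exists_prop]
    rw [e]
    exact MeasurableSet.iInter fun N => MeasurableSet.iUnion fun n => MeasurableSet.iUnion fun _ =>
      measurableSet_lt (hf n) measurable_const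
  have hAmono : ∀ q q', q ≤ q' → A q ⊆ A q' := by
    intro q q' h ω hω
    refine Frequently.mono hω fun n hn => hn.trans_le ?_
    exact ENNReal.ofReal_le_ofReal (by gcongr)
  obtain ⟨c', hcc', hc'L⟩ := exists_between hc
  set q : ℕ → ℝ := fun k => c' - (c' - c) / (k + 1) with hq
  have hq0 : q 0 = c := by simp [hq]
  have hqc : ∀ k, q k ≤ c' := by
    intro k
    have : 0 ≤ (c' - c) / ((k:ℝ) + 1) := div_nonneg (by linarith) (by positivity)
    simp only [hq]; linarith
  have hqlt : ∀ k, q k < q (k+1) := by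
    intro k
    simp only [hq]
    have : (c' - c) / (((k + 1 : ℕ) : ℝ) + 1) < (c' - c) / ((k:ℝ) + 1) := by
      apply div_lt_div_of_pos_left (by linarith) (by positivity)
      push_cast; linarith
    linarith
  have hqpos : ∀ k, 0 < q k := by
    intro k
    induction k with
    | zero => rw [hq0]; exact hc0
    | succ k ih => exact ih.trans (hqlt k)
  have hf1fin : ∀ᵐ ω ∂P, f 1 ω < ∞ := ae_lt_top (hf 1) hf1
  set D : Set (ℕ → G) := ⋃ k, A (q k) with hD
  have hDm : MeasurableSet D := MeasurableSet.iUnion fun k => hAm _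
  have hstep : ∀ᵐ ω ∂P, shiftΩ ω ∈ D → ω ∈ D := by
    filter_upwards [hf1fin] with ω hω h
    simp only [hD, mem_iUnion] at h ⊢
    obtain ⟨k, hk⟩ := h
    refine ⟨k + 1, ?_⟩
    simp only [hA, mem_ofPred_eq] at hk ⊢
    have h2 : ∀ᶠ n : ℕ in atTop, (f 1 ω).toReal + q k * n ≤ q (k+1) * (n + 1 : ℕ) := by
      have ht : Tendsto (fun n : ℕ => (q (k+1) - q k) * (n:ℝ)) atTop atTop :=
        tendsto_natCast_atTop_atTop.const_mul_atTop (sub_pos.2 (hqlt k))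
      filter_upwards [ht.eventually_ge_atTop (f 1 ω).toReal] with n hn
      push_cast
      have := hqpos (k+1)
      nlinarith
    have h3 : ∃ᶠ n : ℕ in atTop, f (n+1) ω < ENNReal.ofReal (q (k+1) * (n + 1 : ℕ)) := by
      refine (hk.and_eventually h2).mono ?_
      rintro n ⟨hn1, hn2⟩
      have := hsub ω 1 n
      rw [add_comm 1 n] at this
      calc f (n+1) ω ≤ f 1 ω + f n (shiftΩ ω) := this
        _ < f 1 ω + ENNReal.ofReal (q k * n) := by
            exact ENNReal.add_lt_add_left hω.ne hn1
        _ = ENNReal.ofReal ((f 1 ω).toReal + q k * n) := by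
            rw [ENNReal.ofReal_add ENNReal.toReal_nonneg
              (mul_nonneg (hqpos k).le (by positivity)), ENNReal.ofReal_toReal hω.ne]
        _ ≤ _ := ENNReal.ofReal_le_ofReal hn2
    exact (tendsto_add_atTop_nat 1).frequently h3
  have hinv : shiftΩ ⁻¹' D =ᵐ[P] D := by
    refine ae_eq_of_ae_subset_of_measure_ge hstep ?_ (measurable_shiftΩ hDm).nullMeasurableSet
      (measure_ne_top _ _)
    rw [(mp_shift hp hP).measure_preimage hDm.nullMeasurableSet]
  rcases rw_zero_one hp hP hDm hinv with h0 | h1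
  · have : P (A c) = 0 := measure_mono_null (by
      rw [← hq0]; exact subset_iUnion (fun k => A (q k)) 0) h0
    have h' : ∀ᵐ ω ∂P, ω ∉ A c := measure_eq_zero_iff_ae_notMem.1 this
    filter_upwards [h'] with ω hω
    simp only [hA, mem_ofPred_eq, not_frequently, not_lt] at hω
    exact hω
  · exfalso
    refine kw_contra hp hP hf hf0 hsub hf1 (hc0.trans hcc').le hc'L hL ?_
    have h' : ∀ᵐ ω ∂P, ω ∉ Dᶜ := measure_eq_zero_iff_ae_notMem.1 h1
    filter_upwards [h'] with ω hω
    simp only [mem_compl_iff, not_not, hD, mem_iUnion] at hω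
    obtain ⟨k, hk⟩ := hω
    have hk' := hAmono _ _ (hqc k) hk
    simp only [hA, mem_ofPred_eq] at hk'
    obtain ⟨n, hn1, hn⟩ := (hk'.and_eventually (eventually_ge_atTop 1)).exists
    refine ⟨n, hn, hn1.le.trans (le_of_eq ?_)⟩
    rw [mul_comm, ENNReal.ofReal_mul (by positivity), ENNReal.ofReal_natCast]

end Kingman

set_option linter.unusedSectionVars false

section Drift
variable {G : Type*} [Group G] [Countable G] [MeasurableSpace G] [DiscreteMeasurableSpace G]

lemma lintegral_stepM (q : G → ℝ≥0∞) (F : G → ℝ≥0∞) :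
    ∫⁻ x, F x ∂(stepM q) = ∑' x, q x * F x := by
  rw [stepM, lintegral_sum_measure]
  refine tsum_congr fun x => ?_
  rw [lintegral_smul_measure, lintegral_dirac, smul_eq_mul]

lemma map_walk {p : G → ℝ≥0∞} (hp : IsProb p) {P : Measure (ℕ → G)} (hP : IsRWMeasure p P)
    (n : ℕ) : P.map (fun ω => walk ω n) = stepM (piN p n) := by
  apply Measure.ext_of_singleton
  intro x
  rw [Measure.map_apply (measurable_walk n) (measurableSet_singleton x), stepM_singleton,
    ← rw_walk hp hP n x]
  congr 1

lemma lintegral_walk {p : G → ℝ≥0∞} (hp : IsProb p) {P : Measure (ℕ → G)} (hP : IsRWMeasure p P)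
    (n : ℕ) (F : G → ℝ≥0∞) : ∫⁻ ω, F (walk ω n) ∂P = ∑' x, piN p n x * F x := by
  rw [← lintegral_stepM, ← map_walk hp hP n,
    lintegral_map (measurable_of_countable F) (measurable_walk n)]

lemma piN_one (p : G → ℝ≥0∞) : piN p 1 = p := by
  funext x
  simp only [piN, conv]
  rw [tsum_eq_single 1]
  · simp
  · intro y hy; simp [hy]

lemma le_one_of_isProb {q : G → ℝ≥0∞} (hq : IsProb q) (x : G) : q x ≤ 1 := by
  have : ∑' x, q x = 1 := hq
  rw [← this]; exact ENNReal.le_tsum x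

lemma ne_top_of_isProb {q : G → ℝ≥0∞} (hq : IsProb q) (x : G) : q x ≠ ∞ :=
  ((le_one_of_isProb hq x).trans_lt ENNReal.one_lt_top).ne

/-- A displacement-like function. -/
structure IsLen (f : G → ℝ) : Prop where
  nonneg : ∀ x, 0 ≤ f x
  one : f 1 = 0
  mul : ∀ x y, f (x * y) ≤ f x + f y

lemma len_walk_le {f : G → ℝ} (hf : IsLen f) (ω : ℕ → G) (n : ℕ) :
    f (walk ω n) ≤ ∑ i ∈ Finset.range n, f (ω i) := by
  induction n with
  | zero => simp [walk_zero, hf.one]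
  | succ n ih =>
    rw [walk_succ, Finset.sum_range_succ]
    exact (hf.mul _ _).trans (by linarith)

lemma len_sub {f : G → ℝ} (hf : IsLen f) (ω : ℕ → G) (n m : ℕ) :
    ENNReal.ofReal (f (walk ω (n+m))) ≤
      ENNReal.ofReal (f (walk ω n)) + ENNReal.ofReal (f (walk (shiftΩ^[n] ω) m)) := by
  rw [walk_add, ← ENNReal.ofReal_add (hf.nonneg _) (hf.nonneg _)]
  exact ENNReal.ofReal_le_ofReal (hf.mul _ _)

lemma len_lint_sub {p : G → ℝ≥0∞} (hp : IsProb p) {P : Measure (ℕ → G)} (hP : IsRWMeasure p P)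
    {F : ℕ → (ℕ → G) → ℝ≥0∞} (hF : ∀ n, Measurable (F n))
    (hsub : ∀ ω n m, F (n + m) ω ≤ F n ω + F m (shiftΩ^[n] ω)) (n m : ℕ) :
    ∫⁻ ω, F (n+m) ω ∂P ≤ ∫⁻ ω, F n ω ∂P + ∫⁻ ω, F m ω ∂P := by
  refine (lintegral_mono fun ω => hsub ω n m).trans ?_
  rw [lintegral_add_left (hF n)]
  refine add_le_add le_rfl ?_
  exact (((mp_shift hp hP).iterate n).lintegral_comp (hF m)).le

lemma lint_fin {p : G → ℝ≥0∞} (hp : IsProb p) {P : Measure (ℕ → G)} (hP : IsRWMeasure p P)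
    {F : ℕ → (ℕ → G) → ℝ≥0∞} (hF : ∀ n, Measurable (F n)) (hF0 : ∀ ω, F 0 ω = 0)
    (hsub : ∀ ω n m, F (n + m) ω ≤ F n ω + F m (shiftΩ^[n] ω)) (h1 : ∫⁻ ω, F 1 ω ∂P ≠ ∞) (n : ℕ) :
    ∫⁻ ω, F n ω ∂P ≠ ∞ := by
  induction n with
  | zero => simp [hF0]
  | succ n ih =>
    exact ne_top_of_le_ne_top (ENNReal.add_ne_top.2 ⟨ih, h1⟩) (len_lint_sub hp hP hF hsub n 1)

lemma measurable_len (f : G → ℝ≥0∞) (n : ℕ) : Measurable fun ω : ℕ → G => f (walk ω n) :=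
  (measurable_of_countable f).comp (measurable_walk n)

/-- Subadditive integrals: the limit is a lower bound. -/
lemma sub_lim_lower {p : G → ℝ≥0∞} (hp : IsProb p) {P : Measure (ℕ → G)} (hP : IsRWMeasure p P)
    {F : ℕ → (ℕ → G) → ℝ≥0∞} (hF : ∀ n, Measurable (F n)) (hF0 : ∀ ω, F 0 ω = 0)
    (hsub : ∀ ω n m, F (n + m) ω ≤ F n ω + F m (shiftΩ^[n] ω)) (h1 : ∫⁻ ω, F 1 ω ∂P ≠ ∞) :
    ∃ L : ℝ, 0 ≤ L ∧ Tendsto (fun n : ℕ => (∫⁻ ω, F n ω ∂P).toReal / n) atTop (𝓝 L) ∧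
      ∀ n : ℕ, ENNReal.ofReal (L * n) ≤ ∫⁻ ω, F n ω ∂P := by
  have hfin := lint_fin hp hP hF hF0 hsub h1
  have hS : Subadditive fun n : ℕ => (∫⁻ ω, F n ω ∂P).toReal := by
    intro n m
    rw [← ENNReal.toReal_add (hfin n) (hfin m)]
    exact ENNReal.toReal_mono (ENNReal.add_ne_top.2 ⟨hfin n, hfin m⟩)
      (len_lint_sub hp hP hF hsub n m)
  have hb : BddBelow (range fun n : ℕ => (∫⁻ ω, F n ω ∂P).toReal / n) := by
    refine ⟨0, ?_⟩
    rintro _ ⟨n, rfl⟩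
    positivity
  refine ⟨hS.lim, ?_, hS.tendsto_lim hb, fun n => ?_⟩
  · exact ge_of_tendsto' (hS.tendsto_lim hb) fun n => by positivity
  · rcases Nat.eq_zero_or_pos n with rfl | hn
    · simp
    · have := hS.lim_le_div hb hn.ne'
      rw [le_div_iff₀ (by positivity)] at this
      rw [← ENNReal.ofReal_toReal (hfin n)]
      exact ENNReal.ofReal_le_ofReal this

lemma momentSeq_eq {p : G → ℝ≥0∞} (hp : IsProb p) {P : Measure (ℕ → G)} (hP : IsRWMeasure p P)
    {f : G → ℝ} (hf : ∀ x, 0 ≤ f x) (n : ℕ) :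
    momentSeq p f n = (∫⁻ ω, ENNReal.ofReal (f (walk ω n)) ∂P).toReal := by
  rw [lintegral_walk hp hP n (fun x => ENNReal.ofReal (f x)), momentSeq, ENNReal.tsum_toReal_eq]
  · refine tsum_congr fun x => ?_
    rw [ENNReal.toReal_mul, ENNReal.toReal_ofReal (hf x)]
  · intro x
    exact ENNReal.mul_ne_top (ne_top_of_isProb (piN_isProb hp hP n) x) ENNReal.ofReal_ne_top

lemma integrable_stepM {q : G → ℝ≥0∞} {f : G → ℝ} (hf : ∀ x, 0 ≤ f x)
    (h : ∑' x, q x * ENNReal.ofReal (f x) ≠ ∞) : Integrable f (stepM q) := by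
  have hm : Measurable f := measurable_of_countable f
  refine (lintegral_ofReal_ne_top_iff_integrable hm.aestronglyMeasurable
    (Eventually.of_forall hf)).1 ?_
  rwa [lintegral_stepM]

lemma integral_stepM {q : G → ℝ≥0∞} {f : G → ℝ} (hf : ∀ x, 0 ≤ f x) :
    ∫ x, f x ∂(stepM q) = (∑' x, q x * ENNReal.ofReal (f x)).toReal := by
  have hm : Measurable f := measurable_of_countable f
  rw [integral_eq_lintegral_of_nonneg_ae (Eventually.of_forall hf) hm.aestronglyMeasurable,
    lintegral_stepM]

lemma slln_small {a : ℕ → ℝ} {m : ℝ}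
    (h : Tendsto (fun n : ℕ => (∑ i ∈ Finset.range n, a i) / n) atTop (𝓝 m)) :
    Tendsto (fun n : ℕ => a n / n) atTop (𝓝 0) := by
  have h1 := h.comp (tendsto_add_atTop_nat 1)
  have h2 : Tendsto (fun n : ℕ => ((n:ℝ) + 1) / n) atTop (𝓝 1) := by
    have : Tendsto (fun n : ℕ => 1 + (1:ℝ) / n) atTop (𝓝 (1 + 0)) :=
      tendsto_const_nhds.add tendsto_one_div_atTop_nhds_zero_nat
    rw [add_zero] at this
    refine this.congr' ?_
    filter_upwards [eventually_gt_atTop 0] with n hn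
    field_simp
  have h3 := (h1.mul h2).sub h
  rw [mul_one, sub_self] at h3
  refine h3.congr' ?_
  filter_upwards [eventually_gt_atTop 0] with n hn
  simp only [Function.comp]
  rw [Finset.sum_range_succ]
  push_cast
  field_simp
  ring

lemma len_small {p : G → ℝ≥0∞} (hp : IsProb p) {P : Measure (ℕ → G)} (hP : IsRWMeasure p P)
    {f : G → ℝ} (hf : ∀ x, 0 ≤ f x) (hmom : FiniteFirstMoment p f) {e : ℝ} (he : 0 < e) :
    ∀ᵐ ω ∂P, ∀ᶠ n : ℕ in atTop, f (ω n) ≤ e * n := by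
  filter_upwards [rw_slln hp hP f (integrable_stepM hf hmom)] with ω hω
  have := slln_small hω
  filter_upwards [this.eventually (gt_mem_nhds he), eventually_gt_atTop 0] with n hn hn0
  have hn' : (0:ℝ) < n := by exact_mod_cast hn0
  rw [div_lt_iff₀ hn'] at hn
  exact hn.le

/-- Almost sure lower bound for the drift. -/
lemma len_lower {p : G → ℝ≥0∞} (hp : IsProb p) {P : Measure (ℕ → G)} (hP : IsRWMeasure p P)
    {f : G → ℝ} (hf : IsLen f) (hmom : FiniteFirstMoment p f) {L c : ℝ}
    (hL : HasDrift p f L) (hc : c < L) :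
    ∀ᵐ ω ∂P, ∀ᶠ n : ℕ in atTop, c * n ≤ f (walk ω n) := by
  have hF := fun n => measurable_len (fun x : G => ENNReal.ofReal (f x)) n
  have hF0 : ∀ ω : ℕ → G, ENNReal.ofReal (f (walk ω 0)) = 0 := fun ω => by
    rw [walk_zero, hf.one, ENNReal.ofReal_zero]
  have h1 : ∫⁻ ω, ENNReal.ofReal (f (walk ω 1)) ∂P ≠ ∞ := by
    rw [lintegral_walk hp hP 1 (fun x => ENNReal.ofReal (f x)), piN_one]; exact hmom
  obtain ⟨L', -, hL', hlow⟩ := sub_lim_lower hp hP hF hF0 (fun ω n m => len_sub hf ω n m) h1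
  have : L' = L := by
    refine tendsto_nhds_unique hL' ?_
    refine Tendsto.congr (fun n => ?_) hL
    rw [momentSeq_eq hp hP hf.nonneg]
  subst this
  filter_upwards [kingman_lower hp hP hF hF0 (fun ω n m => len_sub hf ω n m) h1 hc hlow] with ω hω
  filter_upwards [hω] with n hn
  exact (ENNReal.ofReal_le_ofReal_iff (hf.nonneg _)).1 hn

lemma exists_drift {p : G → ℝ≥0∞} (hp : IsProb p) {P : Measure (ℕ → G)} (hP : IsRWMeasure p P)
    {f : G → ℝ} (hf : IsLen f) (hmom : FiniteFirstMoment p f) :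
    ∃ L : ℝ, 0 ≤ L ∧ HasDrift p f L := by
  have hF := fun n => measurable_len (fun x : G => ENNReal.ofReal (f x)) n
  have hF0 : ∀ ω : ℕ → G, ENNReal.ofReal (f (walk ω 0)) = 0 := fun ω => by
    rw [walk_zero, hf.one, ENNReal.ofReal_zero]
  have h1 : ∫⁻ ω, ENNReal.ofReal (f (walk ω 1)) ∂P ≠ ∞ := by
    rw [lintegral_walk hp hP 1 (fun x => ENNReal.ofReal (f x)), piN_one]; exact hmom
  obtain ⟨L', h0, hL', hlow⟩ := sub_lim_lower hp hP hF hF0 (fun ω n m => len_sub hf ω n m) h1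
  refine ⟨L', h0, Tendsto.congr (fun n => ?_) hL'⟩
  rw [momentSeq_eq hp hP hf.nonneg]

lemma len_between {f : G → ℝ} (hf : IsLen f) (ω : ℕ → G) (a r n : ℕ) (e : ℝ) (he : 0 ≤ e)
    (han : a + r ≤ n) (h : ∀ i, a ≤ i → f (ω i) ≤ e * i) :
    f (walk ω (a + r)) ≤ f (walk ω a) + r * (e * n) := by
  rw [walk_add]
  refine (hf.mul _ _).trans ?_
  gcongr
  refine (len_walk_le hf _ _).trans ?_
  rw [shiftΩ_iterate]
  calc ∑ i ∈ Finset.range r, f (ω (i + a)) ≤ ∑ i ∈ Finset.range r, e * n := by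
        refine Finset.sum_le_sum fun i hi => (h _ (by omega)).trans ?_
        have : i + a ≤ n := by have := Finset.mem_range.1 hi; omega
        gcongr
    _ = r * (e * n) := by simp

lemma len_block {f : G → ℝ} (hf : IsLen f) (ω : ℕ → G) (N k : ℕ) :
    f (walk ω (k * N)) ≤ ∑ j ∈ Finset.range k, f (walk (shiftΩ^[j * N] ω) N) := by
  induction k with
  | zero => simp [walk_zero, hf.one]
  | succ k ih =>
    rw [add_mul, one_mul, walk_add, Finset.sum_range_succ]
    exact (hf.mul _ _).trans (by linarith)

/-- Almost sure upper bound for the drift. -/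
lemma len_upper {p : G → ℝ≥0∞} (hp : IsProb p) {P : Measure (ℕ → G)} (hP : IsRWMeasure p P)
    {f : G → ℝ} (hf : IsLen f) (hmom : FiniteFirstMoment p f) {L c : ℝ}
    (hL : HasDrift p f L) (hc : L < c) :
    ∀ᵐ ω ∂P, ∀ᶠ n : ℕ in atTop, f (walk ω n) ≤ c * n := by
  have hF := fun n => measurable_len (fun x : G => ENNReal.ofReal (f x)) n
  have hF0 : ∀ ω : ℕ → G, ENNReal.ofReal (f (walk ω 0)) = 0 := fun ω => by
    rw [walk_zero, hf.one, ENNReal.ofReal_zero]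
  have h1 : ∫⁻ ω, ENNReal.ofReal (f (walk ω 1)) ∂P ≠ ∞ := by
    rw [lintegral_walk hp hP 1 (fun x => ENNReal.ofReal (f x)), piN_one]; exact hmom
  have hfin := lint_fin hp hP hF hF0 (fun ω n m => len_sub hf ω n m) h1
  obtain ⟨N, hN, hN0⟩ := ((hL.eventually (gt_mem_nhds hc)).and (eventually_gt_atTop 0)).exists
  have hN' : (0:ℝ) < N := by exact_mod_cast hN0
  set m := momentSeq p f N with hm
  have hm0 : 0 ≤ m := by rw [hm, momentSeq_eq hp hP hf.nonneg]; positivity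
  set d := c - m / N with hd
  have hd0 : 0 < d := by rw [hd]; linarith
  have hsum : ∑' x, piN p N x * ENNReal.ofReal (f x) ≠ ∞ := by
    rw [← lintegral_walk hp hP N (fun x => ENNReal.ofReal (f x))]; exact hfin N
  have hbl := rw_slln (piN_isProb hp hP N) (rw_block hp hP N) f (integrable_stepM hf.nonneg hsum)
  have hmeas : Measurable (fun (ω : ℕ → G) (j : ℕ) => walk (shiftΩ^[j * N] ω) N) :=
    measurable_pi_lambda _ fun j => (measurable_walk N).comp (measurable_shiftΩ.iterate _)
  have hbl' := ae_of_ae_map hmeas.aemeasurable hbl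
  have hme : ∫ x, f x ∂(stepM (piN p N)) = m := by
    rw [integral_stepM hf.nonneg, ← lintegral_walk hp hP N (fun x => ENNReal.ofReal (f x)), hm,
      momentSeq_eq hp hP hf.nonneg]
  rw [hme] at hbl'
  filter_upwards [hbl', len_small hp hP hf.nonneg hmom (e := d / (2 * N)) (by positivity)]
    with ω h2 h3
  have hdN : m < m + d * N / 2 := by have : 0 < d * N / 2 := by positivity
                                     linarith
  have h4 : ∀ᶠ k : ℕ in atTop, f (walk ω (k * N)) ≤ k * (m + d * N / 2) := by
    filter_upwards [h2.eventually (gt_mem_nhds hdN), eventually_gt_atTop 0] with k hk hk0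
    have hk' : (0:ℝ) < k := by exact_mod_cast hk0
    rw [div_lt_iff₀ hk'] at hk
    refine (len_block hf ω N k).trans (hk.le.trans (le_of_eq (mul_comm _ _)))
  have hdiv : Tendsto (fun n : ℕ => n / N) atTop atTop := Nat.tendsto_div_const_atTop hN0.ne'
  obtain ⟨n0, hn0⟩ := eventually_atTop.1 h3
  filter_upwards [hdiv.eventually h4, hdiv.eventually (eventually_ge_atTop n0)] with n h5 h6
  have hdec : n / N * N + n % N = n := Nat.div_add_mod' n N
  have hk0 : n0 ≤ n / N * N := h6.trans (Nat.le_mul_of_pos_right _ hN0)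
  have h7 := len_between hf ω (n / N * N) (n % N) n (d / (2 * N)) (by positivity) hdec.le
    (fun i hi => hn0 i (hk0.trans hi))
  rw [hdec] at h7
  have hkn : ((n / N : ℕ) : ℝ) * N ≤ n := by exact_mod_cast (by omega : n / N * N ≤ n)
  have hrN : ((n % N : ℕ) : ℝ) ≤ N := by exact_mod_cast (Nat.mod_lt n hN0).le
  have hA : ((n / N : ℕ) : ℝ) * (m + d * N / 2) ≤ n * (m / N + d / 2) := by
    have : ((n / N : ℕ) : ℝ) * (m + d * N / 2) = (((n / N : ℕ) : ℝ) * N) * (m / N + d / 2) := by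
      field_simp
    rw [this]; gcongr
  have hB : ((n % N : ℕ) : ℝ) * (d / (2 * N) * n) ≤ n * (d / 2) := by
    calc ((n % N : ℕ) : ℝ) * (d / (2 * N) * n) ≤ N * (d / (2 * N) * n) := by gcongr
      _ = n * (d / 2) := by field_simp
  have : c = m / N + d := by rw [hd]; ring
  rw [this]
  nlinarith

end Drift

set_option linter.unusedSectionVars false

section Entropy
variable {G : Type*} [Group G] [Countable G] [MeasurableSpace G] [DiscreteMeasurableSpace G]

/-- Negative logarithm with values in `[0,∞]`. -/
def nlog (t : ℝ≥0∞) : ℝ≥0∞ := if t = 0 then ∞ else ENNReal.ofReal (-Real.log t.toReal)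

lemma nlog_one : nlog 1 = 0 := by simp [nlog]

lemma nlog_anti {s t : ℝ≥0∞} (hst : s ≤ t) (ht : t ≠ ∞) : nlog t ≤ nlog s := by
  unfold nlog
  split_ifs with h1 h2 h2
  · exact le_rfl
  · exact absurd (le_zero_iff.1 (h1 ▸ hst)) h2
  · exact le_top
  · apply ENNReal.ofReal_le_ofReal
    apply neg_le_neg
    exact Real.log_le_log (ENNReal.toReal_pos h2 (ne_top_of_le_ne_top ht hst))
      (ENNReal.toReal_mono ht hst)

lemma nlog_mul {s t : ℝ≥0∞} (hs : s ≤ 1) (ht : t ≤ 1) : nlog (s * t) ≤ nlog s + nlog t := by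
  unfold nlog
  by_cases h1 : s = 0
  · simp [h1]
  by_cases h2 : t = 0
  · simp [h2]
  have hs' : s ≠ ∞ := ne_top_of_le_ne_top ENNReal.one_ne_top hs
  have ht' : t ≠ ∞ := ne_top_of_le_ne_top ENNReal.one_ne_top ht
  rw [if_neg (mul_ne_zero h1 h2), if_neg h1, if_neg h2, ENNReal.toReal_mul,
    Real.log_mul (ENNReal.toReal_pos h1 hs').ne' (ENNReal.toReal_pos h2 ht').ne', neg_add]
  exact ENNReal.ofReal_add_le

lemma mul_nlog {t : ℝ≥0∞} (ht : t ≤ 1) :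
    t * nlog t = ENNReal.ofReal (Real.negMulLog t.toReal) := by
  unfold nlog
  split_ifs with h
  · simp [h]
  · have ht' : t ≠ ∞ := ne_top_of_le_ne_top ENNReal.one_ne_top ht
    conv_lhs => rw [← ENNReal.ofReal_toReal ht']
    rw [ENNReal.toReal_ofReal ENNReal.toReal_nonneg, ← ENNReal.ofReal_mul ENNReal.toReal_nonneg,
      Real.negMulLog]
    congr 1; ring

lemma le_exp_of_le_nlog {t : ℝ≥0∞} (ht : t ≤ 1) {a : ℝ} (h : ENNReal.ofReal a ≤ nlog t) :
    t ≤ ENNReal.ofReal (Real.exp (-a)) := by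
  by_cases h0 : t = 0
  · simp [h0]
  have ht' : t ≠ ∞ := ne_top_of_le_ne_top ENNReal.one_ne_top ht
  have hpos := ENNReal.toReal_pos h0 ht'
  have h1 : t.toReal ≤ 1 := by
    have := ENNReal.toReal_mono ENNReal.one_ne_top ht; simpa using this
  rw [nlog, if_neg h0, ENNReal.ofReal_le_ofReal_iff
    (by have := Real.log_nonpos hpos.le h1; linarith)] at h
  rw [← ENNReal.ofReal_toReal ht']
  apply ENNReal.ofReal_le_ofReal
  rw [← Real.log_le_iff_le_exp hpos]
  linarith

lemma piN_mul_le {p : G → ℝ≥0∞} (hp : IsProb p) {P : Measure (ℕ → G)} (hP : IsRWMeasure p P)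
    (n m : ℕ) (x y : G) : piN p n x * piN p m y ≤ piN p (n+m) (x * y) := by
  rw [← rw_walk hp hP m y, ← rw_walk_shift hp hP n x (ms_eq (measurable_walk m) y),
    ← rw_walk hp hP (n+m)]
  refine measure_mono fun ω h => ?_
  simp only [mem_ofPred_eq] at h ⊢
  rw [walk_add, h.1, h.2]

/-- The entropy cocycle. -/
def entF (p : G → ℝ≥0∞) (n : ℕ) (ω : ℕ → G) : ℝ≥0∞ := nlog (piN p n (walk ω n))

lemma entF_zero (p : G → ℝ≥0∞) (ω : ℕ → G) : entF p 0 ω = 0 := by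
  simp [entF, walk_zero, piN, nlog_one]

lemma entF_sub {p : G → ℝ≥0∞} (hp : IsProb p) {P : Measure (ℕ → G)} (hP : IsRWMeasure p P)
    (ω : ℕ → G) (n m : ℕ) : entF p (n+m) ω ≤ entF p n ω + entF p m (shiftΩ^[n] ω) := by
  unfold entF
  rw [walk_add]
  refine (nlog_anti (piN_mul_le hp hP n m _ _) (ne_top_of_isProb (piN_isProb hp hP _) _)).trans ?_
  exact nlog_mul (le_one_of_isProb (piN_isProb hp hP _) _) (le_one_of_isProb (piN_isProb hp hP _) _)

lemma measurable_entF (p : G → ℝ≥0∞) (n : ℕ) : Measurable (entF p n) :=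
  measurable_len (fun x => nlog (piN p n x)) n

lemma lintegral_entF {p : G → ℝ≥0∞} (hp : IsProb p) {P : Measure (ℕ → G)} (hP : IsRWMeasure p P)
    (n : ℕ) : ∫⁻ ω, entF p n ω ∂P =
      ∑' x, ENNReal.ofReal (Real.negMulLog (piN p n x).toReal) := by
  unfold entF
  rw [lintegral_walk hp hP n (fun x => nlog (piN p n x))]
  exact tsum_congr fun x => mul_nlog (le_one_of_isProb (piN_isProb hp hP _) _)

lemma negMulLog_nonneg' {t : ℝ≥0∞} (ht : t ≤ 1) : 0 ≤ Real.negMulLog t.toReal := by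
  refine Real.negMulLog_nonneg ENNReal.toReal_nonneg ?_
  have := ENNReal.toReal_mono ENNReal.one_ne_top ht; simpa using this

lemma entropySeq_eq {p : G → ℝ≥0∞} (hp : IsProb p) {P : Measure (ℕ → G)} (hP : IsRWMeasure p P)
    (n : ℕ) : entropySeq p n = (∫⁻ ω, entF p n ω ∂P).toReal := by
  rw [lintegral_entF hp hP, entropySeq, ENNReal.tsum_toReal_eq]
  · refine tsum_congr fun x => ?_
    rw [ENNReal.toReal_ofReal (negMulLog_nonneg' (le_one_of_isProb (piN_isProb hp hP _) _))]
  · intro x; exact ENNReal.ofReal_ne_top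

lemma negMulLog_le_aux {t a : ℝ} (ht : 0 ≤ t) : Real.negMulLog t ≤ a * t + Real.exp (-a) := by
  rcases ht.eq_or_lt with rfl | ht
  · simp [Real.exp_nonneg]
  · have h1 : Real.log (Real.exp (-a) / t) ≤ Real.exp (-a) / t - 1 :=
      Real.log_le_sub_one_of_pos (by positivity)
    rw [Real.log_div (Real.exp_pos _).ne' ht.ne', Real.log_exp] at h1
    have h2 : t * (-a - Real.log t) ≤ t * (Real.exp (-a) / t - 1) := by gcongr
    have h3 : t * (Real.exp (-a) / t - 1) = Real.exp (-a) - t := by field_simp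
    rw [Real.negMulLog]
    nlinarith

lemma tsum_exp_growth {f : G → ℝ} (hf : ∀ x, 0 ≤ f x) (hg : FinExpGrowth f) :
    ∃ K : ℝ, 0 ≤ K ∧ ∑' x, ENNReal.ofReal (Real.exp (-(K * f x))) ≠ ∞ := by
  obtain ⟨c, hc, hg⟩ := hg
  refine ⟨c + 1, by linarith, ?_⟩
  have h1 : ∀ x, ENNReal.ofReal (Real.exp (-((c+1) * f x))) ≤
      ∑' k : ℕ, {x : G | f x < k + 1}.indicator
        (fun _ => ENNReal.ofReal (Real.exp (-((c+1) * k)))) x := by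
    intro x
    refine le_trans ?_ (ENNReal.le_tsum ⌊f x⌋₊)
    rw [indicator_of_mem (show x ∈ {y : G | f y < (⌊f x⌋₊ : ℝ) + 1} from Nat.lt_floor_add_one (f x))]
    apply ENNReal.ofReal_le_ofReal
    apply Real.exp_le_exp.2
    have := Nat.floor_le (hf x)
    nlinarith
  refine ne_top_of_le_ne_top ?_ (ENNReal.tsum_le_tsum h1)
  rw [ENNReal.tsum_comm]
  have h2 : ∀ k : ℕ, ∑' x, {x : G | f x < k + 1}.indicator
        (fun _ => ENNReal.ofReal (Real.exp (-((c+1) * k)))) x ≤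
        ENNReal.ofReal (c * Real.exp c * Real.exp (-1) ^ k) := by
    intro k
    obtain ⟨hfin, hcard⟩ := hg (k + 1) (by positivity)
    rw [← tsum_subtype, ENNReal.tsum_const]
    rw [← Nat.card_coe_set_eq] at hcard
    have hF : Finite {x : G | f x < (k:ℝ) + 1} := hfin
    rw [ENat.card_eq_coe_natCard]
    have : (((Nat.card {x : G | f x < (k:ℝ) + 1} : ℕ∞)) : ℝ≥0∞) =
      ENNReal.ofReal (Nat.card {x : G | f x < (k:ℝ) + 1}) := by
      rw [ENNReal.ofReal_natCast]; rfl
    rw [this, ← ENNReal.ofReal_mul (by positivity)]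
    apply ENNReal.ofReal_le_ofReal
    calc (Nat.card {x : G | f x < (k:ℝ) + 1} : ℝ) * Real.exp (-((c+1) * k))
        ≤ c * Real.exp (c * (k + 1)) * Real.exp (-((c+1) * k)) := by gcongr
      _ = c * Real.exp c * Real.exp (-1) ^ k := by
        rw [mul_assoc, mul_assoc, ← Real.exp_nat_mul, ← Real.exp_add, ← Real.exp_add]
        congr 2; ring
  refine ne_top_of_le_ne_top ?_ (ENNReal.tsum_le_tsum h2)
  have hsum : Summable fun k : ℕ => c * Real.exp c * Real.exp (-1) ^ k :=
    (summable_geometric_of_lt_one (Real.exp_nonneg _) (by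
      rw [Real.exp_lt_one_iff]; norm_num)).mul_left _
  rw [← ENNReal.ofReal_tsum_of_nonneg (fun k => by positivity) hsum]
  exact ENNReal.ofReal_ne_top

lemma entropy_fin {p : G → ℝ≥0∞} (hp : IsProb p) {f : G → ℝ} (hf : ∀ x, 0 ≤ f x)
    (hg : FinExpGrowth f) (hmom : FiniteFirstMoment p f) :
    ∑' x, ENNReal.ofReal (Real.negMulLog (p x).toReal) ≠ ∞ := by
  obtain ⟨K, hK, hs⟩ := tsum_exp_growth hf hg
  have h1 : ∀ x, ENNReal.ofReal (Real.negMulLog (p x).toReal) ≤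
      ENNReal.ofReal K * (p x * ENNReal.ofReal (f x)) + ENNReal.ofReal (Real.exp (-(K * f x))) := by
    intro x
    refine (ENNReal.ofReal_le_ofReal (negMulLog_le_aux (a := K * f x)
      ENNReal.toReal_nonneg)).trans (ENNReal.ofReal_add_le.trans ?_)
    gcongr
    rw [ENNReal.ofReal_mul (mul_nonneg hK (hf x)), ENNReal.ofReal_mul hK,
      ENNReal.ofReal_toReal (ne_top_of_isProb hp x), mul_assoc, mul_comm (p x)]
  refine ne_top_of_le_ne_top ?_ (ENNReal.tsum_le_tsum h1)
  rw [ENNReal.tsum_add, ENNReal.tsum_mul_left]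
  exact ENNReal.add_ne_top.2 ⟨ENNReal.mul_ne_top ENNReal.ofReal_ne_top hmom, hs⟩

/-- Shannon–McMillan–Breiman type lower bound. -/
lemma ent_lower {p : G → ℝ≥0∞} (hp : IsProb p) {P : Measure (ℕ → G)} (hP : IsRWMeasure p P)
    (hfin : ∑' x, ENNReal.ofReal (Real.negMulLog (p x).toReal) ≠ ∞) {h c : ℝ}
    (hh : HasEntropy p h) (hc : c < h) :
    ∀ᵐ ω ∂P, ∀ᶠ n : ℕ in atTop, piN p n (walk ω n) ≤ ENNReal.ofReal (Real.exp (-(c * n))) := by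
  have h1 : ∫⁻ ω, entF p 1 ω ∂P ≠ ∞ := by
    rw [lintegral_entF hp hP, piN_one]; exact hfin
  obtain ⟨L', -, hL', hlow⟩ := sub_lim_lower hp hP (measurable_entF p) (entF_zero p)
    (entF_sub hp hP) h1
  have : L' = h := by
    refine tendsto_nhds_unique hL' ?_
    refine Tendsto.congr (fun n => ?_) hh
    rw [entropySeq_eq hp hP]
  subst this
  filter_upwards [kingman_lower hp hP (measurable_entF p) (entF_zero p)
    (entF_sub hp hP) h1 hc hlow] with ω hω
  filter_upwards [hω] with n hn
  exact le_exp_of_le_nlog (le_one_of_isProb (piN_isProb hp hP _) _) hn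

end Entropy

set_option linter.unusedSectionVars false

section BdA
variable {G : Type*} [Group G] [Countable G] [MeasurableSpace G] [DiscreteMeasurableSpace G]
variable {Y : Type*} [MeasurableSpace Y]

/-- An equivariant boundary map for the random walk. -/
structure BdAct (P : Measure (ℕ → G)) (act : G → Y → Y) (b : (ℕ → G) → Y) : Prop where
  meas_act : ∀ g, Measurable (act g)
  meas_b : Measurable b
  act_mul : ∀ x y t, act (x * y) t = act x (act y t)
  act_one : ∀ t, act 1 t = t
  eqv : ∀ᵐ ω ∂P, b ω = act (ω 0) (b (shiftΩ ω))

/-- Translates of the harmonic measure. -/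
def nuX (P : Measure (ℕ → G)) (act : G → Y → Y) (b : (ℕ → G) → Y) (x : G) : Measure Y :=
  (P.map b).map (act x)

/-- Densities of the translates. -/
def DX (P : Measure (ℕ → G)) (act : G → Y → Y) (b : (ℕ → G) → Y) (x : G) : Y → ℝ≥0∞ :=
  (nuX P act b x).rnDeriv (P.map b)

variable {p : G → ℝ≥0∞} {P : Measure (ℕ → G)} {act : G → Y → Y} {b : (ℕ → G) → Y}

lemma measurable_DX (x : G) : Measurable (DX P act b x) := Measure.measurable_rnDeriv _ _

lemma walk_succ' (ω : ℕ → G) (n : ℕ) : walk ω (n+1) = ω 0 * walk (shiftΩ ω) n := by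
  rw [add_comm, walk_add]; simp [walk]

lemma bd_eqv_n (hp : IsProb p) (hP : IsRWMeasure p P) (hb : BdAct P act b) :
    ∀ᵐ ω ∂P, ∀ n, b ω = act (walk ω n) (b (shiftΩ^[n] ω)) := by
  have h1 : ∀ᵐ ω ∂P, ∀ n, b (shiftΩ^[n] ω) = act ((shiftΩ^[n] ω) 0) (b (shiftΩ (shiftΩ^[n] ω))) := by
    rw [ae_all_iff]
    intro n
    exact ((mp_shift hp hP).iterate n).quasiMeasurePreserving.ae hb.eqv
  filter_upwards [h1] with ω h n
  induction n with
  | zero => simp [walk_zero, hb.act_one]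
  | succ n ih =>
    rw [ih, h n, walk_succ, hb.act_mul, Function.iterate_succ_apply', shiftΩ_iterate]
    simp

lemma bd_nuX_prob (hP : IsRWMeasure p P) (hb : BdAct P act b) (x : G) :
    IsProbabilityMeasure (nuX P act b x) := by
  have := hP.1
  have := Measure.isProbabilityMeasure_map (μ := P) hb.meas_b.aemeasurable
  exact Measure.isProbabilityMeasure_map (hb.meas_act x).aemeasurable

lemma bd_nu_prob (hP : IsRWMeasure p P) (hb : BdAct P act b) :
    IsProbabilityMeasure (P.map b) := by
  have := hP.1
  exact Measure.isProbabilityMeasure_map (μ := P) hb.meas_b.aemeasurable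

lemma bd_walk (hp : IsProb p) (hP : IsRWMeasure p P) (hb : BdAct P act b) (n : ℕ) (x : G)
    {E : Set Y} (hE : MeasurableSet E) :
    P {ω | walk ω n = x ∧ b ω ∈ E} = piN p n x * nuX P act b x E := by
  have hB : MeasurableSet {ω | act x (b ω) ∈ E} :=
    ms_mem ((hb.meas_act x).comp hb.meas_b) hE
  have h := rw_walk_shift hp hP n x hB
  rw [nuX, Measure.map_apply (hb.meas_act x) hE,
    Measure.map_apply hb.meas_b (hb.meas_act x hE)]
  have e : b ⁻¹' (act x ⁻¹' E) = {ω | act x (b ω) ∈ E} := by ext; simp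
  rw [e, ← h]
  apply measure_congr
  filter_upwards [bd_eqv_n hp hP hb] with ω hω
  have := hω n
  simp only [eq_iff_iff]
  change (walk ω n = x ∧ b ω ∈ E) ↔ (walk ω n = x ∧ act x (b (shiftΩ^[n] ω)) ∈ E)
  constructor
  · rintro ⟨rfl, h2⟩; exact ⟨rfl, this ▸ h2⟩
  · rintro ⟨rfl, h2⟩; exact ⟨rfl, this ▸ h2⟩

lemma bd_restrict (hp : IsProb p) (hP : IsRWMeasure p P) (hb : BdAct P act b) (n : ℕ) (x : G) :
    (P.restrict {ω | walk ω n = x}).map b = piN p n x • nuX P act b x := by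
  ext E hE
  rw [Measure.map_apply hb.meas_b hE, Measure.restrict_apply (hb.meas_b hE),
    Measure.smul_apply, smul_eq_mul, ← bd_walk hp hP hb n x hE]
  congr 1; ext ω; simp [and_comm]

lemma bd_le (hp : IsProb p) (hP : IsRWMeasure p P) (hb : BdAct P act b) (n : ℕ) (x : G) :
    piN p n x • nuX P act b x ≤ P.map b := by
  rw [← bd_restrict hp hP hb n x]
  exact Measure.map_mono Measure.restrict_le_self hb.meas_b

lemma bd_ac (hp : IsProb p) (hP : IsRWMeasure p P) (hb : BdAct P act b) {n : ℕ} {x : G}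
    (hx : piN p n x ≠ 0) : nuX P act b x ≪ P.map b := by
  have h1 : nuX P act b x ≪ piN p n x • nuX P act b x :=
    Measure.AbsolutelyContinuous.rfl.smul_right hx
  exact h1.trans (Measure.absolutelyContinuous_of_le (bd_le hp hP hb n x))

lemma bd_D_le (hp : IsProb p) (hP : IsRWMeasure p P) (hb : BdAct P act b) (n : ℕ) (x : G) :
    ∀ᵐ y ∂(P.map b), piN p n x * DX P act b x y ≤ 1 := by
  have := bd_nuX_prob hP hb x
  have := bd_nu_prob hP hb
  have h1 := Measure.rnDeriv_le_one_of_le (bd_le hp hP hb n x)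
  have h2 := Measure.rnDeriv_smul_left_of_ne_top (nuX P act b x) (P.map b)
    (ne_top_of_isProb (piN_isProb hp hP n) x)
  filter_upwards [h1, h2] with y h1 h2
  rw [h2] at h1
  simpa [DX] using h1

lemma bd_split (n : ℕ) {f : (ℕ → G) → ℝ≥0∞} :
    ∫⁻ ω, f ω ∂P = ∑' x, ∫⁻ ω in {ω | walk ω n = x}, f ω ∂P := by
  rw [← lintegral_iUnion (fun x => ms_eq (measurable_walk n) x)]
  · have : (⋃ x : G, {ω : ℕ → G | walk ω n = x}) = univ := by
      ext ω; simp
    rw [this, Measure.restrict_univ]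
  · intro x y hxy
    apply Set.disjoint_left.2
    intro ω h1 h2
    simp at h1 h2
    exact hxy (h1.symm.trans h2)

lemma bd_lint (hp : IsProb p) (hP : IsRWMeasure p P) (hb : BdAct P act b) (n : ℕ)
    {F : G → Y → ℝ≥0∞} (hF : ∀ x, Measurable (F x)) :
    ∫⁻ ω, F (walk ω n) (b ω) ∂P = ∑' x, piN p n x * ∫⁻ y, F x y ∂(nuX P act b x) := by
  rw [bd_split n]
  congr 1; ext x
  have : ∫⁻ ω in {ω | walk ω n = x}, F (walk ω n) (b ω) ∂P =
      ∫⁻ ω in {ω | walk ω n = x}, F x (b ω) ∂P := by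
    apply setLIntegral_congr_fun (ms_eq (measurable_walk n) x)
    intro ω hω
    simp at hω
    simp [hω]
  rw [this, ← lintegral_map (hF x) hb.meas_b, bd_restrict hp hP hb n x, lintegral_smul_measure,
    smul_eq_mul]

lemma bd_ae (hp : IsProb p) (hP : IsRWMeasure p P) (hb : BdAct P act b) (n : ℕ)
    {Q : G → Y → Prop}
    (h : ∀ x, piN p n x ≠ 0 → ∀ᵐ y ∂(nuX P act b x), Q x y) :
    ∀ᵐ ω ∂P, Q (walk ω n) (b ω) := by
  have h1 : ∀ x, ∀ᵐ ω ∂P, walk ω n = x → Q x (b ω) := by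
    intro x
    by_cases hx : piN p n x = 0
    · have := bd_walk hp hP hb n x MeasurableSet.univ
      rw [hx, zero_mul] at this
      rw [ae_iff]
      refine measure_mono_null ?_ this
      intro ω hω
      simp only [mem_ofPred_eq] at hω ⊢
      push Not at hω
      exact ⟨hω.1, mem_univ _⟩
    · have h2 := h x hx
      rw [ae_iff] at h2
      obtain ⟨E, hE1, hE2, hE3⟩ := exists_measurable_superset_of_null h2
      have := bd_walk hp hP hb n x hE2
      rw [hE3, mul_zero] at this
      rw [ae_iff]
      refine measure_mono_null ?_ this
      intro ω hω
      simp only [mem_ofPred_eq] at hω ⊢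
      push Not at hω
      exact ⟨hω.1, hE1 hω.2⟩
  filter_upwards [ae_all_iff.2 h1] with ω hω using hω _ rfl

lemma bd_piN_ne (hp : IsProb p) (hP : IsRWMeasure p P) (n : ℕ) :
    ∀ᵐ ω ∂P, piN p n (walk ω n) ≠ 0 := by
  have h1 : ∀ x, ∀ᵐ ω ∂P, walk ω n = x → piN p n x ≠ 0 := by
    intro x
    by_cases hx : piN p n x = 0
    · have := rw_walk hp hP n x
      rw [hx] at this
      rw [ae_iff]
      refine measure_mono_null ?_ this
      intro ω hω
      simp only [mem_ofPred_eq] at hω ⊢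
      push Not at hω
      exact hω.1
    · simp [hx]
  filter_upwards [ae_all_iff.2 h1] with ω hω using hω _ rfl

lemma bd_cocycle (hP : IsRWMeasure p P) (hb : BdAct P act b) {g x : G}
    (hg : nuX P act b g ≪ P.map b) (hx : nuX P act b x ≪ P.map b) :
    ∀ᵐ y ∂(P.map b), DX P act b (g * x) y = DX P act b g y * DX P act b x (act g⁻¹ y) := by
  have := bd_nuX_prob hP hb g
  have := bd_nuX_prob hP hb x
  have := bd_nu_prob hP hb
  have hm : Measurable fun y => DX P act b x (act g⁻¹ y) :=
    (measurable_DX x).comp (hb.meas_act _)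
  have e : nuX P act b (g * x) =
      (P.map b).withDensity (fun y => DX P act b g y * DX P act b x (act g⁻¹ y)) := by
    have h1 : (P.map b).withDensity (fun y => DX P act b g y * DX P act b x (act g⁻¹ y)) =
      (nuX P act b g).withDensity (fun y => DX P act b x (act g⁻¹ y)) := by
      have h2 := withDensity_mul (P.map b) (measurable_DX (P := P) (act := act) (b := b) g) hm
      have h3 := Measure.withDensity_rnDeriv_eq _ _ hg
      change (P.map b).withDensity (DX P act b g) = _ at h3
      rw [h3] at h2
      exact h2
    rw [h1]
    ext E hE
    have hE' : MeasurableSet (act g ⁻¹' E) := hb.meas_act g hE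
    rw [withDensity_apply _ hE]
    have h2 : nuX P act b (g * x) E = nuX P act b x (act g ⁻¹' E) := by
      rw [nuX, nuX, Measure.map_apply (hb.meas_act _) hE, Measure.map_apply (hb.meas_act _) hE']
      congr 1; ext y; simp [hb.act_mul]
    have h3 := Measure.withDensity_rnDeriv_eq _ _ hx
    rw [h2, ← h3, withDensity_apply _ hE']
    change _ = ∫⁻ y in E, _ ∂((P.map b).map (act g))
    rw [setLIntegral_map hE hm (hb.meas_act g)]
    simp only [← hb.act_mul, inv_mul_cancel, hb.act_one]
    rfl
  have h4 := Measure.rnDeriv_withDensity (P.map b) ((measurable_DX (P := P) (act := act) (b := b) g).mul hm)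
  filter_upwards [h4] with y hy
  rw [DX, e]
  exact hy

lemma bd_prod (hp : IsProb p) (hP : IsRWMeasure p P) (hb : BdAct P act b) :
    ∀ᵐ ω ∂P, ∀ n, DX P act b (walk ω (n+1)) (b ω) =
      DX P act b (ω 0) (b ω) * DX P act b (walk (shiftΩ ω) n) (b (shiftΩ ω)) := by
  rw [ae_all_iff]
  intro n
  have h1 : ∀ᵐ ω ∂P, ∀ g x : G, p g ≠ 0 → piN p n x ≠ 0 →
      DX P act b (g * x) (b ω) = DX P act b g (b ω) * DX P act b x (act g⁻¹ (b ω)) := by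
    rw [ae_all_iff]; intro g
    rw [ae_all_iff]; intro x
    by_cases hg : p g = 0
    · simp [hg]
    by_cases hx : piN p n x = 0
    · simp [hx]
    have hg' : piN p 1 g ≠ 0 := by rwa [piN_one]
    have := bd_cocycle hP hb (bd_ac hp hP hb hg') (bd_ac hp hP hb hx)
    filter_upwards [ae_of_ae_map hb.meas_b.aemeasurable this] with ω hω _ _ using hω
  have h2 := bd_piN_ne hp hP 1
  have h3 := (mp_shift hp hP).quasiMeasurePreserving.ae (bd_piN_ne hp hP n)
  filter_upwards [h1, h2, h3, hb.eqv] with ω h1 h2 h3 h4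
  rw [piN_one, walk_succ', walk_zero, mul_one] at h2
  rw [walk_succ', h1 _ _ h2 h3]
  congr 2
  conv_lhs => rw [h4]
  rw [← hb.act_mul, inv_mul_cancel, hb.act_one]

lemma bd_prod_n (hp : IsProb p) (hP : IsRWMeasure p P) (hb : BdAct P act b) :
    ∀ᵐ ω ∂P, ∀ n, DX P act b (walk ω n) (b ω) =
      ∏ i ∈ Finset.range n, DX P act b (ω i) (b (shiftΩ^[i] ω)) := by
  have h0 : ∀ᵐ ω ∂P, DX P act b 1 (b ω) = 1 := by
    have := bd_nu_prob hP hb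
    have e : nuX P act b 1 = P.map b := by
      have : act 1 = id := funext hb.act_one
      rw [nuX, this, Measure.map_id]
    have := Measure.rnDeriv_self (P.map b)
    filter_upwards [ae_of_ae_map hb.meas_b.aemeasurable this] with ω hω
    rw [DX, e]; exact hω
  have h1 : ∀ᵐ ω ∂P, ∀ i, DX P act b 1 (b (shiftΩ^[i] ω)) = 1 ∧
      ∀ n, DX P act b (walk (shiftΩ^[i] ω) (n+1)) (b (shiftΩ^[i] ω)) =
      DX P act b ((shiftΩ^[i] ω) 0) (b (shiftΩ^[i] ω)) *
        DX P act b (walk (shiftΩ (shiftΩ^[i] ω)) n) (b (shiftΩ (shiftΩ^[i] ω))) := by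
    rw [ae_all_iff]; intro i
    exact ((mp_shift hp hP).iterate i).quasiMeasurePreserving.ae (h0.and (bd_prod hp hP hb))
  filter_upwards [h1] with ω h
  have key : ∀ n i, DX P act b (walk (shiftΩ^[i] ω) n) (b (shiftΩ^[i] ω)) =
      ∏ j ∈ Finset.range n, DX P act b (ω (i + j)) (b (shiftΩ^[i+j] ω)) := by
    intro n
    induction n with
    | zero => intro i; simp [walk_zero, (h i).1]
    | succ n ih =>
      intro i
      rw [(h i).2 n, Finset.prod_range_succ']
      have := ih (i+1)
      rw [Function.iterate_succ_apply'] at this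
      rw [this, mul_comm]
      simp only [shiftΩ_iterate, add_zero, zero_add]
      congr 1
      apply Finset.prod_congr rfl
      intro j _
      rw [show i + 1 + j = i + (j+1) by ring]
  intro n
  simpa using key n 0
end BdA

set_option linter.unusedSectionVars false

section BdB
variable {G : Type*} [Group G] [Countable G] [MeasurableSpace G] [DiscreteMeasurableSpace G]
variable {Y : Type*} [MeasurableSpace Y]
variable {p : G → ℝ≥0∞} {P : Measure (ℕ → G)} {act : G → Y → Y} {b : (ℕ → G) → Y}

lemma bd_bounds (hp : IsProb p) (hP : IsRWMeasure p P) (hb : BdAct P act b) {x : G}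
    (hx : p x ≠ 0) : ∀ᵐ y ∂(nuX P act b x), 0 < (DX P act b x y).toReal ∧
      DX P act b x y ≠ ∞ ∧ Real.log (DX P act b x y).toReal ≤ -Real.log (p x).toReal := by
  have := bd_nuX_prob hP hb x
  have := bd_nu_prob hP hb
  have hx' : piN p 1 x ≠ 0 := by rwa [piN_one]
  have hac := bd_ac hp hP hb hx'
  have h1 := bd_D_le hp hP hb 1 x
  have h2 := Measure.rnDeriv_pos hac
  rw [piN_one] at h1
  filter_upwards [hac.ae_le h1, h2] with y h1 h2
  change 0 < DX P act b x y at h2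
  have hpt := ne_top_of_isProb hp x
  have ht : DX P act b x y ≠ ∞ := by
    intro h; rw [h, ENNReal.mul_top hx] at h1; simp at h1
  have hq : 0 < (p x).toReal := ENNReal.toReal_pos hx hpt
  have hD : 0 < (DX P act b x y).toReal := ENNReal.toReal_pos h2.ne' ht
  refine ⟨hD, ht, ?_⟩
  have h3 : (p x).toReal * (DX P act b x y).toReal ≤ 1 := by
    rw [← ENNReal.toReal_mul]
    simpa using ENNReal.toReal_mono ENNReal.one_ne_top h1
  have h4 := Real.log_nonpos (by positivity) h3
  rw [Real.log_mul hq.ne' hD.ne'] at h4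
  linarith

lemma neg_log_p_nonneg (hp : IsProb p) (x : G) : 0 ≤ -Real.log (p x).toReal := by
  have : (p x).toReal ≤ 1 := by
    simpa using ENNReal.toReal_mono ENNReal.one_ne_top (le_one_of_isProb hp x)
  have := Real.log_nonpos ENNReal.toReal_nonneg this
  linarith

lemma bd_abs (hp : IsProb p) (hP : IsRWMeasure p P) (hb : BdAct P act b) {x : G}
    (hx : p x ≠ 0) : ∫⁻ y, ENNReal.ofReal |Real.log (DX P act b x y).toReal| ∂(nuX P act b x) ≤
      ENNReal.ofReal (-Real.log (p x).toReal + 1) := by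
  have := bd_nuX_prob hP hb x
  have := bd_nu_prob hP hb
  have hx' : piN p 1 x ≠ 0 := by rwa [piN_one]
  have hac := bd_ac hp hP hb hx'
  have hn := neg_log_p_nonneg hp x
  have h1 : ∫⁻ y, ENNReal.ofReal |Real.log (DX P act b x y).toReal| ∂(nuX P act b x) ≤
      ∫⁻ y, (ENNReal.ofReal (-Real.log (p x).toReal) + (DX P act b x y)⁻¹) ∂(nuX P act b x) := by
    apply lintegral_mono_ae
    filter_upwards [bd_bounds hp hP hb hx] with y hy
    obtain ⟨h1, h2, h3⟩ := hy
    have e : (DX P act b x y)⁻¹ = ENNReal.ofReal ((DX P act b x y).toReal⁻¹) := by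
      rw [ENNReal.ofReal_inv_of_pos h1, ENNReal.ofReal_toReal h2]
    rw [e, ← ENNReal.ofReal_add hn (by positivity)]
    apply ENNReal.ofReal_le_ofReal
    have h4 := Real.log_le_sub_one_of_pos (x := (DX P act b x y).toReal⁻¹) (by positivity)
    rw [Real.log_inv] at h4
    have : 0 < (DX P act b x y).toReal⁻¹ := by positivity
    rw [abs_le]; constructor <;> linarith
  refine h1.trans ?_
  rw [lintegral_add_left measurable_const, ENNReal.ofReal_add hn zero_le_one]
  refine add_le_add (by simp) ?_
  have hm : AEMeasurable (fun y => (DX P act b x y)⁻¹) (P.map b) := (measurable_DX x).inv.aemeasurable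
  rw [← lintegral_rnDeriv_mul hac hm]
  calc _ ≤ ∫⁻ y, 1 ∂(P.map b) := lintegral_mono fun y => ENNReal.mul_inv_le_one _
    _ ≤ _ := by simp

lemma bd_integrable (hp : IsProb p) (hP : IsRWMeasure p P) (hb : BdAct P act b) {x : G}
    (hx : p x ≠ 0) : Integrable (fun y => Real.log (DX P act b x y).toReal) (nuX P act b x) := by
  refine ⟨(Real.measurable_log.comp (measurable_DX x).ennreal_toReal).aestronglyMeasurable, ?_⟩
  rw [hasFiniteIntegral_iff_norm]
  exact (bd_abs hp hP hb hx).trans_lt ENNReal.ofReal_lt_top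

/-- The relative entropy of a translate. -/
def IX (P : Measure (ℕ → G)) (act : G → Y → Y) (b : (ℕ → G) → Y) (x : G) : ℝ :=
  ∫ y, Real.log (DX P act b x y).toReal ∂(nuX P act b x)

lemma bd_IX_abs (hp : IsProb p) (hP : IsRWMeasure p P) (hb : BdAct P act b) {x : G}
    (hx : p x ≠ 0) : |IX P act b x| ≤ -Real.log (p x).toReal + 1 := by
  have hn := neg_log_p_nonneg hp x
  have h1 : ‖IX P act b x‖ ≤ _ := norm_integral_le_lintegral_norm _
  refine h1.trans ?_
  have := ENNReal.toReal_mono ENNReal.ofReal_ne_top (bd_abs hp hP hb hx)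
  rwa [ENNReal.toReal_ofReal (by linarith)] at this

lemma bd_IX_le (hp : IsProb p) (hP : IsRWMeasure p P) (hb : BdAct P act b) {x : G}
    (hx : p x ≠ 0) : IX P act b x ≤ -Real.log (p x).toReal := by
  have := bd_nuX_prob hP hb x
  have h := integral_mono_ae (bd_integrable hp hP hb hx) (integrable_const (-Real.log (p x).toReal))
    (by filter_upwards [bd_bounds hp hP hb hx] with y hy using hy.2.2)
  simpa [IX] using h

/-- The nonnegative information function. -/
def psiX (p : G → ℝ≥0∞) (P : Measure (ℕ → G)) (act : G → Y → Y) (b : (ℕ → G) → Y) (x : G) (y : Y) : ℝ :=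
  -Real.log (p x).toReal - Real.log (DX P act b x y).toReal

lemma bd_psi_lint (hp : IsProb p) (hP : IsRWMeasure p P) (hb : BdAct P act b) {x : G}
    (hx : p x ≠ 0) : ∫⁻ y, ENNReal.ofReal (psiX p P act b x y) ∂(nuX P act b x) =
      ENNReal.ofReal (-Real.log (p x).toReal - IX P act b x) := by
  have := bd_nuX_prob hP hb x
  have hi := bd_integrable hp hP hb hx
  rw [← ofReal_integral_eq_lintegral_ofReal]
  · congr 1
    simp only [psiX]
    rw [integral_sub (integrable_const _) hi]
    simp [IX]
  · exact (integrable_const _).sub hi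
  · filter_upwards [bd_bounds hp hP hb hx] with y hy
    have := hy.2.2
    simp only [psiX, Pi.zero_apply]; linarith

lemma summable_negMulLog (hp : IsProb p)
    (hfin : ∑' x, ENNReal.ofReal (Real.negMulLog (p x).toReal) ≠ ∞) :
    Summable fun x => Real.negMulLog (p x).toReal := by
  have := ENNReal.summable_toReal hfin
  refine this.congr fun x => ?_
  exact ENNReal.toReal_ofReal (negMulLog_nonneg' (le_one_of_isProb hp x))

lemma summable_p (hp : IsProb p) : Summable fun x => (p x).toReal := by
  apply ENNReal.summable_toReal
  rw [show ∑' x, p x = 1 from hp]; simp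

lemma bd_summable (hp : IsProb p) (hP : IsRWMeasure p P) (hb : BdAct P act b)
    (hfin : ∑' x, ENNReal.ofReal (Real.negMulLog (p x).toReal) ≠ ∞) :
    Summable fun x => (p x).toReal * IX P act b x := by
  refine Summable.of_norm_bounded ((summable_negMulLog hp hfin).add (summable_p hp)) fun x => ?_
  by_cases hx : p x = 0
  · simp [hx]
  rw [norm_mul, Real.norm_of_nonneg ENNReal.toReal_nonneg, Real.norm_eq_abs, Real.negMulLog]
  have := mul_le_mul_of_nonneg_left (bd_IX_abs hp hP hb hx) (ENNReal.toReal_nonneg (a := p x))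
  linarith

lemma bd_psi_total (hp : IsProb p) (hP : IsRWMeasure p P) (hb : BdAct P act b)
    (hfin : ∑' x, ENNReal.ofReal (Real.negMulLog (p x).toReal) ≠ ∞) :
    ∫⁻ ω, ENNReal.ofReal (psiX p P act b (ω 0) (b ω)) ∂P =
      ENNReal.ofReal (∑' x, Real.negMulLog (p x).toReal - ∑' x, (p x).toReal * IX P act b x) := by
  have hm : ∀ x, Measurable fun y => ENNReal.ofReal (psiX p P act b x y) := fun x =>
    ((measurable_const).sub
      (Real.measurable_log.comp (measurable_DX x).ennreal_toReal)).ennreal_ofReal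
  have h := bd_lint hp hP hb 1 hm
  have e : ∀ ω : ℕ → G, walk ω 1 = ω 0 := fun ω => by simp [walk]
  simp only [e, piN_one] at h
  rw [h, ← Summable.tsum_sub (summable_negMulLog hp hfin) (bd_summable hp hP hb hfin),
    ENNReal.ofReal_tsum_of_nonneg]
  · congr 1; ext x
    by_cases hx : p x = 0
    · simp [hx]
    rw [bd_psi_lint hp hP hb hx]
    conv_lhs => rw [← ENNReal.ofReal_toReal (ne_top_of_isProb hp x)]
    rw [← ENNReal.ofReal_mul ENNReal.toReal_nonneg]
    congr 1
    rw [Real.negMulLog, ENNReal.toReal_ofReal ENNReal.toReal_nonneg]; ring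
  · intro x
    by_cases hx : p x = 0
    · simp [hx]
    have := mul_le_mul_of_nonneg_left (bd_IX_le hp hP hb hx) (ENNReal.toReal_nonneg (a := p x))
    rw [Real.negMulLog]; linarith
  · exact (summable_negMulLog hp hfin).sub (bd_summable hp hP hb hfin)

lemma measurable_psi (hb : BdAct P act b) (i : ℕ) : Measurable fun ω : ℕ → G =>
    ENNReal.ofReal (psiX p P act b (ω i) (b (shiftΩ^[i] ω))) := by
  have hm : ∀ x, Measurable fun y => ENNReal.ofReal (psiX p P act b x y) := fun x =>
    ((measurable_const).sub
      (Real.measurable_log.comp (measurable_DX x).ennreal_toReal)).ennreal_ofReal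
  have h2 : Measurable fun q : G × Y => ENNReal.ofReal (psiX p P act b q.1 q.2) :=
    measurable_from_prod_countable_right hm
  exact h2.comp ((measurable_coord i).prodMk (hb.meas_b.comp (measurable_shiftΩ.iterate i)))

lemma bd_upper (hp : IsProb p) (hP : IsRWMeasure p P) (hb : BdAct P act b)
    (hfin : ∑' x, ENNReal.ofReal (Real.negMulLog (p x).toReal) ≠ ∞) {c : ℝ}
    (hc : ∑' x, (p x).toReal * IX P act b x < c) :
    ∀ᵐ ω ∂P, ∀ᶠ n : ℕ in atTop, DX P act b (walk ω n) (b ω) ≤ ENNReal.ofReal (Real.exp (c * n)) := by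
  set h' := ∑' x, (p x).toReal * IX P act b x with hh'
  set H := ∑' x, Real.negMulLog (p x).toReal with hH
  have hm := measurable_psi (p := p) hb
  let F : ℕ → (ℕ → G) → ℝ≥0∞ := fun n ω =>
    ∑ i ∈ Finset.range n, ENNReal.ofReal (psiX p P act b (ω i) (b (shiftΩ^[i] ω)))
  have hF : ∀ n, Measurable (F n) := fun n => Finset.measurable_sum _ fun i _ => hm i
  have hF0 : ∀ ω, F 0 ω = 0 := fun ω => by simp [F]
  have hsub : ∀ ω n m, F (n + m) ω ≤ F n ω + F m (shiftΩ^[n] ω) := by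
    intro ω n m
    simp only [F]
    rw [Finset.sum_range_add]
    refine add_le_add le_rfl (le_of_eq ?_)
    apply Finset.sum_congr rfl
    intro i _
    rw [← Function.iterate_add_apply, add_comm n i]
    have e : shiftΩ^[n] ω i = ω (i + n) := by rw [shiftΩ_iterate]
    rw [e]
  have hi : ∀ i, ∫⁻ ω, ENNReal.ofReal (psiX p P act b (ω i) (b (shiftΩ^[i] ω))) ∂P =
      ENNReal.ofReal (H - h') := by
    intro i
    rw [← bd_psi_total hp hP hb hfin]
    have h := ((mp_shift hp hP).iterate i).lintegral_comp (hm 0)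
    have e : ∀ ω : ℕ → G, shiftΩ^[i] ω 0 = ω i := fun ω => by rw [shiftΩ_iterate]; simp
    simpa [e] using h
  have hF' : ∀ n, ∫⁻ ω, F n ω ∂P = n * ENNReal.ofReal (H - h') := by
    intro n
    simp only [F]
    rw [lintegral_finsetSum _ (fun i _ => hm i)]
    simp [hi]
  have hK := kingman_lower hp hP hF hF0 hsub (L := H - h') (c := H - h' - (c - h')/2)
    (by rw [hF' 1]; simp) (by linarith)
    (fun n => by rw [hF' n, mul_comm, ENNReal.ofReal_mul (by positivity)]; simp)
  have hlogn := neg_log_p_nonneg hp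
  have hsm : ∑' x, p x * ENNReal.ofReal (-Real.log (p x).toReal) =
      ∑' x, ENNReal.ofReal (Real.negMulLog (p x).toReal) := by
    congr 1; ext x
    conv_lhs => rw [← ENNReal.ofReal_toReal (ne_top_of_isProb hp x)]
    rw [ENNReal.toReal_ofReal ENNReal.toReal_nonneg, ← ENNReal.ofReal_mul ENNReal.toReal_nonneg,
      Real.negMulLog]
    ring_nf
  have hint := integrable_stepM (q := p) hlogn (by rw [hsm]; exact hfin)
  have hS := rw_slln hp hP _ hint
  have hHH : ∫ x, -Real.log (p x).toReal ∂(stepM p) = H := by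
    rw [integral_stepM hlogn, hsm, ENNReal.tsum_toReal_eq (fun x => by simp)]
    apply tsum_congr
    intro x
    exact ENNReal.toReal_ofReal (negMulLog_nonneg' (le_one_of_isProb hp x))
  have hbd : ∀ᵐ ω ∂P, ∀ i, 0 < (DX P act b (ω i) (b (shiftΩ^[i] ω))).toReal ∧
      DX P act b (ω i) (b (shiftΩ^[i] ω)) ≠ ∞ ∧
      Real.log (DX P act b (ω i) (b (shiftΩ^[i] ω))).toReal ≤ -Real.log (p (ω i)).toReal := by
    rw [ae_all_iff]; intro i
    have h0 := bd_ae hp hP hb 1 (Q := fun x y => 0 < (DX P act b x y).toReal ∧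
      DX P act b x y ≠ ∞ ∧ Real.log (DX P act b x y).toReal ≤ -Real.log (p x).toReal)
      (fun x hx => bd_bounds hp hP hb (by rwa [piN_one] at hx))
    have := ((mp_shift hp hP).iterate i).quasiMeasurePreserving.ae h0
    filter_upwards [this] with ω hω
    have e : walk (shiftΩ^[i] ω) 1 = ω i := by simp [walk, shiftΩ_iterate]
    rwa [e] at hω
  filter_upwards [hK, hS, hbd, bd_prod_n hp hP hb] with ω h1 h2 h3 h4
  have h2' : ∀ᶠ n : ℕ in atTop, (∑ i ∈ Finset.range n, -Real.log (p (ω i)).toReal) / n < H + (c-h')/2 := by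
    rw [hHH] at h2
    exact h2.eventually_lt_const (by linarith)
  filter_upwards [h1, h2', eventually_gt_atTop 0] with n h1 h2 hn
  have hn' : (0:ℝ) < n := by exact_mod_cast hn
  rw [div_lt_iff₀ hn'] at h2
  rw [h4 n]
  have e1 : ∀ i ∈ Finset.range n, DX P act b (ω i) (b (shiftΩ^[i] ω)) =
      ENNReal.ofReal (Real.exp (Real.log (DX P act b (ω i) (b (shiftΩ^[i] ω))).toReal)) := by
    intro i _
    rw [Real.exp_log (h3 i).1, ENNReal.ofReal_toReal (h3 i).2.1]
  rw [Finset.prod_congr rfl e1, ← ENNReal.ofReal_prod_of_nonneg (fun i _ => (Real.exp_pos _).le),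
    ← Real.exp_sum]
  apply ENNReal.ofReal_le_ofReal
  apply Real.exp_le_exp.2
  have hps : ∀ i ∈ Finset.range n, 0 ≤ psiX p P act b (ω i) (b (shiftΩ^[i] ω)) := by
    intro i _; have := (h3 i).2.2; simp only [psiX]; linarith
  simp only [F] at h1
  rw [← ENNReal.ofReal_sum_of_nonneg hps, ENNReal.ofReal_le_ofReal_iff (Finset.sum_nonneg hps)] at h1
  simp only [psiX, Finset.sum_sub_distrib] at h1
  nlinarith [h1, h2]

end BdB

set_option linter.unusedSectionVars false

lemma tsum_marginal {G A : Type*} {p : G → ℝ≥0∞} (hp : ∀ x, p x ≠ ∞) (π : G → A)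
    (J : A → ℝ) (hs : Summable fun x => (p x).toReal * J (π x)) :
    ∑' g, (marginalStar p π g).toReal * J g = ∑' x, (p x).toReal * J (π x) := by
  let f : G → A → ℝ := fun x g => if π x = g then (p x).toReal * J g else 0
  have hsf : Summable (Function.uncurry f) := by
    have hi : Function.Injective (fun x : G => (x, π x)) := fun x y h => (Prod.mk.inj h).1
    rw [← hi.summable_iff]
    · refine hs.congr fun x => ?_
      simp [f, Function.uncurry]
    · rintro ⟨x, g⟩ h
      simp only [mem_range, Prod.mk.injEq, not_exists, not_and] at h
      have := h x rfl
      simp [f, Function.uncurry, this]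
  have h := hsf.tsum_comm
  have e1 : ∀ g, ∑' x, f x g = (marginalStar p π g).toReal * J g := by
    intro g
    rw [marginalStar, ENNReal.tsum_toReal_eq (fun x => by split_ifs <;> simp [hp]), ← tsum_mul_right]
    apply tsum_congr
    intro x
    simp only [f]
    split_ifs <;> simp
  have e2 : ∀ x, ∑' g, f x g = (p x).toReal * J (π x) := by
    intro x
    rw [tsum_eq_single (π x)]
    · simp [f]
    · intro g hg; simp [f, hg.symm]
  simp only [e1, e2] at h
  exact h

lemma mkB_shift {X : Type*} [MetricSpace X] {δ : ℝ} (hδ : IsHyperbolicWith X δ) (o : X)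
    (u v : DivSeq X o) (h : ∀ n, v.1 n = u.1 (n+1)) : mkB o u = mkB o v := by
  rw [mkB_eq_iff hδ o u v]
  have h1 := u.2
  unfold IsDivergent at h1
  have h2 : Tendsto (fun pr : ℕ × ℕ => (pr.1, pr.2 + 1)) atTop atTop := by
    rw [← prod_atTop_atTop_eq]
    exact (tendsto_fst).prodMk ((tendsto_add_atTop_nat 1).comp tendsto_snd)
  have := h1.comp h2
  simpa [bndRel, Function.comp_def, h] using this

section Conc
variable {X Xs : Type*} [MetricSpace X] [MetricSpace Xs]
    {Γb : Subgroup ((X ≃ᵢ X) × (Xs ≃ᵢ Xs))}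

lemma proj1_mul (x y : Γb) (t : X) : proj1 (x * y) t = proj1 x (proj1 y t) := rfl
lemma proj2_mul (x y : Γb) (t : Xs) : proj2 (x * y) t = proj2 x (proj2 y t) := rfl
lemma proj2_mul' (x y : Γb) : proj2 (x * y) = proj2 x * proj2 y := rfl
lemma proj2_one' : proj2 (1 : Γb) = 1 := rfl
lemma proj1_one (t : X) : proj1 (1 : Γb) t = t := rfl
lemma proj2_one (t : Xs) : proj2 (1 : Γb) t = t := rfl

lemma isLen1 (o : X) : IsLen fun γ : Γb => dist o (proj1 γ o) where
  nonneg _ := dist_nonneg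
  one := by simp [proj1_one]
  mul x y := by
    rw [proj1_mul]
    have h := dist_triangle o (proj1 x o) (proj1 x (proj1 y o))
    rwa [(proj1 x).dist_eq] at h

lemma isLen2 (os : Xs) : IsLen fun γ : Γb => dist os (proj2 γ os) where
  nonneg _ := dist_nonneg
  one := by simp [proj2_one]
  mul x y := by
    rw [proj2_mul]
    have h := dist_triangle os (proj2 x os) (proj2 x (proj2 y os))
    rwa [(proj2 x).dist_eq] at h

lemma disp_eq (o : X) (os : Xs) (γ : Γb) :
    disp o os γ = max (dist o (proj1 γ o)) (dist os (proj2 γ os)) := by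
  simp [disp, Prod.dist_eq]

variable [Countable Γb] [MeasurableSpace Γb] [DiscreteMeasurableSpace Γb]

lemma bdAct_conc {δ : ℝ} (hδ : IsHyperbolicWith Xs δ) (os : Xs) {p : Γb → ℝ≥0∞} (hp : IsProb p)
    {P : Measure (ℕ → Γb)} (hP : IsRWMeasure p P) (hbm : ∀ g : Xs ≃ᵢ Xs, Measurable (bAct os g))
    {b : (ℕ → Γb) → Boundary Xs os} (hbmeas : Measurable b)
    (hb : ∀ᵐ ω ∂P, ∃ h : IsDivergent os (fun n => proj2 (walk ω n) os), b ω = mkB os ⟨_, h⟩) :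
    BdAct P (fun γ : Γb => bAct os (proj2 γ)) b where
  meas_act g := hbm _
  meas_b := hbmeas
  act_mul x y t := by rw [proj2_mul', bAct_mul]
  act_one t := by rw [proj2_one', bAct_one]
  eqv := by
    have h2 := (mp_shift hp hP).quasiMeasurePreserving.ae hb
    filter_upwards [hb, h2] with ω h1 h2
    obtain ⟨h1, e1⟩ := h1
    obtain ⟨h2, e2⟩ := h2
    rw [e1, e2]
    change _ = mkB os _
    apply mkB_shift hδ
    intro n
    simp only
    rw [walk_succ', proj2_mul]

end Conc

set_option linter.unusedSectionVars false

section Dis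
variable {A B : Type*} [MeasurableSpace A] [MeasurableSpace B] {ν : Measure A} [IsProbabilityMeasure ν]
  {f : A → B} {νB : Measure B} {cond : B → Measure A}

lemma dis_prob (hf : Measurable f) (hd : IsDisintegration ν f νB cond) : IsProbabilityMeasure νB := by
  rw [hd.1]; exact Measure.isProbabilityMeasure_map hf.aemeasurable

lemma dis_aemeas (hf : Measurable f) (hd : IsDisintegration ν f νB cond) {s : Set A}
    (hs : MeasurableSet s) : AEMeasurable (fun b => cond b s) νB := by
  have := dis_prob hf hd
  obtain ⟨φ, hφ, hφ1, hφ2⟩ := exists_measurable_le_lintegral_eq (μ := νB) (fun b => cond b s)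
  obtain ⟨φ', hφ', hφ1', hφ2'⟩ := exists_measurable_le_lintegral_eq (μ := νB) (fun b => cond b sᶜ)
  rw [← hd.2.2.2 s hs] at hφ2
  rw [← hd.2.2.2 _ hs.compl] at hφ2'
  have hsum : ∀ᵐ b ∂νB, cond b s + cond b sᶜ = 1 := by
    filter_upwards [hd.2.1] with b hb
    rw [measure_add_measure_compl hs, measure_univ]
  have h1 : ∫⁻ b, (φ b + φ' b) ∂νB = 1 := by
    rw [lintegral_add_left hφ, ← hφ2, ← hφ2', measure_add_measure_compl hs, measure_univ]
  have h2 : (fun b => φ b + φ' b) =ᵐ[νB] fun _ => 1 := by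
    apply ae_eq_of_ae_le_of_lintegral_le
    · filter_upwards [hsum] with b hb
      rw [← hb]; exact add_le_add (hφ1 b) (hφ1' b)
    · rw [h1]; simp
    · exact aemeasurable_const
    · rw [h1]; simp
  refine ⟨φ, hφ, ?_⟩
  filter_upwards [hsum, h2] with b h1 h2
  apply le_antisymm _ (hφ1 b)
  have h3 : φ' b ≠ ∞ := by
    intro h; rw [h] at h2; simp at h2
  have h4 : cond b s + φ' b ≤ φ b + φ' b := by
    rw [h2, ← h1]; exact add_le_add le_rfl (hφ1' b)
  exact (ENNReal.add_le_add_iff_right h3).1 h4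

lemma dis_null (hf : Measurable f) (hd : IsDisintegration ν f νB cond) {Q : A → Prop}
    (h : ∀ᵐ a ∂ν, Q a) : ∀ᵐ b ∂νB, ∀ᵐ a ∂(cond b), Q a := by
  rw [ae_iff] at h
  obtain ⟨E, hE1, hE2, hE3⟩ := exists_measurable_superset_of_null h
  have h1 := hd.2.2.2 E hE2
  rw [hE3, eq_comm, lintegral_eq_zero_iff' (dis_aemeas hf hd hE2)] at h1
  filter_upwards [h1] with b hb
  rw [ae_iff]
  exact measure_mono_null hE1 hb

lemma dis_fiber (hf : Measurable f) (hsing : ∀ b : B, MeasurableSet ({b} : Set B))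
    (hd : IsDisintegration ν f νB cond) : ∀ᵐ b ∂νB, ∀ᵐ a ∂(cond b), f a = b := by
  filter_upwards [hd.2.1, hd.2.2.1] with b h1 h2
  have h3 := (prob_compl_eq_zero_iff (μ := cond b) (hf (hsing b))).2 h2
  rw [ae_iff]
  exact h3

lemma dis_set (hf : Measurable f) (hsing : ∀ b : B, MeasurableSet ({b} : Set B))
    (hd : IsDisintegration ν f νB cond) {s : Set A} (hs : MeasurableSet s) {E : Set B}
    (hE : MeasurableSet E) : ν (s ∩ f ⁻¹' E) = ∫⁻ b in E, cond b s ∂νB := by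
  rw [hd.2.2.2 _ (hs.inter (hf hE)), ← lintegral_indicator hE]
  apply lintegral_congr_ae
  filter_upwards [dis_fiber hf hsing hd] with b hb
  by_cases hbE : b ∈ E
  · rw [indicator_of_mem hbE]
    apply measure_congr
    filter_upwards [hb] with a ha
    apply propext
    change (a ∈ s ∧ f a ∈ E) ↔ a ∈ s
    rw [ha]; tauto
  · rw [indicator_of_notMem hbE]
    rw [ae_iff] at hb
    refine measure_mono_null ?_ hb
    rintro a ⟨_, h2⟩ h3
    have : f a ∈ E := h2
    rw [show f a = b from h3] at this
    exact hbE this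

lemma dis_lint (hf : Measurable f) (hsing : ∀ b : B, MeasurableSet ({b} : Set B))
    (hd : IsDisintegration ν f νB cond) {ρ : A → ℝ≥0∞} (hρ : Measurable ρ) :
    AEMeasurable (fun b => ∫⁻ a, ρ a ∂(cond b)) νB ∧ ∀ E : Set B, MeasurableSet E →
      ∫⁻ a in f ⁻¹' E, ρ a ∂ν = ∫⁻ b in E, ∫⁻ a, ρ a ∂(cond b) ∂νB := by
  refine Measurable.ennreal_induction (motive := fun ρ =>
    AEMeasurable (fun b => ∫⁻ a, ρ a ∂(cond b)) νB ∧ ∀ E : Set B, MeasurableSet E →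
      ∫⁻ a in f ⁻¹' E, ρ a ∂ν = ∫⁻ b in E, ∫⁻ a, ρ a ∂(cond b) ∂νB) ?_ ?_ ?_ hρ
  · intro c s hs
    have h := dis_aemeas hf hd hs
    have e : ∀ b, ∫⁻ a, s.indicator (fun _ => c) a ∂(cond b) = c * cond b s := fun b =>
      lintegral_indicator_const hs c
    simp only [e]
    refine ⟨h.const_mul c, fun E hE => ?_⟩
    rw [lintegral_indicator_const hs, Measure.restrict_apply hs, dis_set hf hsing hd hs hE,
      lintegral_const_mul'' _ h.restrict]
  · intro f1 f2 hdis hm1 hm2 ih1 ih2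
    have e : ∀ b, ∫⁻ a, (f1 + f2) a ∂(cond b) = ∫⁻ a, f1 a ∂(cond b) + ∫⁻ a, f2 a ∂(cond b) :=
      fun b => by simp only [Pi.add_apply]; exact lintegral_add_left hm1 _
    simp only [e]
    refine ⟨ih1.1.add ih2.1, fun E hE => ?_⟩
    rw [lintegral_add_left' ih1.1.restrict, ← ih1.2 E hE, ← ih2.2 E hE]
    simp only [Pi.add_apply]; exact lintegral_add_left hm1 _
  · intro F hm hmono ih
    have e : ∀ b, ∫⁻ a, ⨆ n, F n a ∂(cond b) = ⨆ n, ∫⁻ a, F n a ∂(cond b) :=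
      fun b => lintegral_iSup hm hmono
    simp only [e]
    refine ⟨AEMeasurable.iSup fun n => (ih n).1, fun E hE => ?_⟩
    rw [lintegral_iSup hm hmono, lintegral_iSup' (fun n => (ih n).1.restrict)]
    · congr 1; ext n; exact (ih n).2 E hE
    · exact ae_of_all _ fun b n m hnm => lintegral_mono (hmono hnm)

lemma dis_bound (hf : Measurable f) (hsing : ∀ b : B, MeasurableSet ({b} : Set B))
    (hd : IsDisintegration ν f νB cond) {ρ : A → ℝ≥0∞} (hρ : Measurable ρ) (K : ℝ≥0∞)
    (h : ∀ E, MeasurableSet E → ∫⁻ a in f ⁻¹' E, ρ a ∂ν ≤ K * νB E) :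
    ∀ᵐ b ∂νB, ∫⁻ a, ρ a ∂(cond b) ≤ K := by
  have := dis_prob hf hd
  have h1 := dis_lint hf hsing hd hρ
  apply ae_le_of_forall_setLIntegral_le_of_sigmaFinite₀ h1.1
  intro E hE _
  rw [← h1.2 E hE]
  simpa using h E hE

end Dis

set_option linter.unusedSectionVars false

section Fib
variable {A I : Type*} [MeasurableSpace A]

lemma tsum_exp_ne_top (K : ℝ≥0∞) (hK : K ≠ ∞) {ε : ℝ} (hε : 0 < ε) :
    ∑' n : ℕ, K * ENNReal.ofReal (Real.exp (-(ε * n))) ≠ ∞ := by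
  rw [ENNReal.tsum_mul_left]
  apply ENNReal.mul_ne_top hK
  have hs : Summable fun n : ℕ => Real.exp (-(ε * n)) := by
    have := Real.summable_exp_nat_mul_iff (a := -ε)
    have h := this.2 (by linarith)
    refine h.congr fun n => ?_
    ring_nf
  exact hs.tsum_ofReal_ne_top

/-- Vitali-type comparison of a measure with a smaller one. -/
lemma fiber_vitali (μ : Measure A) [IsProbabilityMeasure μ] (μG : Measure A)
    (B B' : A → Set A) (hB : ∀ ξ, MeasurableSet (B ξ)) (hself : ∀ ξ, ξ ∈ B ξ)
    (hV : ∀ a b, (B a ∩ B b).Nonempty → a ∈ B' b) {ε : ℝ} {n : ℕ} :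
    μG {ξ | ENNReal.ofReal (Real.exp (ε * n)) * μG (B' ξ) < μ (B ξ)} ≤
      1 * ENNReal.ofReal (Real.exp (-(ε * n))) := by
  set S := {ξ | ENNReal.ofReal (Real.exp (ε * n)) * μG (B' ξ) < μ (B ξ)} with hS
  obtain ⟨u, hu1, hu2, hu3⟩ := Vitali.exists_disjoint_subfamily_covering_enlargement B S
    (fun _ => 1) 2 (by norm_num) (fun _ _ => zero_le_one) 1 (fun _ _ => le_rfl)
    (fun a _ => ⟨a, hself a⟩)
  have hcount : u.Countable := by
    have h := Measure.countable_meas_pos_of_disjoint_iUnion (μ := μ) (As := fun i : u => B i)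
      (fun i => hB i) (fun i j hij => hu2 i.2 j.2 (fun h => hij (Subtype.ext h)))
    have e : {i : u | 0 < μ (B i)} = univ := by
      ext i; simp only [mem_ofPred_eq, mem_univ, iff_true]
      exact lt_of_le_of_lt (zero_le) (hu1 i.2)
    rw [e] at h
    have := h.image (Subtype.val)
    simpa using this
  have hsub : S ⊆ ⋃ b ∈ u, B' b := by
    intro a ha
    obtain ⟨b, hb, hab, _⟩ := hu3 a ha
    exact mem_biUnion hb (hV a b hab)
  have : Countable u := hcount.to_subtype
  have hee : ENNReal.ofReal (Real.exp (-(ε * n))) * ENNReal.ofReal (Real.exp (ε * n)) = 1 := by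
    rw [← ENNReal.ofReal_mul (Real.exp_pos _).le, ← Real.exp_add]; simp
  calc μG S ≤ μG (⋃ b ∈ u, B' b) := measure_mono hsub
    _ ≤ ∑' b : u, μG (B' b) := measure_biUnion_le _ hcount _
    _ ≤ ∑' b : u, ENNReal.ofReal (Real.exp (-(ε * n))) * μ (B b) := by
        apply ENNReal.tsum_le_tsum
        intro b
        have h := hu1 b.2
        simp only [hS, mem_ofPred_eq] at h
        calc μG (B' b) = ENNReal.ofReal (Real.exp (-(ε * n))) *
              (ENNReal.ofReal (Real.exp (ε * n)) * μG (B' b)) := by rw [← mul_assoc, hee, one_mul]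
          _ ≤ _ := by gcongr
    _ = ENNReal.ofReal (Real.exp (-(ε * n))) * ∑' b : u, μ (B b) := ENNReal.tsum_mul_left
    _ ≤ ENNReal.ofReal (Real.exp (-(ε * n))) * 1 := by
        gcongr
        rw [← measure_biUnion hcount hu2 (fun b _ => hB b)]
        exact prob_le_one
    _ = _ := by rw [mul_comm]

lemma fiber_main [Countable I] (μ : Measure A) [IsProbabilityMeasure μ]
    (ρ : ℕ → I → A → ℝ≥0∞) (hρ : ∀ n x, Measurable (ρ n x)) (ρG : A → ℝ≥0∞) (hρG : Measurable ρG)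
    (N : ℕ) (hG : ∀ n, N ≤ n → ∀ᵐ ξ ∂μ, ∑' x, ρ n x ξ = ρG ξ) (hG1 : ∀ᵐ ξ ∂μ, ρG ξ ≤ 1)
    (κ : ℝ) (hκ : ∀ n, N ≤ n → ∀ x, ∫⁻ ξ, ρ n x ξ ∂μ ≤ ENNReal.ofReal (Real.exp (-(κ * n))))
    (R : ℕ → I → Set A) (hR : ∀ n, N ≤ n → ∀ x, ∀ᵐ ξ ∂μ, ρ n x ξ ≠ 0 → ξ ∈ R n x)
    (B B' : ℕ → A → Set A) (hB : ∀ n ξ, MeasurableSet (B n ξ)) (hB' : ∀ n ξ, MeasurableSet (B' n ξ))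
    (hself : ∀ n ξ, ξ ∈ B n ξ)
    (hV : ∀ n a b, (B n a ∩ B n b).Nonempty → a ∈ B' n b)
    (K τ M : ℝ) (hK : 0 ≤ K)
    (hcount : ∀ n, N ≤ n → ∀ ξ, ∃ t : Finset I, (∀ x, (R n x ∩ B' n ξ).Nonempty → x ∈ t) ∧
      (t.card : ℝ) ≤ K * Real.exp (τ * n))
    (hdiam : ∀ n, N ≤ n → ∀ x, ∀ ξ ∈ R n x, R n x ⊆ B n ξ)
    (htot : ∀ n, N ≤ n → ∃ t : Finset I, (∀ x, (R n x).Nonempty → x ∈ t) ∧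
      (t.card : ℝ) ≤ K * Real.exp (M * n)) {ε : ℝ} (hε : 0 < ε) :
    ∀ᵐ ξ ∂(μ.withDensity ρG), ∀ᶠ n : ℕ in atTop,
      μ (B n ξ) ≤ ENNReal.ofReal (K * Real.exp (-((κ - τ - ε) * n))) ∧
      ENNReal.ofReal (Real.exp (-((M + ε) * n))) ≤ μ (B n ξ) := by
  set μG := μ.withDensity ρG with hμG
  have hle : μG ≤ μ := by
    have := withDensity_mono (μ := μ) (f := ρG) (g := 1) (by filter_upwards [hG1] with ξ h using h)
    simpa using this
  -- upper bounds for the good measure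
  have h1 : ∀ n, N ≤ n → ∀ ξ, μG (B' n ξ) ≤ ENNReal.ofReal (K * Real.exp (-((κ - τ) * n))) := by
    intro n hn ξ
    obtain ⟨t, ht1, ht2⟩ := hcount n hn ξ
    rw [hμG, withDensity_apply _ (hB' n ξ)]
    calc ∫⁻ a in B' n ξ, ρG a ∂μ = ∫⁻ a in B' n ξ, ∑' x, ρ n x a ∂μ := by
          apply lintegral_congr_ae
          filter_upwards [ae_restrict_of_ae (hG n hn)] with a ha using ha.symm
      _ = ∑' x, ∫⁻ a in B' n ξ, ρ n x a ∂μ := lintegral_tsum fun x => (hρ n x).aemeasurable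
      _ = ∑ x ∈ t, ∫⁻ a in B' n ξ, ρ n x a ∂μ := by
          apply tsum_eq_sum
          intro x hx
          rw [lintegral_eq_zero_iff (hρ n x)]
          rw [Filter.EventuallyEq, ae_restrict_iff' (hB' n ξ)]
          filter_upwards [hR n hn x] with a ha haB
          by_contra h0
          exact hx (ht1 x ⟨a, ha h0, haB⟩)
      _ ≤ ∑ x ∈ t, ENNReal.ofReal (Real.exp (-(κ * n))) := by
          apply Finset.sum_le_sum
          intro x _
          exact (setLIntegral_le_lintegral _ _).trans (hκ n hn x)
      _ = ENNReal.ofReal (t.card * Real.exp (-(κ * n))) := by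
          rw [Finset.sum_const, nsmul_eq_mul, ENNReal.ofReal_mul (by positivity)]; simp
      _ ≤ _ := by
          apply ENNReal.ofReal_le_ofReal
          calc _ ≤ K * Real.exp (τ * n) * Real.exp (-(κ * n)) := by gcongr
            _ = _ := by rw [mul_assoc, ← Real.exp_add]; congr 2; ring
  have h2 : ∀ᵐ ξ ∂μG, ∀ᶠ n : ℕ in atTop,
      ξ ∉ {ξ | ENNReal.ofReal (Real.exp (ε * n)) * μG (B' n ξ) < μ (B n ξ)} := by
    apply ae_eventually_notMem
    refine ne_top_of_le_ne_top (tsum_exp_ne_top 1 ENNReal.one_ne_top hε) ?_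
    exact ENNReal.tsum_le_tsum fun n =>
      fiber_vitali μ μG (B n) (B' n) (hB n) (hself n) (hV n)
  have hRG : ∀ n, N ≤ n → ∀ᵐ ξ ∂μG, ∃ x, ξ ∈ R n x := by
    intro n hn
    rw [hμG, ae_withDensity_iff hρG]
    filter_upwards [hG n hn, ae_all_iff.2 (hR n hn)] with ξ h1 h2 h3
    by_contra! h4
    apply h3
    rw [← h1, ENNReal.tsum_eq_zero]
    intro x
    by_contra h5
    exact h4 x (h2 x h5)
  have h3 : ∀ᵐ ξ ∂μG, ∀ᶠ n : ℕ in atTop,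
      ξ ∉ {ξ | N ≤ n ∧ μ (B n ξ) < ENNReal.ofReal (Real.exp (-((M + ε) * n)))} := by
    apply ae_eventually_notMem
    refine ne_top_of_le_ne_top (tsum_exp_ne_top (ENNReal.ofReal K) ENNReal.ofReal_ne_top hε) ?_
    refine ENNReal.tsum_le_tsum fun n => ?_
    by_cases hn : N ≤ n
    swap
    · simp [hn]
    simp only [hn, true_and]
    set T := {ξ | μ (B n ξ) < ENNReal.ofReal (Real.exp (-((M + ε) * n)))} with hT
    obtain ⟨t, ht1, ht2⟩ := htot n hn
    calc μG T ≤ μG (⋃ x ∈ t, (T ∩ R n x)) := by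
          apply measure_mono_ae
          filter_upwards [hRG n hn] with ξ hξ hξT
          obtain ⟨x, hx⟩ := hξ
          exact mem_biUnion (ht1 x ⟨ξ, hx⟩) ⟨hξT, hx⟩
      _ ≤ ∑ x ∈ t, μG (T ∩ R n x) := measure_biUnion_finset_le _ _
      _ ≤ ∑ x ∈ t, ENNReal.ofReal (Real.exp (-((M + ε) * n))) := by
          apply Finset.sum_le_sum
          intro x _
          rcases (T ∩ R n x).eq_empty_or_nonempty with h | ⟨ξ, h1, h2⟩
          · simp [h]
          · have h1' : μ (B n ξ) < ENNReal.ofReal (Real.exp (-((M + ε) * n))) := h1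
            refine le_trans (hle _) (le_trans (measure_mono ?_) h1'.le)
            exact inter_subset_right.trans (hdiam n hn x ξ h2)
      _ = ENNReal.ofReal (t.card * Real.exp (-((M + ε) * n))) := by
          rw [Finset.sum_const, nsmul_eq_mul, ENNReal.ofReal_mul (by positivity)]; simp
      _ ≤ ENNReal.ofReal (K * Real.exp (-(ε * n))) := by
          apply ENNReal.ofReal_le_ofReal
          calc _ ≤ K * Real.exp (M * n) * Real.exp (-((M + ε) * n)) := by gcongr
            _ = _ := by rw [mul_assoc, ← Real.exp_add]; congr 2; ring
      _ = _ := by rw [ENNReal.ofReal_mul hK]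
  filter_upwards [h2, h3] with ξ h2 h3
  filter_upwards [h2, h3, eventually_ge_atTop N] with n h2 h3 hn
  simp only [mem_ofPred_eq, not_lt, not_and] at h2 h3
  refine ⟨h2.trans ?_, h3 hn⟩
  calc _ ≤ ENNReal.ofReal (Real.exp (ε * n)) * ENNReal.ofReal (K * Real.exp (-((κ - τ) * n))) := by
        gcongr; exact h1 n hn ξ
    _ = _ := by
        rw [← ENNReal.ofReal_mul (Real.exp_pos _).le]
        congr 1
        rw [mul_left_comm, ← Real.exp_add]; congr 2; ring

end Fib

set_option linter.unusedSectionVars false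

lemma abs_aux {Ω A : Type*} [MeasurableSpace Ω] [MeasurableSpace A] (P : Measure Ω)
    [IsProbabilityMeasure P] {bnd : Ω → A} (hb : Measurable bnd) (S : Set Ω) :
    (P.restrict S).map bnd ≤ P.map bnd := by
  exact Measure.map_mono Measure.restrict_le_self hb

/-- density of the image of the restriction to `S`. -/
def rhoS {Ω A : Type*} [MeasurableSpace Ω] [MeasurableSpace A] (P : Measure Ω)
    (bnd : Ω → A) (S : Set Ω) : A → ℝ≥0∞ := ((P.restrict S).map bnd).rnDeriv (P.map bnd)

section
variable {Ω A : Type*} [MeasurableSpace Ω] [MeasurableSpace A] (P : Measure Ω)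
    [IsProbabilityMeasure P] {bnd : Ω → A}

lemma rhoS_meas (S : Set Ω) : Measurable (rhoS P bnd S) := Measure.measurable_rnDeriv _ _

lemma rhoS_withDensity (hb : Measurable bnd) (S : Set Ω) :
    (P.map bnd).withDensity (rhoS P bnd S) = (P.restrict S).map bnd := by
  haveI : IsProbabilityMeasure (P.map bnd) := Measure.isProbabilityMeasure_map hb.aemeasurable
  exact Measure.withDensity_rnDeriv_eq _ _ (abs_aux P hb S).absolutelyContinuous

lemma rhoS_set (hb : Measurable bnd) (S : Set Ω) {F : Set A} (hF : MeasurableSet F) :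
    ∫⁻ a in F, rhoS P bnd S a ∂(P.map bnd) = P (bnd ⁻¹' F ∩ S) := by
  rw [← withDensity_apply _ hF, rhoS_withDensity P hb, Measure.map_apply hb hF,
    Measure.restrict_apply (hb hF)]

lemma rhoS_le_one (hb : Measurable bnd) (S : Set Ω) : ∀ᵐ a ∂(P.map bnd), rhoS P bnd S a ≤ 1 := by
  haveI : IsProbabilityMeasure (P.map bnd) := Measure.isProbabilityMeasure_map hb.aemeasurable
  exact Measure.rnDeriv_le_one_of_le (abs_aux P hb S)

lemma rhoS_zero (hb : Measurable bnd) (S : Set Ω) {F : Set A} (hF : MeasurableSet F) (h : ∀ ω ∈ S, bnd ω ∈ F) :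
    ∀ᵐ a ∂(P.map bnd), rhoS P bnd S a ≠ 0 → a ∈ F := by
  have h1 := rhoS_set P hb S hF.compl
  have h2 : bnd ⁻¹' Fᶜ ∩ S = ∅ := by
    ext ω
    simp only [mem_inter_iff, mem_preimage, mem_compl_iff, mem_empty_iff_false, iff_false]
    rintro ⟨h3, h4⟩
    exact h3 (h ω h4)
  rw [h2, measure_empty, lintegral_eq_zero_iff (rhoS_meas P S)] at h1
  have h3 := (ae_restrict_iff' hF.compl).1 h1
  filter_upwards [h3] with a ha hne
  by_contra hc
  exact hne (ha hc)

lemma rhoS_tsum (hb : Measurable bnd) {I : Type*} [Countable I] (S : Set Ω) (hS : MeasurableSet S) (w : Ω → I)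
    (hw : ∀ x, MeasurableSet (w ⁻¹' {x})) :
    ∀ᵐ a ∂(P.map bnd), ∑' x, rhoS P bnd (S ∩ w ⁻¹' {x}) a = rhoS P bnd S a := by
  haveI : IsProbabilityMeasure (P.map bnd) := Measure.isProbabilityMeasure_map hb.aemeasurable
  have h1 : (P.map bnd).withDensity (∑' x, rhoS P bnd (S ∩ w ⁻¹' {x})) = (P.restrict S).map bnd := by
    ext F hF
    rw [withDensity_tsum (fun x => rhoS_meas P _), Measure.sum_apply _ hF]
    simp_rw [rhoS_withDensity P hb]
    rw [Measure.map_apply hb hF, Measure.restrict_apply (hb hF)]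
    simp_rw [Measure.map_apply hb hF, Measure.restrict_apply (hb hF)]
    rw [← measure_iUnion]
    · congr 1
      ext ω
      simp
    · intro x y hxy
      rw [Function.onFun, Set.disjoint_left]
      rintro ω ⟨_, _, h1⟩ ⟨_, _, h2⟩
      exact hxy (h1.symm.trans h2)
    · intro x
      exact (hb hF).inter (hS.inter (hw x))
  have h2 := Measure.rnDeriv_withDensity (P.map bnd)
    (f := ∑' x, rhoS P bnd (S ∩ w ⁻¹' {x})) (by
      have : (∑' x, rhoS P bnd (S ∩ w ⁻¹' {x})) = fun a => ∑' x, rhoS P bnd (S ∩ w ⁻¹' {x}) a := by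
        funext a
        rw [ENNReal.tsum_apply]
      rw [this]
      exact Measurable.ennreal_tsum fun x => rhoS_meas P _)
  rw [h1] at h2
  filter_upwards [h2] with a ha
  rw [rhoS, ha, ENNReal.tsum_apply]
end

lemma abs_main {Ω A C I : Type*} [MeasurableSpace Ω] [MeasurableSpace A] [MeasurableSpace C]
    [Countable I] (hsing : ∀ b : C, MeasurableSet {b}) (P : Measure Ω) [IsProbabilityMeasure P]
    (bnd : Ω → A × C) (hb : Measurable bnd) (νs : Measure C) (cond : C → Measure (A × C))
    (hd : IsDisintegration (P.map bnd) Prod.snd νs cond) (w : ℕ → Ω → I)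
    (hw : ∀ n x, MeasurableSet (w n ⁻¹' {x})) (G : ℕ → Set Ω) (hGm : ∀ N, MeasurableSet (G N))
    (hGfull : ∀ᵐ ω ∂P, ∃ N, ω ∈ G N) (κ : ℝ)
    (hκ : ∀ N n x, N ≤ n → ∀ E, MeasurableSet E →
      P ((G N ∩ w n ⁻¹' {x}) ∩ bnd ⁻¹' (Prod.snd ⁻¹' E)) ≤
        ENNReal.ofReal (Real.exp (-(κ*n))) * νs E)
    (Q : ℕ → ℕ → I → Set (A × C)) (hQm : ∀ N n x, MeasurableSet (Q N n x))
    (hQ : ∀ N n ω, N ≤ n → ω ∈ G N → bnd ω ∈ Q N n (w n ω))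
    (B B' : ℕ → A × C → Set (A × C)) (hB : ∀ n ξ, MeasurableSet (B n ξ))
    (hB' : ∀ n ξ, MeasurableSet (B' n ξ)) (hself : ∀ n ξ, ξ ∈ B n ξ)
    (hV : ∀ n a b, (B n a ∩ B n b).Nonempty → a ∈ B' n b) (K τ M : ℝ) (hK : 0 ≤ K) (N0 : ℕ)
    (hcount : ∀ N n, N0 ≤ n → N ≤ n → ∀ η ξ, ∃ t : Finset I,
      (∀ x, ((Q N n x ∩ Prod.snd ⁻¹' {η}) ∩ B' n ξ).Nonempty → x ∈ t) ∧
        (t.card:ℝ) ≤ K * Real.exp (τ*n))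
    (hdiam : ∀ N n, N0 ≤ n → N ≤ n → ∀ x, ∀ ξ ∈ Q N n x, ∀ ξ' ∈ Q N n x, ξ'.2 = ξ.2 → ξ' ∈ B n ξ)
    (htot : ∀ N n, N0 ≤ n → N ≤ n → ∃ t : Finset I,
      (∀ x, (Q N n x).Nonempty → x ∈ t) ∧ (t.card:ℝ) ≤ K * Real.exp (M*n))
    {ε : ℝ} (hε : 0 < ε) :
    ∀ᵐ η ∂νs, ∀ᵐ ξ ∂(cond η), ∀ᶠ n : ℕ in atTop,
      cond η (B n ξ) ≤ ENNReal.ofReal (K * Real.exp (-((κ-τ-ε)*n))) ∧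
      ENNReal.ofReal (Real.exp (-((M+ε)*n))) ≤ cond η (B n ξ) := by
  haveI : IsProbabilityMeasure (P.map bnd) := Measure.isProbabilityMeasure_map hb.aemeasurable
  let ρ : ℕ → ℕ → I → A × C → ℝ≥0∞ := fun N n x => rhoS P bnd (G N ∩ w n ⁻¹' {x})
  let ρG : ℕ → A × C → ℝ≥0∞ := fun N => rhoS P bnd (G N)
  have hρ : ∀ N n x, Measurable (ρ N n x) := fun N n x => rhoS_meas P _
  have hρG : ∀ N, Measurable (ρG N) := fun N => rhoS_meas P _
  have a1 : ∀ᵐ η ∂νs, ∀ N n, ∀ᵐ ξ ∂(cond η), ∑' x, ρ N n x ξ = ρG N ξ := by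
    rw [ae_all_iff]; intro N
    rw [ae_all_iff]; intro n
    exact dis_null measurable_snd hd (rhoS_tsum P hb (G N) (hGm N) (w n) (hw n))
  have a2 : ∀ᵐ η ∂νs, ∀ N, ∀ᵐ ξ ∂(cond η), ρG N ξ ≤ 1 := by
    rw [ae_all_iff]; intro N
    exact dis_null measurable_snd hd (rhoS_le_one P hb (G N))
  have a3 : ∀ᵐ η ∂νs, ∀ N n, N ≤ n → ∀ x, ∫⁻ ξ, ρ N n x ξ ∂(cond η) ≤
      ENNReal.ofReal (Real.exp (-(κ*n))) := by
    rw [ae_all_iff]; intro N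
    rw [ae_all_iff]; intro n
    by_cases h : N ≤ n
    swap
    · exact ae_of_all _ fun η h' => absurd h' h
    · have : ∀ᵐ η ∂νs, ∀ x, ∫⁻ ξ, ρ N n x ξ ∂(cond η) ≤ ENNReal.ofReal (Real.exp (-(κ*n))) := by
        rw [ae_all_iff]; intro x
        apply dis_bound measurable_snd hsing hd (hρ N n x)
        intro E hE
        rw [rhoS_set P hb _ (measurable_snd hE), Set.inter_comm]
        exact hκ N n x h E hE
      filter_upwards [this] with η h1 _ using h1
  have a4 : ∀ᵐ η ∂νs, ∀ N n, N ≤ n → ∀ x, ∀ᵐ ξ ∂(cond η), ρ N n x ξ ≠ 0 → ξ ∈ Q N n x := by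
    rw [ae_all_iff]; intro N
    rw [ae_all_iff]; intro n
    by_cases h : N ≤ n
    swap
    · exact ae_of_all _ fun η h' => absurd h' h
    · have : ∀ᵐ η ∂νs, ∀ x, ∀ᵐ ξ ∂(cond η), ρ N n x ξ ≠ 0 → ξ ∈ Q N n x := by
        rw [ae_all_iff]; intro x
        apply dis_null measurable_snd hd
        apply rhoS_zero P hb _ (hQm N n x)
        rintro ω ⟨h1, h2⟩
        have := hQ N n ω h h1
        rwa [show w n ω = x from h2] at this
      filter_upwards [this] with η h1 _ using h1
  have a5 : ∀ᵐ η ∂νs, ∀ᵐ ξ ∂(cond η), ∃ N, ρG N ξ ≠ 0 := by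
    apply dis_null measurable_snd hd
    have hm : MeasurableSet (⋂ N, (ρG N) ⁻¹' {0}) :=
      MeasurableSet.iInter fun N => hρG N (measurableSet_singleton 0)
    have h0 : ∀ N, P (bnd ⁻¹' (⋂ N, (ρG N) ⁻¹' {0}) ∩ G N) = 0 := by
      intro N
      rw [← rhoS_set P hb _ hm]
      rw [setLIntegral_congr_fun hm (g := fun _ => 0)]
      · simp
      · intro a ha
        exact mem_iInter.1 ha N
    have h1 : (P.map bnd) (⋂ N, (ρG N) ⁻¹' {0}) = 0 := by
      rw [Measure.map_apply hb hm]
      refine measure_mono_null (t := (⋃ N, bnd ⁻¹' (⋂ N, (ρG N) ⁻¹' {0}) ∩ G N) ∪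
        {ω | ¬ ∃ N, ω ∈ G N}) ?_ (measure_union_null (measure_iUnion_null h0) hGfull)
      intro ω hω
      by_cases hc : ∃ N, ω ∈ G N
      · obtain ⟨N, hN⟩ := hc
        exact Or.inl (mem_iUnion.2 ⟨N, hω, hN⟩)
      · exact Or.inr hc
    rw [ae_iff]
    convert h1 using 2
    ext ξ
    simp
  have a6 := dis_fiber measurable_snd hsing hd
  filter_upwards [a1, a2, a3, a4, a5, a6, hd.2.1] with η b1 b2 b3 b4 b5 b6 b7
  have key : ∀ N, ∀ᵐ ξ ∂(cond η), ρG N ξ ≠ 0 → ∀ᶠ n : ℕ in atTop,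
      cond η (B n ξ) ≤ ENNReal.ofReal (K * Real.exp (-((κ-τ-ε)*n))) ∧
      ENNReal.ofReal (Real.exp (-((M+ε)*n))) ≤ cond η (B n ξ) := by
    intro N
    rw [← ae_withDensity_iff (hρG N)]
    refine fiber_main (cond η) (ρ N) (hρ N) (ρG N) (hρG N) (max N N0) (fun n _ => b1 N n) (b2 N) κ
      (fun n hn x => b3 N n (le_of_max_le_left hn) x) (fun n x => Q N n x ∩ Prod.snd ⁻¹' {η})
      (fun n hn x => ?_) B B' hB hB' hself hV K τ M hK (fun n hn ξ => ?_) (fun n hn x ξ hξ => ?_)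
      (fun n hn => ?_) hε
    · filter_upwards [b4 N n (le_of_max_le_left hn) x, b6] with ξ h1 h2 h3
      exact ⟨h1 h3, h2⟩
    · exact hcount N n (le_of_max_le_right hn) (le_of_max_le_left hn) η ξ
    · intro ξ' hξ'
      exact hdiam N n (le_of_max_le_right hn) (le_of_max_le_left hn) x ξ hξ.1 ξ' hξ'.1
        (hξ'.2.trans hξ.2.symm)
    · obtain ⟨t, h1, h2⟩ := htot N n (le_of_max_le_right hn) (le_of_max_le_left hn)
      exact ⟨t, fun x hx => h1 x (hx.mono inter_subset_left), h2⟩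
  have key2 := ae_all_iff.2 key
  filter_upwards [key2, b5] with ξ h1 ⟨N, h2⟩ using h1 N h2

set_option linter.unusedSectionVars false

lemma kappa_bound {G : Type*} [Group G] [Countable G] [MeasurableSpace G] [DiscreteMeasurableSpace G]
    {Y : Type*} [MeasurableSpace Y] {p : G → ℝ≥0∞} {P : Measure (ℕ → G)} {act : G → Y → Y}
    {b : (ℕ → G) → Y} (hp : IsProb p) (hP : IsRWMeasure p P) (hb : BdAct P act b) (n : ℕ) (x : G)
    (a k : ℝ≥0∞) (S : Set (ℕ → G)) (h1 : ∀ ω ∈ S, walk ω n = x)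
    (h2 : ∀ ω ∈ S, piN p n (walk ω n) ≤ a) (h3 : ∀ ω ∈ S, DX P act b (walk ω n) (b ω) ≤ k)
    {E : Set Y} (hE : MeasurableSet E) : P (S ∩ b ⁻¹' E) ≤ a * k * (P.map b) E := by
  rcases S.eq_empty_or_nonempty with rfl | ⟨ω0, hω0⟩
  · simp
  have ha : piN p n x ≤ a := by
    have := h2 ω0 hω0
    rwa [h1 ω0 hω0] at this
  have hm : MeasurableSet (E ∩ (DX P act b x) ⁻¹' (Set.Iic k)) :=
    hE.inter (measurable_DX x measurableSet_Iic)
  have hle : P (S ∩ b ⁻¹' E) ≤ piN p n x * nuX P act b x (E ∩ (DX P act b x) ⁻¹' (Set.Iic k)) := by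
    rw [← bd_walk hp hP hb n x hm]
    apply measure_mono
    rintro ω ⟨hS, hωE⟩
    have e1 := h1 ω hS
    have e3 := h3 ω hS
    rw [e1] at e3
    exact ⟨e1, hωE, e3⟩
  by_cases h0 : piN p n x = 0
  · rw [h0, zero_mul] at hle
    exact hle.trans zero_le
  have hac := bd_ac hp hP hb h0
  have := bd_nuX_prob hP hb x
  have := bd_nu_prob hP hb
  have hnu : nuX P act b x (E ∩ (DX P act b x) ⁻¹' (Set.Iic k)) ≤ k * (P.map b) E := by
    have e : nuX P act b x = (P.map b).withDensity (DX P act b x) :=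
      (Measure.withDensity_rnDeriv_eq _ _ hac).symm
    rw [e, withDensity_apply _ hm]
    calc ∫⁻ y in E ∩ (DX P act b x) ⁻¹' (Set.Iic k), DX P act b x y ∂(P.map b)
        ≤ ∫⁻ y in E ∩ (DX P act b x) ⁻¹' (Set.Iic k), k ∂(P.map b) :=
          setLIntegral_mono measurable_const fun y hy => hy.2
      _ = k * (P.map b) (E ∩ (DX P act b x) ⁻¹' (Set.Iic k)) := by simp
      _ ≤ k * (P.map b) E := by gcongr; exact inter_subset_left
  calc _ ≤ _ := hle
    _ ≤ a * (k * (P.map b) E) := by gcongr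
    _ = _ := by ring

lemma dist_of_close {X : Type*} [MetricSpace X] {δ : ℝ} (hδ0 : 0 ≤ δ) (hδ : IsHyperbolicWith X δ)
    (o : X) (u v : DivSeq X o) (x y : X) (L a t : ℝ) (n : ℕ)
    (hx : dist o x ≤ L) (hy : dist o y ≤ L) (hta : t ≤ a)
    (h1 : ∀ m, n ≤ m → a ≤ gp o x (u.1 m)) (h2 : ∀ m, n ≤ m → a ≤ gp o y (v.1 m))
    (ξ ζ ζ' : Boundary X o) (c1 : qB o (mkB o u) ζ < Real.exp (-t)) (c2 : qB o ξ ζ < Real.exp (-t))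
    (c3 : qB o (mkB o v) ζ' < Real.exp (-t)) (c4 : qB o ξ ζ' < Real.exp (-t)) :
    dist x y ≤ 2 * L - 2 * t + 24 * δ + 8 := by
  have mono : ∀ {α β : Boundary X o} {s r : ℝ}, qB o α β < Real.exp (-s) → r ≤ s →
      qB o α β < Real.exp (-r) := fun h hr => h.trans_le (Real.exp_le_exp.2 (by linarith))
  have d1 := qB_symm hδ o _ _ _ c2
  have d2 := qB_tri hδ o _ _ _ _ (mono c1 (by linarith : t - (2*δ+1) ≤ t)) d1
  have d3 := qB_symm hδ o _ _ _ c4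
  have d4 := qB_tri hδ o _ _ _ _ (mono c3 (by linarith : t - (2*δ+1) ≤ t)) d3
  have d5 := qB_symm hδ o _ _ _ d4
  have d6 := qB_tri hδ o _ _ _ _ (mono d2
    (by linarith : t - (2*δ+1) - (3*δ+1) - (2*δ+1) ≤ _)) d5
  have d7 := gp_of_shadow hδ0 hδ o u v x y _ n (fun m hm => le_trans (by linarith) (h1 m hm))
    (fun m hm => le_trans (by linarith) (h2 m hm)) d6
  rw [dist_eq_gp o]
  linarith

section Conc
variable {X Xs : Type*} [MetricSpace X] [MetricSpace Xs]
    {Γb : Subgroup ((X ≃ᵢ X) × (Xs ≃ᵢ Xs))}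

lemma disp_inv_mul (o : X) (os : Xs) (x y : Γb) :
    disp o os (x⁻¹ * y) = max (dist (proj1 x o) (proj1 y o)) (dist (proj2 x os) (proj2 y os)) := by
  rw [disp_eq]
  congr 1
  · rw [← (proj1 x).dist_eq, ← proj1_mul, mul_inv_cancel_left]
  · rw [← (proj2 x).dist_eq, ← proj2_mul, mul_inv_cancel_left]

/-- the good event at time `n`. -/
structure GoodAt [MeasurableSpace Γb] (o : X) (os : Xs) (p : Γb → ℝ≥0∞) (P : Measure (ℕ → Γb))
    (b : (ℕ → Γb) → Boundary Xs os) (l ls h hs ε : ℝ) (n : ℕ) (ω : ℕ → Γb) : Prop where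
  g1 : dist o (proj1 (walk ω n) o) ≤ (l + ε) * n
  g2 : dist os (proj2 (walk ω n) os) ≤ (ls + ε) * n
  g3 : ∀ m, n ≤ m → (l - 3 * ε) * n ≤ gp o (proj1 (walk ω n) o) (proj1 (walk ω m) o)
  g4 : ∀ m, n ≤ m → (ls - 3 * ε) * n ≤ gp os (proj2 (walk ω n) os) (proj2 (walk ω m) os)
  g5 : piN p n (walk ω n) ≤ ENNReal.ofReal (Real.exp (-((h - ε) * n)))
  g6 : DX P (fun γ : Γb => bAct os (proj2 γ)) b (walk ω n) (b ω) ≤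
    ENNReal.ofReal (Real.exp ((hs + ε) * n))

variable [Countable Γb] [MeasurableSpace Γb] [DiscreteMeasurableSpace Γb]

lemma ms_walk (n : ℕ) (R : Γb → Prop) : MeasurableSet {ω : ℕ → Γb | R (walk ω n)} :=
  ms_mem (measurable_walk n) (B := {x | R x}) (MeasurableSet.of_discrete)

lemma ms_walk2 (n m : ℕ) (R : Γb → Γb → Prop) :
    MeasurableSet {ω : ℕ → Γb | R (walk ω n) (walk ω m)} := by
  have e : {ω : ℕ → Γb | R (walk ω n) (walk ω m)} =
      ⋃ x : Γb, {ω : ℕ → Γb | walk ω n = x} ∩ {ω : ℕ → Γb | R x (walk ω m)} := by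
    ext ω; simp
  rw [e]
  exact MeasurableSet.iUnion fun x => (ms_walk n (fun y => y = x)).inter (ms_walk m (R x))

lemma ms_good (o : X) (os : Xs) (p : Γb → ℝ≥0∞) (P : Measure (ℕ → Γb))
    (b : (ℕ → Γb) → Boundary Xs os) (hb : Measurable b) (l ls h hs ε : ℝ) (n : ℕ) :
    MeasurableSet {ω : ℕ → Γb | GoodAt o os p P b l ls h hs ε n ω} := by
  have m1 := ms_walk (Γb := Γb) n (fun x => dist o (proj1 x o) ≤ (l + ε) * n)
  have m2 := ms_walk (Γb := Γb) n (fun x => dist os (proj2 x os) ≤ (ls + ε) * n)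
  have m3 := fun m => ms_walk2 (Γb := Γb) n m
    (fun x y => n ≤ m → (l - 3 * ε) * n ≤ gp o (proj1 x o) (proj1 y o))
  have m4 := fun m => ms_walk2 (Γb := Γb) n m
    (fun x y => n ≤ m → (ls - 3 * ε) * n ≤ gp os (proj2 x os) (proj2 y os))
  have m5 := ms_walk (Γb := Γb) n (fun x => piN p n x ≤ ENNReal.ofReal (Real.exp (-((h - ε) * n))))
  have m6 : MeasurableSet (⋃ x : Γb, {ω : ℕ → Γb | walk ω n = x} ∩
      b ⁻¹' ((DX P (fun γ : Γb => bAct os (proj2 γ)) b x) ⁻¹'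
        (Set.Iic (ENNReal.ofReal (Real.exp ((hs + ε) * n)))))) :=
    MeasurableSet.iUnion fun x => (ms_walk n (fun y => y = x)).inter (hb (measurable_DX x measurableSet_Iic))
  have := ((((m1.inter m2).inter (MeasurableSet.iInter m3)).inter (MeasurableSet.iInter m4)).inter
    m5).inter m6
  convert this using 1
  ext ω
  simp only [mem_ofPred_eq, mem_inter_iff, mem_iInter, mem_iUnion, mem_preimage, mem_Iic,
    exists_eq_left']
  constructor
  · rintro ⟨a, b, c, d, e, f⟩
    exact ⟨⟨⟨⟨⟨a, b⟩, c⟩, d⟩, e⟩, f⟩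
  · rintro ⟨⟨⟨⟨⟨a, b⟩, c⟩, d⟩, e⟩, f⟩
    exact ⟨a, b, c, d, e, f⟩

lemma mom_mono {p : Γb → ℝ≥0∞} {f g : Γb → ℝ} (h : ∀ x, f x ≤ g x) (hg : FiniteFirstMoment p g) :
    FiniteFirstMoment p f := by
  refine ne_top_of_le_ne_top hg (ENNReal.tsum_le_tsum fun x => ?_)
  gcongr
  exact h x

lemma good_ev {δ : ℝ} (hδ0 : 0 ≤ δ) (hδ : IsHyperbolicWith X δ) (hδs : IsHyperbolicWith Xs δ)
    (o : X) (os : Xs) {p : Γb → ℝ≥0∞} (hp : IsProb p)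
    (hmom : FiniteFirstMoment p fun γ : Γb => disp o os γ) {P : Measure (ℕ → Γb)}
    (hP : IsRWMeasure p P) (hgrow : FinExpGrowth fun γ : Γb => disp o os γ)
    {b : (ℕ → Γb) → Boundary Xs os}
    (hb : BdAct P (fun γ : Γb => bAct os (proj2 γ)) b) {l ls h hs : ℝ}
    (hl : HasDrift p (fun γ : Γb => dist o (proj1 γ o)) l)
    (hls : HasDrift p (fun γ : Γb => dist os (proj2 γ os)) ls)
    (hh : HasEntropy p h) (hhs : hs = ∑' x, (p x).toReal * IX P (fun γ : Γb => bAct os (proj2 γ)) b x)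
    {ε : ℝ} (hε : 0 < ε) :
    ∀ᵐ ω ∂P, ∀ᶠ n : ℕ in atTop, GoodAt o os p P b l ls h hs ε n ω := by
  have hm1 : FiniteFirstMoment p fun γ : Γb => dist o (proj1 γ o) :=
    mom_mono (fun x => by rw [disp_eq]; exact le_max_left _ _) hmom
  have hm2 : FiniteFirstMoment p fun γ : Γb => dist os (proj2 γ os) :=
    mom_mono (fun x => by rw [disp_eq]; exact le_max_right _ _) hmom
  have hfin := entropy_fin hp (f := fun γ : Γb => disp o os γ) (fun x => dist_nonneg) hgrow hmom
  filter_upwards [len_upper hp hP (isLen1 o) hm1 hl (by linarith : l < l + ε),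
    len_upper hp hP (isLen2 os) hm2 hls (by linarith : ls < ls + ε),
    len_lower hp hP (isLen1 o) hm1 hl (by linarith : l - ε < l),
    len_lower hp hP (isLen2 os) hm2 hls (by linarith : ls - ε < ls),
    len_small hp hP (isLen1 o).nonneg hm1 hε, len_small hp hP (isLen2 os).nonneg hm2 hε,
    ent_lower hp hP hfin hh (by linarith : h - ε < h),
    bd_upper hp hP hb hfin (by rw [← hhs]; linarith : _ < hs + ε)]
    with ω u1 u2 l1 l2 s1 s2 e d
  have t1 := gp_tail hδ0 hδ o (fun n => proj1 (walk ω n) o) l ε hε l1 (by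
    filter_upwards [s1] with n hn
    rw [walk_succ, proj1_mul, (proj1 _).dist_eq]
    exact hn)
  have t2 := gp_tail hδ0 hδs os (fun n => proj2 (walk ω n) os) ls ε hε l2 (by
    filter_upwards [s2] with n hn
    rw [walk_succ, proj2_mul, (proj2 _).dist_eq]
    exact hn)
  filter_upwards [u1, u2, t1, t2, e, d] with n a1 a2 a3 a4 a5 a6
  exact ⟨a1, a2, a3, a4, a5, a6⟩

end Conc

set_option linter.unusedSectionVars false

section Conc
variable {X Xs : Type*} [MetricSpace X] [MetricSpace Xs]
    {Γb : Subgroup ((X ≃ᵢ X) × (Xs ≃ᵢ Xs))}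
variable [Countable Γb] [MeasurableSpace Γb] [DiscreteMeasurableSpace Γb]

lemma conc_main {δ : ℝ} (hδ0 : 0 ≤ δ) (hδ : IsHyperbolicWith X δ) (hδs : IsHyperbolicWith Xs δ)
    (o : X) (os : Xs) {p : Γb → ℝ≥0∞} (hp : IsProb p)
    (hmom : FiniteFirstMoment p fun γ : Γb => disp o os γ) {P : Measure (ℕ → Γb)}
    (hP : IsRWMeasure p P) {c : ℝ} (hc : 0 < c)
    (hgrow : ∀ r : ℝ, 0 < r → {x : Γb | disp o os x < r}.Finite ∧
      ({x : Γb | disp o os x < r}.ncard : ℝ) ≤ c * Real.exp (c * r))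
    {bnd : (ℕ → Γb) → Boundary X o × Boundary Xs os} (hbm : Measurable bnd)
    (hbnd : ∀ᵐ ω ∂P, ∃ (h1 : IsDivergent o (fun n => proj1 (walk ω n) o))
      (h2 : IsDivergent os (fun n => proj2 (walk ω n) os)),
      bnd ω = (mkB o ⟨_, h1⟩, mkB os ⟨_, h2⟩))
    (hb : BdAct P (fun γ : Γb => bAct os (proj2 γ)) (fun ω => (bnd ω).2)) {l ls h hs : ℝ}
    (hl : HasDrift p (fun γ : Γb => dist o (proj1 γ o)) l)
    (hls : HasDrift p (fun γ : Γb => dist os (proj2 γ os)) ls)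
    (hh : HasEntropy p h)
    (hhs : hs = ∑' x, (p x).toReal *
      IX P (fun γ : Γb => bAct os (proj2 γ)) (fun ω => (bnd ω).2) x)
    {νs : Measure (Boundary Xs os)} {cond : Boundary Xs os → Measure (Boundary X o × Boundary Xs os)}
    (hd : IsDisintegration (P.map bnd) Prod.snd νs cond)
    {ε : ℝ} (hε : 0 < ε) :
    ∃ K M : ℝ, 0 < K ∧ ∀ᵐ η ∂νs, ∀ᵐ ξ ∂(cond η), ∀ᶠ n : ℕ in atTop,
      cond η (qball (qbb o os) ξ (Real.exp (-((l - 5*ε) * n)))) ≤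
        ENNReal.ofReal (K * Real.exp (-((h - hs - (3 + 12 * c) * ε) * n))) ∧
      ENNReal.ofReal (Real.exp (-(M * n))) ≤
        cond η (qball (qbb o os) ξ (Real.exp (-((l - 5*ε) * n)))) := by
  have hPp := hP.1
  have hev := good_ev hδ0 hδ hδs o os hp hmom hP ⟨c, hc, hgrow⟩ hb hl hls hh hhs hε
  -- measurable full set
  obtain ⟨T, hTm, hT0, hT⟩ : ∃ T : Set (ℕ → Γb), MeasurableSet T ∧ (∀ᵐ ω ∂P, ω ∈ T) ∧ ∀ ω ∈ T,
      ∃ (h1 : IsDivergent o (fun n => proj1 (walk ω n) o))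
      (h2 : IsDivergent os (fun n => proj2 (walk ω n) os)),
      bnd ω = (mkB o ⟨_, h1⟩, mkB os ⟨_, h2⟩) := by
    obtain ⟨t, h1, h2, h3⟩ := exists_measurable_superset_of_null (ae_iff.1 hbnd)
    refine ⟨tᶜ, h2.compl, ?_, fun ω hω => ?_⟩
    · rw [ae_iff]; convert h3 using 2; ext ω; simp
    · by_contra hc
      exact hω (h1 hc)
  let Gd : ℕ → Set (ℕ → Γb) := fun n =>
    {ω | GoodAt o os p P (fun ω => (bnd ω).2) l ls h hs ε n ω}
  have hGd : ∀ n, MeasurableSet (Gd n) := fun n =>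
    ms_good o os p P _ (measurable_snd.comp hbm) l ls h hs ε n
  let G : ℕ → Set (ℕ → Γb) := fun N => T ∩ ⋂ n, ⋂ (_ : N ≤ n), Gd n
  have hGm : ∀ N, MeasurableSet (G N) := fun N =>
    hTm.inter (MeasurableSet.iInter fun n => MeasurableSet.iInter fun _ => hGd n)
  have hGT : ∀ N ω, ω ∈ G N → ω ∈ T := fun N ω h => h.1
  have hGg : ∀ N n ω, N ≤ n → ω ∈ G N →
      GoodAt o os p P (fun ω => (bnd ω).2) l ls h hs ε n ω := by
    intro N n ω hn h
    exact mem_iInter.1 (mem_iInter.1 h.2 n) hn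
  have hGfull : ∀ᵐ ω ∂P, ∃ N, ω ∈ G N := by
    filter_upwards [hT0, hev] with ω h1 h2
    obtain ⟨N, hN⟩ := eventually_atTop.1 h2
    exact ⟨N, h1, mem_iInter.2 fun n => mem_iInter.2 fun hn => hN n hn⟩
  let r1 : ℕ → ℝ := fun n => Real.exp (-((l - 3*ε) * n - (3 * δ + 1)))
  let r2 : ℕ → ℝ := fun n => Real.exp (-((ls - 3*ε) * n - (3 * δ + 1)))
  let w : ℕ → (ℕ → Γb) → Γb := fun n ω => walk ω n
  let Q : ℕ → ℕ → Γb → Set (Boundary X o × Boundary Xs os) := fun N n x =>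
    if hne : (G N ∩ w n ⁻¹' {x}).Nonempty then
      qball (qB o) (bnd hne.choose).1 (r1 n) ×ˢ qball (qB os) (bnd hne.choose).2 (r2 n) else ∅
  have hQm : ∀ N n x, MeasurableSet (Q N n x) := by
    intro N n x
    simp only [Q]
    split_ifs with hne
    · exact (measurableSet_qball _ _ _).prod (measurableSet_qball _ _ _)
    · exact MeasurableSet.empty
  have hQc : ∀ N n x, (Q N n x).Nonempty → ∃ ω ∈ G N, walk ω n = x ∧ ∀ ζ ∈ Q N n x,
      qB o (bnd ω).1 ζ.1 < r1 n ∧ qB os (bnd ω).2 ζ.2 < r2 n := by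
    intro N n x hx
    by_cases hne : (G N ∩ w n ⁻¹' {x}).Nonempty
    · refine ⟨hne.choose, hne.choose_spec.1, hne.choose_spec.2, fun ζ hζ => ?_⟩
      simp only [Q, dif_pos hne] at hζ
      exact hζ
    · simp only [Q, dif_neg hne] at hx
      exact absurd hx Set.not_nonempty_empty
  have hQ : ∀ N n ω, N ≤ n → ω ∈ G N → bnd ω ∈ Q N n (w n ω) := by
    intro N n ω hn hω
    have hne : (G N ∩ w n ⁻¹' {w n ω}).Nonempty := ⟨ω, hω, rfl⟩
    simp only [Q, dif_pos hne]
    obtain ⟨k1, k2⟩ := hne.choose_spec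
    generalize hne.choose = ω' at k1 k2
    have k2 : walk ω' n = walk ω n := k2
    obtain ⟨d1, d2, e⟩ := hT ω (hGT N ω hω)
    obtain ⟨d1', d2', e'⟩ := hT ω' (hGT N ω' k1)
    have g := hGg N n ω hn hω
    have g' := hGg N n ω' hn k1
    have q1 := qB_lt_of_shadow hδ o ⟨_, d1'⟩ ⟨_, d1⟩ (proj1 (walk ω n) o) _ n
      (fun m hm => by have := g'.g3 m hm; rwa [k2] at this) (g.g3)
    have q2 := qB_lt_of_shadow hδs os ⟨_, d2'⟩ ⟨_, d2⟩ (proj2 (walk ω n) os) _ n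
      (fun m hm => by have := g'.g4 m hm; rwa [k2] at this) (g.g4)
    rw [e, e']
    exact ⟨q1, q2⟩
  let B : ℕ → Boundary X o × Boundary Xs os → Set (Boundary X o × Boundary Xs os) :=
    fun n ξ => qball (qbb o os) ξ (Real.exp (-((l - 5*ε) * n)))
  let B' : ℕ → Boundary X o × Boundary Xs os → Set (Boundary X o × Boundary Xs os) :=
    fun n ξ => qball (qbb o os) ξ (Real.exp (-((l - 5*ε) * n - (5 * δ + 2))))
  have hBm : ∀ (ξ : Boundary X o × Boundary Xs os) (r : ℝ), MeasurableSet (qball (qbb o os) ξ r) := by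
    intro ξ r
    rw [qbb_qball]
    exact (measurableSet_qball _ _ _).prod (measurableSet_qball _ _ _)
  have hself : ∀ n ξ, ξ ∈ B n ξ := by
    intro n ξ
    change max (qB o ξ.1 ξ.1) (qB os ξ.2 ξ.2) < _
    rw [qB_self, qB_self, max_self]
    exact Real.exp_pos _
  have hVg : ∀ {Y : Type _} [MetricSpace Y] (_ : IsHyperbolicWith Y δ) (y : Y) (t : ℝ)
      (a b c : Boundary Y y), qB y a c < Real.exp (-t) → qB y b c < Real.exp (-t) →
      qB y b a < Real.exp (-(t - (5 * δ + 2))) := by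
    intro Y _ hY y t a b c h1 h2
    have e1 := qB_symm hY y _ _ _ h1
    have e2 := qB_tri hY y _ _ _ _ (h2.trans_le
      (Real.exp_le_exp.2 (by linarith : -t ≤ -(t - (2*δ+1))))) e1
    refine e2.trans_le (Real.exp_le_exp.2 (by linarith))
  have hVg' : ∀ (t : ℝ)
      (a b c : Boundary Xs os), qB os a c < Real.exp (-t) → qB os b c < Real.exp (-t) →
      qB os b a < Real.exp (-(t - (5 * δ + 2))) := by
    intro t a b c h1 h2
    have e1 := qB_symm hδs os _ _ _ h1
    have e2 := qB_tri hδs os _ _ _ _ (h2.trans_le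
      (Real.exp_le_exp.2 (by linarith : -t ≤ -(t - (2*δ+1))))) e1
    refine e2.trans_le (Real.exp_le_exp.2 (by linarith))
  have hV : ∀ n a b, (B n a ∩ B n b).Nonempty → a ∈ B' n b := by
    rintro n a b ⟨c, h1, h2⟩
    have h1 : max (qB o a.1 c.1) (qB os a.2 c.2) < _ := h1
    have h2 : max (qB o b.1 c.1) (qB os b.2 c.2) < _ := h2
    change max (qB o b.1 a.1) (qB os b.2 a.2) < _
    rw [max_lt_iff] at h1 h2 ⊢
    exact ⟨hVg hδ o _ _ _ _ h1.1 h2.1, hVg' _ _ _ _ h1.2 h2.2⟩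
  obtain ⟨N0, hN0⟩ : ∃ N0 : ℕ, ∀ n : ℕ, N0 ≤ n → 8 * δ + 3 ≤ 2 * ε * n := by
    obtain ⟨N0, h0⟩ := exists_nat_ge ((8 * δ + 3) / (2 * ε))
    refine ⟨N0, fun n hn => ?_⟩
    have : (N0:ℝ) ≤ n := by exact_mod_cast hn
    rw [div_le_iff₀ (by positivity)] at h0
    nlinarith
  have hdiam : ∀ N n, N0 ≤ n → N ≤ n → ∀ x, ∀ ξ ∈ Q N n x, ∀ ξ' ∈ Q N n x, ξ'.2 = ξ.2 →
      ξ' ∈ B n ξ := by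
    intro N n hn0 hn x ξ hξ ξ' hξ' he
    obtain ⟨ω, hω, hw, hζ⟩ := hQc N n x ⟨ξ, hξ⟩
    change max (qB o ξ.1 ξ'.1) (qB os ξ.2 ξ'.2) < _
    rw [he, qB_self]
    apply max_lt _ (Real.exp_pos _)
    have h1 := (hζ ξ hξ).1
    have h2 := (hζ ξ' hξ').1
    have e1 := qB_symm hδ o _ _ _ h1
    have e2 := qB_tri hδ o _ _ _ _ e1 (h2.trans_le (Real.exp_le_exp.2 (by linarith)))
    refine e2.trans_le (Real.exp_le_exp.2 ?_)
    have := hN0 n hn0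
    linarith
  have hcnt : ∀ r : ℝ, 0 < r → ∃ t : Finset Γb, (∀ x, disp o os x < r → x ∈ t) ∧
      (t.card : ℝ) ≤ c * Real.exp (c * r) := by
    intro r hr
    obtain ⟨h1, h2⟩ := hgrow r hr
    refine ⟨h1.toFinset, fun x hx => ?_, ?_⟩
    · rw [Set.Finite.mem_toFinset]; exact hx
    · rwa [Set.ncard_eq_toFinset_card _ h1] at h2
  let K : ℝ := c * Real.exp (c * (34 * δ + 13))
  have hK : 0 < K := by positivity
  let Mx : ℝ := c * (max l ls + ε)
  have htot : ∀ N n, N0 ≤ n → N ≤ n → ∃ t : Finset Γb,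
      (∀ x, (Q N n x).Nonempty → x ∈ t) ∧ (t.card:ℝ) ≤ K * Real.exp (Mx*n) := by
    intro N n hn0 hn
    by_cases hpos : 0 < (max l ls + ε) * n + 1
    · obtain ⟨t, h1, h2⟩ := hcnt _ hpos
      refine ⟨t, fun x hx => h1 x ?_, h2.trans ?_⟩
      · obtain ⟨ω, hω, hw, -⟩ := hQc N n x hx
        have g := hGg N n ω hn hω
        have g1 := g.g1
        have g2 := g.g2
        rw [hw] at g1 g2
        rw [disp_eq]
        have m1 : (l + ε) * n ≤ (max l ls + ε) * n := by gcongr; exact le_max_left _ _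
        have m2 : (ls + ε) * n ≤ (max l ls + ε) * n := by gcongr; exact le_max_right _ _
        apply max_lt <;> linarith
      · simp only [K, Mx]
        rw [mul_assoc, ← Real.exp_add]
        gcongr
        nlinarith
    · refine ⟨∅, fun x hx => ?_, by simp only [Finset.card_empty, Nat.cast_zero]; positivity⟩
      exfalso
      obtain ⟨ω, hω, hw, -⟩ := hQc N n x hx
      have g := hGg N n ω hn hω
      have g1 := g.g1
      have m1 : (l + ε) * n ≤ (max l ls + ε) * n := by gcongr; exact le_max_left _ _
      have : 0 ≤ dist o (proj1 (walk ω n) o) := dist_nonneg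
      apply hpos
      linarith
  have hcount : ∀ N n, N0 ≤ n → N ≤ n → ∀ η ξ, ∃ t : Finset Γb,
      (∀ x, ((Q N n x ∩ Prod.snd ⁻¹' {η}) ∩ B' n ξ).Nonempty → x ∈ t) ∧
        (t.card:ℝ) ≤ K * Real.exp ((12 * c * ε)*n) := by
    intro N n hn0 hn η ξ
    by_cases hex : ∃ x0, ((Q N n x0 ∩ Prod.snd ⁻¹' {η}) ∩ B' n ξ).Nonempty
    swap
    · refine ⟨∅, fun x hx => absurd ⟨x, hx⟩ hex, ?_⟩
      simp only [Finset.card_empty, Nat.cast_zero]; positivity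
    obtain ⟨x0, hx0⟩ := hex
    have hεn : 0 ≤ ε * n := by positivity
    have key : ∀ x, ((Q N n x ∩ Prod.snd ⁻¹' {η}) ∩ B' n ξ).Nonempty →
        disp o os (x0⁻¹ * x) < 12 * ε * n + 34 * δ + 13 := by
      intro x hx
      obtain ⟨ζ, ⟨hζQ, hζη⟩, hζB⟩ := hx0
      obtain ⟨ζ', ⟨hζQ', hζη'⟩, hζB'⟩ := hx
      obtain ⟨ω, hω, hw, hc1⟩ := hQc N n x0 ⟨ζ, hζQ⟩
      obtain ⟨ω', hω', hw', hc2⟩ := hQc N n x ⟨ζ', hζQ'⟩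
      have hc1 := hc1 ζ hζQ
      have hc2 := hc2 ζ' hζQ'
      have hζB : max (qB o ξ.1 ζ.1) (qB os ξ.2 ζ.2) < _ := hζB
      have hζB' : max (qB o ξ.1 ζ'.1) (qB os ξ.2 ζ'.2) < _ := hζB'
      have hζη : ζ.2 = η := hζη
      have hζη' : ζ'.2 = η := hζη'
      rw [max_lt_iff] at hζB hζB'
      obtain ⟨d1, d2, e⟩ := hT ω (hGT N ω hω)
      obtain ⟨d1', d2', e'⟩ := hT ω' (hGT N ω' hω')
      have g := hGg N n ω hn hω
      have g' := hGg N n ω' hn hω'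
      have e1 := congrArg Prod.fst e
      have e2 := congrArg Prod.snd e
      have e1' := congrArg Prod.fst e'
      have e2' := congrArg Prod.snd e'
      simp only at e1 e2 e1' e2'
      rw [e1, e2] at hc1
      rw [e1', e2'] at hc2
      have D1 := dist_of_close hδ0 hδ o ⟨_, d1⟩ ⟨_, d1'⟩ (proj1 (walk ω n) o) (proj1 (walk ω' n) o)
        ((l+ε)*n) ((l - 3*ε)*n) ((l - 5*ε) * n - (5 * δ + 2)) n g.g1 g'.g1 (by linarith)
        g.g3 g'.g3 ξ.1 ζ.1 ζ'.1 (hc1.1.trans_le (Real.exp_le_exp.2 (by linarith))) hζB.1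
        (hc2.1.trans_le (Real.exp_le_exp.2 (by linarith))) hζB'.1
      have D2 := dist_of_close hδ0 hδs os ⟨_, d2⟩ ⟨_, d2'⟩ (proj2 (walk ω n) os)
        (proj2 (walk ω' n) os)
        ((ls+ε)*n) ((ls - 3*ε)*n) ((ls - 3*ε) * n - (5 * δ + 2)) n g.g2 g'.g2 (by linarith)
        g.g4 g'.g4 η ζ.2 ζ'.2 (hc1.2.trans_le (Real.exp_le_exp.2 (by linarith)))
        (by rw [hζη, qB_self]; exact Real.exp_pos _)
        (hc2.2.trans_le (Real.exp_le_exp.2 (by linarith)))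
        (by rw [hζη', qB_self]; exact Real.exp_pos _)
      rw [hw, hw'] at D1 D2
      rw [disp_inv_mul]
      apply max_lt <;> linarith
    obtain ⟨t, h1, h2⟩ := hcnt (12 * ε * n + 34 * δ + 13) (by nlinarith)
    refine ⟨t.image (fun y => x0 * y), fun x hx => ?_, ?_⟩
    · rw [Finset.mem_image]
      exact ⟨x0⁻¹ * x, h1 _ (key x hx), by simp⟩
    · have : ((t.image (fun y => x0 * y)).card : ℝ) ≤ t.card := by exact_mod_cast Finset.card_image_le
      refine this.trans (h2.trans ?_)
      simp only [K]
      rw [mul_assoc c (Real.exp _), ← Real.exp_add]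
      gcongr
      linarith
  have hνs : νs = P.map (fun ω => (bnd ω).2) := by
    rw [hd.1, Measure.map_map measurable_snd hbm]; rfl
  have hκ : ∀ N n x, N ≤ n → ∀ E, MeasurableSet E →
      P ((G N ∩ w n ⁻¹' {x}) ∩ bnd ⁻¹' (Prod.snd ⁻¹' E)) ≤
        ENNReal.ofReal (Real.exp (-((h - hs - 2 * ε)*n))) * νs E := by
    intro N n x hn E hE
    have := kappa_bound hp hP hb n x (ENNReal.ofReal (Real.exp (-((h - ε) * n))))
      (ENNReal.ofReal (Real.exp ((hs + ε) * n))) (G N ∩ w n ⁻¹' {x}) (fun ω hω => hω.2)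
      (fun ω hω => (hGg N n ω hn hω.1).g5) (fun ω hω => (hGg N n ω hn hω.1).g6) hE
    rw [← hνs, ← ENNReal.ofReal_mul (Real.exp_nonneg _), ← Real.exp_add] at this
    refine this.trans_eq ?_
    congr 3
    ring
  have main := abs_main (measurableSet_singletonB os) P bnd hbm νs cond hd w
    (fun n x => measurable_walk n (measurableSet_singleton x)) G hGm hGfull
    (h - hs - 2 * ε) hκ Q hQm hQ B B' (fun n ξ => hBm _ _) (fun n ξ => hBm _ _) hself hV K
    (12 * c * ε) Mx hK.le N0 hcount hdiam htot hε
  refine ⟨K, Mx + ε, hK, ?_⟩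
  filter_upwards [main] with η hη
  filter_upwards [hη] with ξ hξ
  filter_upwards [hξ] with n hn
  refine ⟨hn.1.trans_eq ?_, hn.2⟩
  congr 4
  ring

end Conc

set_option linter.unusedSectionVars false

lemma liminf_nonneg' (m : ℝ → ℝ) (h0 : ∀ r, 0 ≤ m r) (h1 : ∀ r, m r ≤ 1) :
    0 ≤ Filter.liminf (fun r : ℝ => Real.log (m r) / Real.log r) (nhdsWithin 0 (Set.Ioi 0)) := by
  have hev : ∀ᶠ r : ℝ in nhdsWithin 0 (Set.Ioi 0), 0 ≤ Real.log (m r) / Real.log r := by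
    filter_upwards [Ioo_mem_nhdsGT (zero_lt_one)] with r hr
    exact div_nonneg_of_nonpos (Real.log_nonpos (h0 r) (h1 r)) (Real.log_nonpos hr.1.le hr.2.le)
  rw [Filter.liminf_eq]
  by_cases hb : BddAbove {a : ℝ | ∀ᶠ r : ℝ in nhdsWithin 0 (Set.Ioi 0), a ≤ Real.log (m r) / Real.log r}
  · exact le_csSup hb hev
  · rw [Real.sSup_of_not_bddAbove hb]

lemma liminf_bound (m : ℝ → ℝ) (h0 : ∀ r, 0 ≤ m r) (h1 : ∀ r, m r ≤ 1) (hm : Monotone m)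
    {lam K D M : ℝ} (hlam : 0 < lam) (hK : 0 < K)
    (hup : ∀ᶠ n : ℕ in atTop, m (Real.exp (-(lam * n))) ≤ K * Real.exp (-(D * n)))
    (hlo : ∀ᶠ n : ℕ in atTop, Real.exp (-(M * n)) ≤ m (Real.exp (-(lam * n)))) :
    D / lam ≤
      Filter.liminf (fun r : ℝ => Real.log (m r) / Real.log r) (nhdsWithin 0 (Set.Ioi 0)) := by
  apply le_of_forall_lt
  intro a ha
  obtain ⟨a', ha1, ha2⟩ := exists_between ha
  refine lt_of_lt_of_le ha1 ?_
  by_cases hneg : a' ≤ 0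
  · exact hneg.trans (liminf_nonneg' m h0 h1)
  push Not at hneg
  have hD : 0 < D := by
    by_contra hD
    push Not at hD
    have := div_nonpos_of_nonpos_of_nonneg hD hlam.le
    linarith
  -- coboundedness
  have hseq : Tendsto (fun n : ℕ => Real.exp (-(lam * n))) atTop (nhdsWithin 0 (Set.Ioi 0)) := by
    rw [tendsto_nhdsWithin_iff]
    refine ⟨?_, Eventually.of_forall fun n => Real.exp_pos _⟩
    apply Real.tendsto_exp_neg_atTop_nhds_zero.comp
    exact (tendsto_natCast_atTop_atTop).const_mul_atTop hlam
  have hcob : IsCoboundedUnder (· ≥ ·) (nhdsWithin 0 (Set.Ioi 0))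
      (fun r : ℝ => Real.log (m r) / Real.log r) := by
    apply IsCoboundedUnder.of_frequently_le (a := M / lam)
    refine hseq.frequently ?_
    apply Eventually.frequently
    filter_upwards [hlo, eventually_gt_atTop 0] with n hn hn0
    have hn' : (0:ℝ) < n := by exact_mod_cast hn0
    have hl := Real.log_le_log (Real.exp_pos _) hn
    rw [Real.log_exp] at hl
    rw [Real.log_exp, div_neg, ← neg_div, div_le_div_iff₀ (by positivity) hlam]
    nlinarith
  refine le_liminf_of_le hcob ?_
  obtain ⟨N, hN⟩ := eventually_atTop.1 (hup.and hlo)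
  set L0 : ℝ := max (lam * (N + 1)) ((D + Real.log K) / (D / lam - a')) with hL0
  have hpos : 0 < D / lam - a' := by linarith
  filter_upwards [Ioo_mem_nhdsGT (Real.exp_pos (-L0))] with r hr
  have hr0 : 0 < r := hr.1
  have hL : L0 < -Real.log r := by
    have := Real.log_lt_log hr0 hr.2
    rw [Real.log_exp] at this
    linarith
  set L := -Real.log r with hLdef
  have hLN : lam * (N + 1) < L := lt_of_le_of_lt (le_max_left _ _) hL
  have hLK : (D + Real.log K) / (D / lam - a') < L := lt_of_le_of_lt (le_max_right _ _) hL
  have hLpos : 0 < L := lt_trans (by positivity) hLN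
  set n := ⌊L / lam⌋₊ with hn
  have hn1 : (n:ℝ) ≤ L / lam := Nat.floor_le (by positivity)
  have hn2 : L / lam < n + 1 := Nat.lt_floor_add_one _
  have hNn : N ≤ n := by
    apply Nat.le_floor
    rw [le_div_iff₀ hlam]
    nlinarith
  have hrL : r = Real.exp (-L) := by rw [hLdef, neg_neg, Real.exp_log hr0]
  rw [le_div_iff₀ hlam] at hn1
  rw [div_lt_iff₀ hlam] at hn2
  have m1 : m r ≤ K * Real.exp (-(D * n)) := by
    refine le_trans (hm ?_) (hN n hNn).1
    rw [hrL]
    exact Real.exp_le_exp.2 (by linarith)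
  have m2 : 0 < m r := by
    refine lt_of_lt_of_le (Real.exp_pos _) (le_trans (hN (n+1) (by omega)).2 (hm ?_))
    rw [hrL]
    apply Real.exp_le_exp.2
    push_cast
    linarith
  have m3 := Real.log_le_log m2 m1
  rw [Real.log_mul hK.ne' (Real.exp_ne_zero _), Real.log_exp] at m3
  have e : Real.log (m r) / Real.log r = (-Real.log (m r)) / L := by
    rw [hLdef, div_neg, neg_div, neg_neg]
  rw [e, le_div_iff₀ hLpos]
  rw [div_lt_iff₀ hpos] at hLK
  have h5 : D * (L / lam) ≤ D * (n + 1) := by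
    apply mul_le_mul_of_nonneg_left _ hD.le
    rw [div_le_iff₀ hlam]; linarith
  have h6 : L * (D / lam) = D * (L / lam) := by ring
  nlinarith

section Conc
variable {X Xs : Type*} [MetricSpace X] [MetricSpace Xs]
    {Γb : Subgroup ((X ≃ᵢ X) × (Xs ≃ᵢ Xs))}
variable [Countable Γb] [MeasurableSpace Γb] [DiscreteMeasurableSpace Γb]

lemma hyp_mono {Y : Type*} [MetricSpace Y] {δ δ' : ℝ} (h : IsHyperbolicWith Y δ) (hd : δ ≤ δ') :
    IsHyperbolicWith Y δ' := fun x y z w => le_trans (by linarith) (h x y z w)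

lemma drift_nonneg {p : Γb → ℝ≥0∞} {f : Γb → ℝ} (hf : ∀ x, 0 ≤ f x) {l : ℝ} (hl : HasDrift p f l) :
    0 ≤ l := by
  refine ge_of_tendsto' hl fun n => ?_
  exact div_nonneg (tsum_nonneg fun x => mul_nonneg ENNReal.toReal_nonneg (hf x)) (Nat.cast_nonneg _)

lemma final_main
    (hX : IsHyperbolic X) (hXs : IsHyperbolic Xs) (o : X) (os : Xs)
    (p : Γb → ℝ≥0∞) (hp : IsProb p)
    (hmom : FiniteFirstMoment p fun γ : Γb => disp o os γ)
    (P : Measure (ℕ → Γb)) (hP : IsRWMeasure p P)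
    (hgrow : FinExpGrowth fun γ : Γb => disp o os γ)
    (ν : Measure (Boundary X o × Boundary Xs os))
    (hν : IsJointHarmonic o os P (fun ω n => proj1 (walk ω n) o)
      (fun ω n => proj2 (walk ω n) os) ν)
    (νs : Measure (Boundary Xs os))
    (condν : Boundary Xs os → Measure (Boundary X o × Boundary Xs os))
    (hdis : IsDisintegration ν Prod.snd νs condν)
    (hπ l : ℝ) (hhπ : HasEntropy p hπ)
    (hl : HasDrift p (fun γ : Γb => dist o (proj1 γ o)) l)
    (hbm : ∀ g : Xs ≃ᵢ Xs, Measurable (bAct os g))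
    (hst : ℝ)
    (hhst : hst = diffEntropy os (marginalStar p fun γ : Γb => proj2 γ) νs) :
    ∀ᵐ η ∂νs, ∀ᵐ ξ ∂(condν η),
      (hπ - hst) / l ≤
        Filter.liminf (fun r : ℝ =>
            Real.log ((condν η) (qball (qbb o os) ξ r)).toReal / Real.log r)
          (nhdsWithin 0 (Set.Ioi 0)) := by
  obtain ⟨δ1, h10, h1⟩ := hX
  obtain ⟨δ2, h20, h2⟩ := hXs
  have hδ := hyp_mono h1 (le_max_left δ1 δ2)
  have hδs := hyp_mono h2 (le_max_right δ1 δ2)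
  have hδ0 : 0 ≤ max δ1 δ2 := le_max_of_le_left h10
  generalize max δ1 δ2 = δ at hδ hδs hδ0
  obtain ⟨bnd, hbndm, rfl, hbnd⟩ := hν
  have hl0 : 0 ≤ l := drift_nonneg (fun x => dist_nonneg) hl
  have hprob := hdis.2.1
  have hq0 : ∀ η, IsProbabilityMeasure (condν η) → ∀ ξ r,
      ((condν η) (qball (qbb o os) ξ r)).toReal ≤ 1 := by
    intro η _ ξ r
    exact ENNReal.toReal_le_of_le_ofReal zero_le_one (by simpa using prob_le_one)
  by_cases hsm : (hπ - hst) / l ≤ 0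
  · filter_upwards [hprob] with η hη
    refine ae_of_all _ fun ξ => hsm.trans ?_
    exact liminf_nonneg' (fun r => ((condν η) (qball (qbb o os) ξ r)).toReal)
      (fun r => ENNReal.toReal_nonneg) (hq0 η hη ξ)
  push Not at hsm
  have hlpos : 0 < l := by
    rcases hl0.lt_or_eq with h | h
    · exact h
    · rw [← h, div_zero] at hsm; exact absurd hsm (lt_irrefl _)
  have hb : BdAct P (fun γ : Γb => bAct os (proj2 γ)) (fun ω => (bnd ω).2) := by
    refine bdAct_conc hδs os hp hP hbm (measurable_snd.comp hbndm) ?_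
    filter_upwards [hbnd] with ω hω
    obtain ⟨d1, d2, e⟩ := hω
    exact ⟨d2, by rw [e]⟩
  have hνs : νs = P.map (fun ω => (bnd ω).2) := by
    rw [hdis.1, Measure.map_map measurable_snd hbndm]; rfl
  have hfin := entropy_fin hp (f := fun γ : Γb => disp o os γ) (fun x => dist_nonneg) hgrow hmom
  have hhs : hst = ∑' x, (p x).toReal *
      IX P (fun γ : Γb => bAct os (proj2 γ)) (fun ω => (bnd ω).2) x := by
    rw [hhst, hνs]
    exact tsum_marginal (ne_top_of_isProb hp) (fun γ : Γb => proj2 γ) _ (bd_summable hp hP hb hfin)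
  have hm2 : FiniteFirstMoment p fun γ : Γb => dist os (proj2 γ os) :=
    mom_mono (fun x => by rw [disp_eq]; exact le_max_right _ _) hmom
  obtain ⟨ls, -, hls⟩ := exists_drift hp hP (isLen2 os) hm2
  obtain ⟨c, hc, hgr⟩ := hgrow
  let e : ℕ → ℝ := fun k => l / 10 * (1 / ((k:ℝ) + 1))
  have he0 : ∀ k, 0 < e k := fun k => by positivity
  have hel : ∀ k, 0 < l - 5 * e k := by
    intro k
    have : 1 / ((k:ℝ) + 1) ≤ 1 := by
      rw [div_le_one (by positivity)]
      have : (0:ℝ) ≤ k := Nat.cast_nonneg k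
      linarith
    simp only [e]
    nlinarith
  have helim : Tendsto e atTop (𝓝 0) := by
    have := (tendsto_one_div_add_atTop_nhds_zero_nat (𝕜 := ℝ)).const_mul (l / 10)
    simpa [e] using this
  have hlim : Tendsto (fun k => (hπ - hst - (3 + 12 * c) * e k) / (l - 5 * e k)) atTop
      (𝓝 ((hπ - hst) / l)) := by
    have a1 : Tendsto (fun k => hπ - hst - (3 + 12 * c) * e k) atTop (𝓝 (hπ - hst)) := by
      simpa using (helim.const_mul (3 + 12 * c)).const_sub (hπ - hst)
    have a2 : Tendsto (fun k => l - 5 * e k) atTop (𝓝 l) := by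
      simpa using (helim.const_mul 5).const_sub l
    exact a1.div a2 hlpos.ne'
  have hk : ∀ᵐ η ∂νs, ∀ k, ∀ᵐ ξ ∂(condν η), (hπ - hst - (3 + 12 * c) * e k) / (l - 5 * e k) ≤
      Filter.liminf (fun r : ℝ =>
            Real.log ((condν η) (qball (qbb o os) ξ r)).toReal / Real.log r)
          (nhdsWithin 0 (Set.Ioi 0)) := by
    rw [ae_all_iff]
    intro k
    obtain ⟨K, M, hK, hmain⟩ := conc_main hδ0 hδ hδs o os hp hmom hP hc hgr hbndm hbnd hb hl hls hhπ
      hhs hdis (he0 k)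
    filter_upwards [hmain, hprob] with η hη hpη
    filter_upwards [hη] with ξ hξ
    refine liminf_bound (fun r => ((condν η) (qball (qbb o os) ξ r)).toReal)
      (fun r => ENNReal.toReal_nonneg) (hq0 η hpη ξ) ?_ (hel k) hK (M := M) ?_ ?_
    · intro r s hrs
      refine ENNReal.toReal_mono (measure_ne_top _ _) (measure_mono ?_)
      intro ζ hζ
      exact lt_of_lt_of_le (hζ : qbb o os ξ ζ < r) hrs
    · filter_upwards [hξ] with n hn
      exact ENNReal.toReal_le_of_le_ofReal (by positivity) hn.1
    · filter_upwards [hξ] with n hn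
      exact (ENNReal.ofReal_le_iff_le_toReal (measure_ne_top _ _)).1 hn.2
  filter_upwards [hk] with η hη
  filter_upwards [ae_all_iff.2 hη] with ξ hξ
  exact le_of_tendsto' hlim hξ

end Conc

/-- Lemma 3.4: the a.e. lower bound
`liminf_{r→0} log ν_π^η(B̄(ξ̄,r))/log r ≥ (h(π) - h(∂X*,μ*))/l(X,μ)` for the
conditional measures, under finite exponential growth. -/
theorem statement11
    (X Xs : Type*) [MetricSpace X] [MetricSpace Xs] [ProperSpace X] [ProperSpace Xs]
    (hX : IsHyperbolic X) (hXs : IsHyperbolic Xs)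
    (hXg : IsRoughGeodesicSpace X) (hXsg : IsRoughGeodesicSpace Xs)
    (o : X) (os : Xs)
    (Γb : Subgroup ((X ≃ᵢ X) × (Xs ≃ᵢ Xs))) [Countable Γb]
    [MeasurableSpace Γb] [DiscreteMeasurableSpace Γb]
    (p : Γb → ℝ≥0∞) (hp : IsProb p)
    (hmom : FiniteFirstMoment p fun γ : Γb => disp o os γ)
    (hμne : IsNonElementarySubgroup
      (Subgroup.closure ((fun γ : Γb => proj1 γ) '' {γ : Γb | p γ ≠ 0})))
    (hμsne : IsNonElementarySubgroup
      (Subgroup.closure ((fun γ : Γb => proj2 γ) '' {γ : Γb | p γ ≠ 0})))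
    (P : Measure (ℕ → Γb)) (hP : IsRWMeasure p P)
    (hXb : HasBoundedGrowthAtSomeScale X) (hXsb : HasBoundedGrowthAtSomeScale Xs)
    (hgrow : FinExpGrowth fun γ : Γb => disp o os γ)
    (ν : Measure (Boundary X o × Boundary Xs os))
    (hν : IsJointHarmonic o os P (fun ω n => proj1 (walk ω n) o)
      (fun ω n => proj2 (walk ω n) os) ν)
    (νs : Measure (Boundary Xs os))
    (condν : Boundary Xs os → Measure (Boundary X o × Boundary Xs os))
    (hdis : IsDisintegration ν Prod.snd νs condν)
    (hπ l : ℝ) (hhπ : HasEntropy p hπ)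
    (hl : HasDrift p (fun γ : Γb => dist o (proj1 γ o)) l)
    (hbm : ∀ g : Xs ≃ᵢ Xs, Measurable (bAct os g))
    (hst : ℝ)
    (hhst : hst = diffEntropy os (marginalStar p fun γ : Γb => proj2 γ) νs)
 :
    ∀ᵐ η ∂νs, ∀ᵐ ξ ∂(condν η),
      (hπ - hst) / l ≤
        Filter.liminf (fun r : ℝ =>
            Real.log ((condν η) (qball (qbb o os) ξ r)).toReal / Real.log r)
          (nhdsWithin 0 (Set.Ioi 0)) := by
  exact final_main hX hXs o os p hp hmom P hP hgrow ν hν νs condν hdis hπ l hhπ hl hbm hst hhst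

end HMDim
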